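/- Let k > 1 be a positive integer and let f ∈ 𝒪(ℂ²,0,0) be given by f(x,y) = (−x + x^{2k+1} + xy³, e^{2πi/3}y + x²y + y^{3k+1}). Then 0 is an isolated fixed point of f⁶, with μ_{f²}(0) = 2k + 1, μ_{f³}(0) = 3k + 1 and μ_{f⁶}(0) = 5k + 7, and consequently 𝒪₂(f,0) = k, 𝒪₃(f,0) = k and 𝒪₆(f,0) = 1. -/

import Mathlib

open Metric Set Filter Topology Polynomial Asymptotics
open scoped Classical

noncomputable section

namespace ZhangPaper

/-- `ℂⁿ`. -/
abbrev Cn (n : ℕ) := Fin n → ℂ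

variable {n : ℕ}

/-- A germ in `𝒪(ℂⁿ,0,0)`: holomorphic near `0` and fixing the origin. -/
def IsGerm (f : Cn n → Cn n) : Prop := AnalyticAt ℂ f 0 ∧ f 0 = 0

/-- `q` is a regular value of `h` on `s`. -/
def IsRegularValueOn (h : Cn n → Cn n) (s : Set (Cn n)) (q : Cn n) : Prop :=
  ∀ x ∈ s, h x = q → Function.Bijective (fderiv ℂ h x)

/-- `m` is the zero order (multiplicity) of `h` at the isolated zero `p`:
the number of solutions of `h x = q` near `p`, for any regular value `q`
with `‖q‖` sufficiently small. -/
def HasZeroOrder (h : Cn n → Cn n) (p : Cn n) (m : ℕ) : Prop :=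
  ∃ r > 0, AnalyticOnNhd ℂ h (closedBall p r) ∧ h p = 0 ∧
    (∀ x ∈ closedBall p r, h x = 0 → x = p) ∧
    (∀ ε > 0, ∃ q : Cn n, ‖q‖ < ε ∧ IsRegularValueOn h (ball p r) q) ∧
    ∃ δ > 0, ∀ q : Cn n, ‖q‖ < δ → IsRegularValueOn h (ball p r) q →
      {x ∈ ball p r | h x = q}.ncard = m

/-- The zero order `π_h(p)` of `h` at `p`. -/
def zeroOrder (h : Cn n → Cn n) (p : Cn n) : ℕ := sInf {m | HasZeroOrder h p m}

/-- The fixed point index `μ_g(p)` of `g` at `p`. -/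
def fixedPointIndex (g : Cn n → Cn n) (p : Cn n) : ℕ :=
  zeroOrder (fun x => x - g x) p

/-- The local Dold index `P_M(f,0)`. -/
def doldIndex (f : Cn n → Cn n) (M : ℕ) : ℤ :=
  ∑ τ ∈ M.primeFactors.powerset,
    (-1 : ℤ) ^ τ.card * (fixedPointIndex (f^[M / (∏ p ∈ τ, p)]) 0 : ℤ)

/-- `x` is a periodic point of exact period `M` for `g`. -/
def ExactPeriodicPt (g : Cn n → Cn n) (M : ℕ) (x : Cn n) : Prop :=
  g^[M] x = x ∧ ∀ j, 0 < j → j < M → g^[j] x ≠ x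

/-- `g` has at least `m` distinct periodic orbits of period `M` inside `B`. -/
def AtLeastOrbits (g : Cn n → Cn n) (M m : ℕ) (B : Set (Cn n)) : Prop :=
  ∃ p : Fin m → Cn n,
    (∀ i, ExactPeriodicPt g M (p i) ∧ ∀ j < M, g^[j] (p i) ∈ B) ∧
    ∀ i j : Fin m, i ≠ j → ∀ l < M, g^[l] (p i) ≠ p j

/-- `g` has exactly `m` distinct periodic orbits of period `M` inside `B`. -/
def ExactlyOrbits (g : Cn n → Cn n) (M m : ℕ) (B : Set (Cn n)) : Prop :=
  AtLeastOrbits g M m B ∧ ¬ AtLeastOrbits g M (m + 1) B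

/-- The number `𝒪_M(f,0)` of periodic orbits of period `M` of `f` hidden at the
fixed point `0`: the largest `m` such that there is a ball `B` centered at `0` in which
`0` is the only fixed point of `f^M`, and a sequence of holomorphic maps fixing `0`
converging to `f` uniformly on `B`, each having `m` distinct periodic orbits of
period `M` in `B`. -/
def hiddenOrbits (f : Cn n → Cn n) (M : ℕ) : ℕ :=
  sSup {m | ∃ r > 0,
    (∀ x ∈ closedBall (0 : Cn n) r, f^[M] x = x → x = 0) ∧
    ∃ fk : ℕ → Cn n → Cn n,
      (∀ k, AnalyticOnNhd ℂ (fk k) (ball (0 : Cn n) r) ∧ fk k 0 = 0) ∧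
      TendstoUniformlyOn fk f atTop (ball (0 : Cn n) r) ∧
      ∀ k, AtLeastOrbits (fk k) M m (ball (0 : Cn n) r)}

/-- `0` is an isolated fixed point of `g`. -/
def IsolatedFixedPtAt0 (g : Cn n → Cn n) : Prop :=
  g 0 = 0 ∧ ∀ᶠ x in 𝓝[≠] (0 : Cn n), g x ≠ x

/-- `0` is an isolated zero of `h`. -/
def IsolatedZeroAt0 (h : Cn n → Cn n) : Prop :=
  h 0 = 0 ∧ ∀ᶠ x in 𝓝[≠] (0 : Cn n), h x ≠ 0

/-- `p` is a simple fixed point of `g`: `Dg(p)` has no eigenvalue `1`. -/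
def SimpleFixedPt (g : Cn n → Cn n) (p : Cn n) : Prop :=
  g p = p ∧ ¬ Module.End.HasEigenvalue ((fderiv ℂ g p).toLinearMap) 1

/-- The global fixed point index `L(g)` of `g` over `U`: the sum of the fixed point
indices at all fixed points of `g` in `U`. -/
def globalIndex (g : Cn n → Cn n) (U : Set (Cn n)) : ℤ :=
  ∑ᶠ p ∈ {x ∈ U | g x = x}, (fixedPointIndex g p : ℤ)

/-- The global Dold index `P_M(f)` over `U`. -/
def globalDold (f : Cn n → Cn n) (M : ℕ) (U : Set (Cn n)) : ℤ :=
  ∑ τ ∈ M.primeFactors.powerset,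
    (-1 : ℤ) ^ τ.card * globalIndex (f^[M / (∏ p ∈ τ, p)]) U

/-- `s` is the multiset of zeros of `φ` in the disc of radius `b`. -/
def IsZS (φ : ℂ → ℂ) (b : ℝ) (s : Multiset ℂ) : Prop :=
  (∀ z ∈ s, z ∈ ball (0 : ℂ) b) ∧ ∃ u : ℂ → ℂ, AnalyticOnNhd ℂ u (closedBall 0 b) ∧
    (∀ z ∈ closedBall (0 : ℂ) b, u z ≠ 0) ∧
    ∀ z ∈ closedBall (0 : ℂ) b, ∀ᶠ w in 𝓝 z, φ w = (s.map (fun a => w - a)).prod * u w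

lemma exists_isZS_aux (b : ℝ) (Z : Finset ℂ) : ∀ φ : ℂ → ℂ,
    AnalyticOnNhd ℂ φ (closedBall 0 b) → (∀ z ∈ closedBall (0 : ℂ) b, φ z = 0 → z ∈ Z) →
    (∀ z ∈ Z, z ∈ ball (0 : ℂ) b) →
    (∀ z ∈ closedBall (0 : ℂ) b, ¬ ∀ᶠ w in 𝓝 z, φ w = 0) → ∃ s, IsZS φ b s := by
  induction Z using Finset.induction_on with
  | empty =>
    intro φ hφ hz _ _
    refine ⟨0, by simp, φ, hφ, fun z hz' h => by simpa using hz z hz' h, ?_⟩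
    intro z _
    simp
  | insert z0 Z hzZ ih =>
    intro φ hφ hz hb hne
    have hz0 : z0 ∈ ball (0 : ℂ) b := hb z0 (by simp)
    have hz0' := ball_subset_closedBall hz0
    obtain ⟨n, g, hg, hg0, hgn⟩ :=
      ((hφ z0 hz0').exists_eventuallyEq_pow_smul_nonzero_iff).2 (hne z0 hz0')
    set ψ : ℂ → ℂ := fun w => if w = z0 then g z0 else φ w / (w - z0) ^ n with hψ
    have hψg : ψ =ᶠ[𝓝 z0] g := by
      filter_upwards [hgn] with w hw
      by_cases h : w = z0
      · simp [hψ, h]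
      · have : (w - z0) ^ n ≠ 0 := pow_ne_zero _ (sub_ne_zero.2 h)
        simp only [hψ, h, if_false, hw, smul_eq_mul]
        field_simp
    have hfac : ∀ w, φ w = (w - z0) ^ n * ψ w := by
      intro w
      by_cases h : w = z0
      · subst h
        have := hgn.self_of_nhds
        simpa [hψ] using this
      · have : (w - z0) ^ n ≠ 0 := pow_ne_zero _ (sub_ne_zero.2 h)
        simp only [hψ, h, if_false]
        field_simp
    have hψa : AnalyticOnNhd ℂ ψ (closedBall 0 b) := by
      intro z hz
      by_cases h : z = z0
      · subst h
        exact hg.congr hψg.symm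
      · have h1 : AnalyticAt ℂ (fun w => φ w / (w - z0) ^ n) z :=
          (hφ z hz).div ((analyticAt_id.sub analyticAt_const).pow n)
            (pow_ne_zero _ (sub_ne_zero.2 h))
        refine h1.congr ?_
        filter_upwards [isOpen_ne.mem_nhds h] with w hw
        have hw' : w ≠ z0 := hw
        simp [hψ, hw']
    have hA : ∀ z ∈ closedBall (0 : ℂ) b, ψ z = 0 → z ∈ Z := by
      intro z hz1 hz2
      have h3 : φ z = 0 := by rw [hfac, hz2, mul_zero]
      rcases Finset.mem_insert.1 (hz z hz1 h3) with h | h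
      · rw [h] at hz2
        exact absurd (by simpa [hψ] using hz2) hg0
      · exact h
    have hB : ∀ z ∈ closedBall (0 : ℂ) b, ¬ ∀ᶠ w in 𝓝 z, ψ w = 0 := by
      intro z hz1 hz2
      exact hne z hz1 (hz2.mono fun w hw => by rw [hfac, hw, mul_zero])
    obtain ⟨s, hs, u, hu, hu0, huf⟩ := ih ψ hψa hA (fun z hz => hb z (by simp [hz])) hB
    refine ⟨Multiset.replicate n z0 + s, ?_, u, hu, hu0, ?_⟩
    · intro z hz
      rcases Multiset.mem_add.1 hz with h | h
      · rw [Multiset.eq_of_mem_replicate h]; exact hz0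
      · exact hs z h
    · intro z hz
      filter_upwards [huf z hz] with w hw
      rw [hfac w, hw]
      simp [mul_assoc]

lemma exists_isZS {φ : ℂ → ℂ} {b : ℝ} (hb : 0 < b) (hφ : AnalyticOnNhd ℂ φ (closedBall 0 b))
    (h0 : ∀ z ∈ sphere (0 : ℂ) b, φ z ≠ 0) : ∃ s, IsZS φ b s := by
  have hne : ∀ z ∈ closedBall (0 : ℂ) b, ¬ ∀ᶠ w in 𝓝 z, φ w = 0 := by
    intro z hz hw
    have := hφ.eqOn_zero_of_preconnected_of_eventuallyEq_zero
      (convex_closedBall (0 : ℂ) b).isPreconnected hz hw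
    have hbs : (b : ℂ) ∈ sphere (0 : ℂ) b := by simp [abs_of_pos hb]
    exact h0 _ hbs (this (sphere_subset_closedBall hbs))
  have hU : ∀ z ∈ closedBall (0 : ℂ) b, {w | w ≠ z → φ w ≠ 0} ∈ 𝓝 z := by
    intro z hz
    rcases (hφ z hz).eventually_eq_zero_or_eventually_ne_zero with h | h
    · exact absurd h (hne z hz)
    · exact eventually_nhdsWithin_iff.1 h
  obtain ⟨t, ht, hcov⟩ := (isCompact_closedBall (0 : ℂ) b).elim_nhds_subcover
    (fun z => {w | w ≠ z → φ w ≠ 0}) hU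
  refine exists_isZS_aux b (t.filter (fun z => φ z = 0)) φ hφ ?_ ?_ hne
  · intro z hz hz0
    obtain ⟨w, hw, hzw⟩ := mem_iUnion₂.1 (hcov hz)
    have : z = w := by
      by_contra h
      exact hzw h hz0
    subst this
    simp [hw, hz0]
  · intro z hz
    rw [Finset.mem_filter] at hz
    have h1 := ht z hz.1
    rcases (mem_closedBall.1 h1).lt_or_eq with h | h
    · exact h
    · exact absurd hz.2 (h0 z h)

lemma IsZS.eq {φ b s} (h : IsZS φ b s) : ∃ u : ℂ → ℂ, AnalyticOnNhd ℂ u (closedBall 0 b) ∧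
    (∀ z ∈ closedBall (0 : ℂ) b, u z ≠ 0) ∧
    ∀ w ∈ closedBall (0 : ℂ) b, φ w = (s.map (fun a => w - a)).prod * u w := by
  obtain ⟨_, u, h1, h2, h3⟩ := h
  exact ⟨u, h1, h2, fun w hw => (h3 w hw).self_of_nhds⟩

lemma IsZS.mem_iff {φ b s} (h : IsZS φ b s) {z : ℂ} (hz : z ∈ closedBall (0 : ℂ) b) :
    φ z = 0 ↔ z ∈ s := by
  obtain ⟨u, h1, h2, h3⟩ := h.eq
  rw [h3 z hz, mul_eq_zero, or_iff_left (h2 z hz), Multiset.prod_eq_zero_iff, Multiset.mem_map]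
  constructor
  · rintro ⟨a, ha, h0⟩
    rw [sub_eq_zero.1 h0]; exact ha
  · intro h; exact ⟨z, h, sub_self z⟩

lemma integral_aux {b : ℝ} (hb : 0 < b) {u ψ : ℂ → ℂ} (hu : AnalyticOnNhd ℂ u (closedBall 0 b))
    (hu0 : ∀ z ∈ closedBall (0 : ℂ) b, u z ≠ 0) (hψ : AnalyticOnNhd ℂ ψ (closedBall 0 b))
    (s : Multiset ℂ) : (∀ z ∈ s, z ∈ ball (0 : ℂ) b) →
    (∮ z in C(0, b), ψ z * logDeriv (fun w => (s.map (fun a => w - a)).prod * u w) z) =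
      2 * Real.pi * Complex.I * (s.map ψ).sum := by
  have hFan : ∀ s : Multiset ℂ, AnalyticOnNhd ℂ
      (fun w => (s.map (fun a => w - a)).prod * u w) (closedBall 0 b) := by
    intro s
    refine AnalyticOnNhd.mul ?_ hu
    induction s using Multiset.induction_on with
    | empty => simpa using analyticOnNhd_const
    | cons a s ih =>
      simp only [Multiset.map_cons, Multiset.prod_cons]
      exact (analyticOnNhd_id.sub analyticOnNhd_const).mul ih
  have hFne : ∀ s : Multiset ℂ, (∀ z ∈ s, z ∈ ball (0 : ℂ) b) → ∀ z ∈ sphere (0 : ℂ) b,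
      (s.map (fun a => z - a)).prod * u z ≠ 0 := by
    intro s hs z hz
    refine mul_ne_zero ?_ (hu0 z (sphere_subset_closedBall hz))
    rw [Ne, Multiset.prod_eq_zero_iff, Multiset.mem_map]
    rintro ⟨a, ha, h⟩
    have := hs a ha
    rw [sub_eq_zero.1 h] at hz
    simp at this hz
    linarith
  induction s using Multiset.induction_on with
  | empty =>
    intro _
    simp only [Multiset.map_zero, Multiset.prod_zero, one_mul, Multiset.sum_zero, mul_zero]
    refine Complex.circleIntegral_eq_zero_of_differentiable_on_off_countable hb.le
      countable_empty ?_ ?_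
    · refine (AnalyticOnNhd.mul hψ ?_).continuousOn
      exact hu.deriv.div hu hu0
    · rintro z ⟨hz, _⟩
      exact ((hψ z (ball_subset_closedBall hz)).mul
        ((hu.deriv z (ball_subset_closedBall hz)).div (hu z (ball_subset_closedBall hz))
        (hu0 z (ball_subset_closedBall hz)))).differentiableAt
  | cons a s ih =>
    intro hs
    have hs' : ∀ z ∈ s, z ∈ ball (0 : ℂ) b := fun z hz => hs z (Multiset.mem_cons_of_mem hz)
    have ha : a ∈ ball (0 : ℂ) b := hs a (Multiset.mem_cons_self a s)
    have hne : ∀ z ∈ sphere (0 : ℂ) b, z - a ≠ 0 := by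
      intro z hz h
      rw [sub_eq_zero.1 h] at hz
      simp at ha hz
      linarith
    have key : EqOn (fun z => ψ z * logDeriv
        (fun w => ((a ::ₘ s).map (fun a => w - a)).prod * u w) z)
        (fun z => (z - a)⁻¹ • ψ z + ψ z *
          logDeriv (fun w => (s.map (fun a => w - a)).prod * u w) z) (sphere 0 b) := by
      intro z hz
      have e1 : (fun w => ((a ::ₘ s).map (fun a => w - a)).prod * u w) =
        fun w => (w - a) * ((s.map (fun a => w - a)).prod * u w) := by
        funext w; simp [mul_assoc]
      simp only
      rw [e1, logDeriv_mul z (hne z hz) (hFne s hs' z hz) (by fun_prop)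
        (hFan s z (sphere_subset_closedBall hz)).differentiableAt]
      have : logDeriv (fun w => w - a) z = (z - a)⁻¹ := by
        simp [logDeriv_apply]
      rw [this, smul_eq_mul]; ring
    rw [circleIntegral.integral_congr hb.le key, circleIntegral.integral_add, ih hs']
    · rw [DiffContOnCl.circleIntegral_sub_inv_smul _ ha]
      · simp; ring
      · refine DifferentiableOn.diffContOnCl ?_
        rw [closure_ball _ hb.ne']
        exact hψ.differentiableOn
    · refine ContinuousOn.circleIntegrable hb.le ?_
      refine ContinuousOn.smul (ContinuousOn.inv₀ (by fun_prop) hne) ?_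
      exact hψ.continuousOn.mono sphere_subset_closedBall
    · refine ContinuousOn.circleIntegrable hb.le ?_
      refine (hψ.continuousOn.mono sphere_subset_closedBall).mul ?_
      refine ContinuousOn.div ((hFan s).deriv.continuousOn.mono sphere_subset_closedBall)
        ((hFan s).continuousOn.mono sphere_subset_closedBall) (hFne s hs')

lemma IsZS.integral {φ ψ : ℂ → ℂ} {b : ℝ} {s : Multiset ℂ} (hb : 0 < b) (h : IsZS φ b s)
    (hψ : AnalyticOnNhd ℂ ψ (closedBall 0 b)) :
    (∮ z in C(0, b), ψ z * (deriv φ z / φ z)) = 2 * Real.pi * Complex.I * (s.map ψ).sum := by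
  obtain ⟨hs, u, hu, hu0, huf⟩ := h
  rw [← integral_aux hb hu hu0 hψ s hs]
  refine circleIntegral.integral_congr hb.le fun z hz => ?_
  have := huf z (sphere_subset_closedBall hz)
  simp only [logDeriv_apply]
  rw [this.self_of_nhds, Filter.EventuallyEq.deriv_eq this]

lemma IsZS.rouche {φ ψ : ℂ → ℂ} {b : ℝ} {s t : Multiset ℂ} (hb : 0 < b) (hs : IsZS φ b s)
    (ht : IsZS ψ b t) (hφ : AnalyticOnNhd ℂ φ (closedBall 0 b))
    (hψ : AnalyticOnNhd ℂ ψ (closedBall 0 b))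
    (hlt : ∀ z ∈ sphere (0 : ℂ) b, ‖φ z - ψ z‖ < ‖ψ z‖) : s.card = t.card := by
  have h1 := hs.integral hb (ψ := fun _ => 1) analyticOnNhd_const
  have h2 := ht.integral hb (ψ := fun _ => 1) analyticOnNhd_const
  simp only [one_mul, Multiset.map_const', Multiset.sum_replicate, nsmul_eq_mul, mul_one] at h1 h2
  have hψ0 : ∀ z ∈ sphere (0 : ℂ) b, ψ z ≠ 0 := by
    intro z hz h
    have := hlt z hz
    rw [h, norm_zero] at this
    exact absurd this (not_lt.2 (norm_nonneg _))
  have hφ0 : ∀ z ∈ sphere (0 : ℂ) b, φ z ≠ 0 := by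
    intro z hz h
    have := hlt z hz
    rw [h, zero_sub, norm_neg] at this
    exact lt_irrefl _ this
  have h3 : (∮ z in C(0, b), (deriv φ z / φ z - deriv ψ z / ψ z)) = 0 := by
    refine circleIntegral.integral_eq_zero_of_hasDerivWithinAt'
      (f := fun z => Complex.log (φ z / ψ z)) fun z hz => ?_
    rw [abs_of_pos hb] at hz
    have ha := (hφ z (sphere_subset_closedBall hz)).differentiableAt.hasDerivAt
    have hb' := (hψ z (sphere_subset_closedBall hz)).differentiableAt.hasDerivAt
    have hsl : φ z / ψ z ∈ Complex.slitPlane := by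
      refine Complex.ball_one_subset_slitPlane ?_
      rw [mem_ball, dist_eq_norm]
      have : φ z / ψ z - 1 = (φ z - ψ z) / ψ z := by field_simp [hψ0 z hz]
      rw [this, norm_div, div_lt_one (norm_pos_iff.2 (hψ0 z hz))]
      exact hlt z hz
    have := ((ha.div hb' (hψ0 z hz)).clog hsl).hasDerivWithinAt (s := sphere 0 |b|)
    refine (this.congr_deriv ?_).mono (by simp [abs_of_pos hb])
    have := hψ0 z hz
    have := hφ0 z hz
    rw [Pi.div_apply]
    field_simp
  rw [circleIntegral.integral_sub, h1, h2, ← mul_sub] at h3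
  · have h4 := (mul_eq_zero.1 h3).resolve_left Complex.two_pi_I_ne_zero
    exact_mod_cast sub_eq_zero.1 h4
  · refine ContinuousOn.circleIntegrable hb.le ?_
    exact (hφ.deriv.continuousOn.mono sphere_subset_closedBall).div
      (hφ.continuousOn.mono sphere_subset_closedBall) hφ0
  · refine ContinuousOn.circleIntegrable hb.le ?_
    exact (hψ.deriv.continuousOn.mono sphere_subset_closedBall).div
      (hψ.continuousOn.mono sphere_subset_closedBall) hψ0

/-- The multiset of zeros in the disc of radius `b`, chosen once and for all. -/
def zs (φ : ℂ → ℂ) (b : ℝ) : Multiset ℂ := if h : ∃ s, IsZS φ b s then h.choose else 0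

lemma isZS_zs {φ : ℂ → ℂ} {b : ℝ} (hb : 0 < b) (hφ : AnalyticOnNhd ℂ φ (closedBall 0 b))
    (h0 : ∀ z ∈ sphere (0 : ℂ) b, φ z ≠ 0) : IsZS φ b (zs φ b) := by
  have h := exists_isZS hb hφ h0
  rw [zs, dif_pos h]
  exact h.choose_spec

lemma newton_prod (d : ℕ) : ∃ Q : MvPolynomial ℕ ℂ, ∀ s : Multiset ℂ, s.card = d →
    s.prod = MvPolynomial.aeval (fun j => (s.map (fun z => z ^ j)).sum) Q := by
  have key : ∀ k : ℕ, ∃ Q : MvPolynomial ℕ ℂ, ∀ v : Fin d → ℂ,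
      MvPolynomial.aeval v (MvPolynomial.esymm (Fin d) ℂ k) =
        MvPolynomial.aeval (fun j => ∑ i, v i ^ j) Q := by
    intro k
    induction k using Nat.strong_induction_on with
    | _ k ih =>
      rcases Nat.eq_zero_or_pos k with rfl | hk
      · exact ⟨1, fun v => by simp⟩
      · choose! Q hQ using ih
        refine ⟨MvPolynomial.C ((k : ℂ)⁻¹) * ((-1) ^ (k + 1) *
          ∑ a ∈ (Finset.HasAntidiagonal.antidiagonal k : Finset (ℕ × ℕ)) with a.1 < k,
            (-1) ^ a.1 * Q a.1 * MvPolynomial.X a.2), fun v => ?_⟩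
        have h := congrArg (MvPolynomial.aeval v) (MvPolynomial.mul_esymm_eq_sum (Fin d) ℂ k)
        have hk0 : (k : ℂ) ≠ 0 := by exact_mod_cast hk.ne'
        simp only [map_mul, map_natCast, map_pow, map_neg, map_one, map_sum] at h
        simp only [map_mul, map_pow, map_neg, map_one, map_sum, MvPolynomial.aeval_C,
          MvPolynomial.aeval_X]
        rw [eq_comm, Algebra.algebraMap_self_apply, inv_mul_eq_iff_eq_mul₀ hk0, h]
        congr 1
        refine Finset.sum_congr rfl fun a ha => ?_
        rw [hQ a.1 (Finset.mem_filter.1 ha).2 v]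
        simp [MvPolynomial.psum]
  obtain ⟨Q, hQ⟩ := key d
  refine ⟨Q, fun s hs => ?_⟩
  subst hs
  have e : ∃ v : Fin s.card → ℂ, s = Finset.univ.val.map v := by
    refine ⟨fun i => s.toList.get (i.cast (by simp)), ?_⟩
    have : (Finset.univ.val.map fun i : Fin s.card => s.toList.get (i.cast (by simp))) =
        (List.ofFn fun i : Fin s.card => s.toList.get (i.cast (by simp)) : List ℂ) := by
      simp
    rw [this]
    conv_lhs => rw [← s.coe_toList]
    congr 1
    apply List.ext_get <;> simp
  obtain ⟨v, hv⟩ := e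
  have h1 := hQ v
  have h2 : s.prod = MvPolynomial.aeval v (MvPolynomial.esymm (Fin s.card) ℂ s.card) := by
    conv_lhs => rw [hv]
    have : Finset.powersetCard s.card (Finset.univ : Finset (Fin s.card)) = {Finset.univ} := by
      have h := Finset.powersetCard_self (Finset.univ : Finset (Fin s.card))
      rwa [Finset.card_univ, Fintype.card_fin] at h
    rw [MvPolynomial.esymm, this, Finset.sum_singleton, map_prod]
    simp only [MvPolynomial.aeval_X, Finset.prod_map_val]
  rw [h2, h1]
  congr 2
  funext j
  conv_rhs => rw [hv]
  rw [Multiset.map_map]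
  rfl

lemma circ_continuous {X : Type*} [TopologicalSpace X] [FirstCountableTopology X]
    {K : X → ℂ → ℂ} {b : ℝ} (hb : 0 < b)
    (hK : ∀ t, ∀ z ∈ sphere (0 : ℂ) b, ContinuousAt (Function.uncurry K) (t, z)) :
    Continuous fun t => ∮ z in C(0, b), K t z := by
  unfold circleIntegral
  refine intervalIntegral.continuous_parametric_intervalIntegral_of_continuous' ?_ _ _
  rw [continuous_iff_continuousAt]
  rintro ⟨t, θ⟩
  have h1 : ContinuousAt (fun p : X × ℝ => deriv (circleMap 0 b) p.2) (t, θ) := by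
    simp only [deriv_circleMap]
    fun_prop
  refine h1.smul ?_
  have h2 := hK t (circleMap 0 b θ) (circleMap_mem_sphere 0 hb.le θ)
  exact ContinuousAt.comp (f := fun p : X × ℝ => (p.1, circleMap 0 b p.2))
    (g := Function.uncurry K) h2 (by fun_prop)

lemma circ_analyticAt {K : ℂ × ℂ → ℂ} {b : ℝ} (hb : 0 < b) {x0 : ℂ}
    (hK : ∀ z ∈ sphere (0 : ℂ) b, AnalyticAt ℂ K (x0, z)) :
    AnalyticAt ℂ (fun x => ∮ z in C(0, b), K (x, z)) x0 := by
  have h1 : ∀ᶠ x in 𝓝 x0, ∀ z ∈ sphere (0 : ℂ) b, AnalyticAt ℂ K (x, z) :=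
    (isCompact_sphere (0 : ℂ) b).eventually_forall_of_forall_eventually
      fun z hz => (hK z hz).eventually_analyticAt
  obtain ⟨δ, hδ, hball⟩ := Metric.eventually_nhds_iff_ball.1 h1
  refine DifferentiableOn.analyticAt (s := ball x0 δ) ?_ (ball_mem_nhds x0 hδ)
  intro x1 hx1
  refine DifferentiableAt.differentiableWithinAt ?_
  obtain ⟨δ', hδ', hsub⟩ := Metric.nhds_basis_closedBall.mem_iff.1 (isOpen_ball.mem_nhds hx1)
  have hs : ∀ θ, circleMap 0 b θ ∈ sphere (0 : ℂ) b := circleMap_mem_sphere 0 hb.le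
  have hcont : ContinuousOn (fun p => fderiv ℂ K p (1, 0)) (closedBall x1 δ' ×ˢ sphere (0 : ℂ) b) := by
    rintro ⟨x, z⟩ ⟨hx, hz⟩
    have := (hball x (hsub hx) z hz).fderiv.continuousAt
    exact (this.clm_apply continuousAt_const).continuousWithinAt
  obtain ⟨C, hC⟩ := ((isCompact_closedBall x1 δ').prod
    (isCompact_sphere (0 : ℂ) b)).exists_bound_of_continuousOn hcont
  have hdc : Continuous (deriv (circleMap 0 b)) := by
    have : deriv (circleMap 0 b) = fun θ => circleMap 0 b θ * Complex.I := by
      funext θ; simp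
    rw [this]; fun_prop
  have hFc : ∀ x ∈ ball x0 δ,
      Continuous fun θ : ℝ => deriv (circleMap 0 b) θ • K (x, circleMap 0 b θ) := by
    intro x hx
    refine hdc.smul (continuous_iff_continuousAt.2 fun θ => ?_)
    exact ContinuousAt.comp (f := fun θ : ℝ => (x, circleMap 0 b θ)) (g := K)
      (hball x hx _ (hs θ)).continuousAt (by fun_prop)
  have hF'c : Continuous fun θ : ℝ => deriv (circleMap 0 b) θ •
      fderiv ℂ K (x1, circleMap 0 b θ) (1, 0) := by
    refine hdc.smul (continuous_iff_continuousAt.2 fun θ => ?_)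
    exact ContinuousAt.comp (f := fun θ : ℝ => (x1, circleMap 0 b θ))
      (g := fun p => fderiv ℂ K p (1, 0))
      ((hball x1 hx1 _ (hs θ)).fderiv.continuousAt.clm_apply continuousAt_const) (by fun_prop)
  have := (intervalIntegral.hasDerivAt_integral_of_dominated_loc_of_deriv_le
    (𝕜 := ℂ) (μ := MeasureTheory.volume) (a := 0) (b := 2 * Real.pi)
    (F := fun x θ => deriv (circleMap 0 b) θ • K (x, circleMap 0 b θ))
    (F' := fun x θ => deriv (circleMap 0 b) θ • fderiv ℂ K (x, circleMap 0 b θ) (1, 0))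
    (x₀ := x1) (s := closedBall x1 δ') (bound := fun _ => b * C)
    (closedBall_mem_nhds x1 hδ') ?_ ?_ ?_ ?_ ?_ ?_).2.differentiableAt
  · exact this
  · filter_upwards [isOpen_ball.mem_nhds hx1] with x hx
    exact (hFc x hx).aestronglyMeasurable
  · exact (hFc x1 hx1).intervalIntegrable _ _
  · exact hF'c.aestronglyMeasurable
  · refine Eventually.of_forall fun θ _ x hx => ?_
    rw [norm_smul]
    have h3 : ‖deriv (circleMap 0 b) θ‖ = b := by simp [abs_of_pos hb]
    rw [h3]
    exact mul_le_mul_of_nonneg_left (hC (x, circleMap 0 b θ) ⟨hx, hs θ⟩) hb.le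
  · exact intervalIntegrable_const
  · refine Eventually.of_forall fun θ _ x hx => ?_
    refine HasDerivAt.const_smul (deriv (circleMap 0 b) θ) ?_
    have h4 := (hball x (hsub hx) _ (hs θ)).differentiableAt.hasFDerivAt
    have h5 : HasDerivAt (fun x : ℂ => (x, circleMap 0 b θ)) ((1 : ℂ), (0 : ℂ)) x :=
      (hasDerivAt_id x).prodMk (hasDerivAt_const x _)
    exact h4.comp_hasDerivAt x h5

/-- The number of zeros is constant in a connected family. -/
lemma card_zs_const {X : Type*} [TopologicalSpace X] [PreconnectedSpace X] {φ : X → ℂ → ℂ}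
    {b : ℝ} (hb : 0 < b) (hφ : ∀ t, AnalyticOnNhd ℂ (φ t) (closedBall 0 b))
    (h0 : ∀ t, ∀ z ∈ sphere (0 : ℂ) b, φ t z ≠ 0)
    (hc : ∀ t, ∀ z ∈ sphere (0 : ℂ) b, ContinuousAt (Function.uncurry φ) (t, z)) (t t' : X) :
    (zs (φ t) b).card = (zs (φ t') b).card := by
  have : IsLocallyConstant (fun t => (zs (φ t) b).card) := by
    rw [IsLocallyConstant.iff_eventually_eq]
    intro t0
    have : ∀ᶠ t in 𝓝 t0, ∀ z ∈ sphere (0 : ℂ) b, ‖φ t z - φ t0 z‖ < ‖φ t0 z‖ := by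
      refine (isCompact_sphere (0 : ℂ) b).eventually_forall_of_forall_eventually fun z hz => ?_
      have h1 : ContinuousAt (fun p : X × ℂ => φ p.1 p.2) (t0, z) := hc t0 z hz
      have h2 : ContinuousAt (fun p : X × ℂ => φ t0 p.2) (t0, z) :=
        ContinuousAt.comp (f := fun p : X × ℂ => p.2) (g := φ t0)
          (hφ t0 z (sphere_subset_closedBall hz)).continuousAt (by fun_prop)
      refine (h1.sub h2).norm.eventually_lt h2.norm ?_
      simpa using h0 t0 z hz
    filter_upwards [this] with t ht
    exact (isZS_zs hb (hφ t) (h0 t)).rouche hb (isZS_zs hb (hφ t0) (h0 t0)) (hφ t) (hφ t0) ht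
  exact this.apply_eq_of_preconnectedSpace t t'

lemma psum_eq {φ ψ : ℂ → ℂ} {b : ℝ} (hb : 0 < b) (hφ : AnalyticOnNhd ℂ φ (closedBall 0 b))
    (h0 : ∀ z ∈ sphere (0 : ℂ) b, φ z ≠ 0) (hψ : AnalyticOnNhd ℂ ψ (closedBall 0 b)) (j : ℕ) :
    ((((zs φ b).map ψ).map (fun z => z ^ j)).sum) =
      (2 * Real.pi * Complex.I)⁻¹ * ∮ z in C(0, b), ψ z ^ j * (deriv φ z / φ z) := by
  rw [(isZS_zs hb hφ h0).integral hb (ψ := fun z => ψ z ^ j) (hψ.pow j), ← mul_assoc,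
    inv_mul_cancel₀ Complex.two_pi_I_ne_zero, one_mul, Multiset.map_map]
  rfl

lemma prod_zs_continuous {X : Type*} [TopologicalSpace X] [FirstCountableTopology X]
    [PreconnectedSpace X] {φ ψ : X → ℂ → ℂ}
    {b : ℝ} (hb : 0 < b) (hφ : ∀ t, AnalyticOnNhd ℂ (φ t) (closedBall 0 b))
    (hψ : ∀ t, AnalyticOnNhd ℂ (ψ t) (closedBall 0 b))
    (h0 : ∀ t, ∀ z ∈ sphere (0 : ℂ) b, φ t z ≠ 0)
    (hc : ∀ t, ∀ z ∈ sphere (0 : ℂ) b, ContinuousAt (Function.uncurry φ) (t, z))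
    (hc' : ∀ t, ∀ z ∈ sphere (0 : ℂ) b,
      ContinuousAt (Function.uncurry fun t z => deriv (φ t) z) (t, z))
    (hcψ : ∀ t, ∀ z ∈ sphere (0 : ℂ) b, ContinuousAt (Function.uncurry ψ) (t, z)) :
    Continuous fun t => ((zs (φ t) b).map (ψ t)).prod := by
  rcases isEmpty_or_nonempty X with hX | ⟨⟨t0⟩⟩
  · exact continuous_of_const fun x => hX.elim x
  obtain ⟨Q, hQ⟩ := newton_prod (zs (φ t0) b).card
  have e : (fun t => ((zs (φ t) b).map (ψ t)).prod) = fun t => MvPolynomial.aeval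
      (fun j => (((zs (φ t) b).map (ψ t)).map (fun z => z ^ j)).sum) Q := by
    funext t
    refine hQ _ ?_
    rw [Multiset.card_map]
    exact card_zs_const hb hφ h0 hc t t0
  rw [e]
  refine (MvPolynomial.continuous_eval Q).comp (continuous_pi fun j => ?_)
  simp only [fun t => psum_eq hb (hφ t) (h0 t) (hψ t) j]
  refine continuous_const.mul (circ_continuous hb fun t z hz => ?_)
  exact ((hcψ t z hz).pow j).mul ((hc' t z hz).div (hc t z hz) (h0 t z hz))

lemma analyticAt_sec2 {H : ℂ × ℂ → ℂ} {x y : ℂ} (h : AnalyticAt ℂ H (x, y)) :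
    AnalyticAt ℂ (fun y => H (x, y)) y :=
  AnalyticAt.comp (g := H) (f := fun y => (x, y)) h (analyticAt_const.prod analyticAt_id)

lemma deriv_sec2 {H : ℂ × ℂ → ℂ} {x y : ℂ} (h : AnalyticAt ℂ H (x, y)) :
    deriv (fun y => H (x, y)) y = fderiv ℂ H (x, y) (0, 1) := by
  have h5 : HasDerivAt (fun y : ℂ => (x, y)) ((0 : ℂ), (1 : ℂ)) y :=
      (hasDerivAt_const y _).prodMk (hasDerivAt_id y)
  exact (h.differentiableAt.hasFDerivAt.comp_hasDerivAt y h5).deriv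

lemma prod_zs_analyticAt {H1 H2 : ℂ × ℂ → ℂ} {b : ℝ} (hb : 0 < b) {x0 : ℂ}
    (h1 : ∀ y ∈ closedBall (0 : ℂ) b, AnalyticAt ℂ H1 (x0, y))
    (h2 : ∀ y ∈ closedBall (0 : ℂ) b, AnalyticAt ℂ H2 (x0, y))
    (h0 : ∀ y ∈ sphere (0 : ℂ) b, H2 (x0, y) ≠ 0) :
    AnalyticAt ℂ (fun x => ((zs (fun y => H2 (x, y)) b).map (fun y => H1 (x, y))).prod) x0 := by
  have e1 : ∀ᶠ x in 𝓝 x0, ∀ y ∈ closedBall (0 : ℂ) b, AnalyticAt ℂ H1 (x, y) :=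
    (isCompact_closedBall (0 : ℂ) b).eventually_forall_of_forall_eventually
      fun z hz => (h1 z hz).eventually_analyticAt
  have e2 : ∀ᶠ x in 𝓝 x0, ∀ y ∈ closedBall (0 : ℂ) b, AnalyticAt ℂ H2 (x, y) :=
    (isCompact_closedBall (0 : ℂ) b).eventually_forall_of_forall_eventually
      fun z hz => (h2 z hz).eventually_analyticAt
  have e3 : ∀ᶠ x in 𝓝 x0, ∀ y ∈ sphere (0 : ℂ) b, H2 (x, y) ≠ 0 :=
    (isCompact_sphere (0 : ℂ) b).eventually_forall_of_forall_eventually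
      fun z hz => (h2 z (sphere_subset_closedBall hz)).continuousAt.eventually_ne (h0 z hz)
  obtain ⟨δ, hδ, hball⟩ := Metric.eventually_nhds_iff_ball.1 ((e1.and e2).and e3)
  have hpc : PreconnectedSpace (ball x0 δ) :=
    Subtype.preconnectedSpace (convex_ball x0 δ).isPreconnected
  obtain ⟨Q, hQ⟩ := newton_prod (zs (fun y => H2 (x0, y)) b).card
  have an1 : ∀ x ∈ ball x0 δ, AnalyticOnNhd ℂ (fun y => H1 (x, y)) (closedBall 0 b) :=
    fun x hx y hy => analyticAt_sec2 ((hball x hx).1.1 y hy)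
  have an2 : ∀ x ∈ ball x0 δ, AnalyticOnNhd ℂ (fun y => H2 (x, y)) (closedBall 0 b) :=
    fun x hx y hy => analyticAt_sec2 ((hball x hx).1.2 y hy)
  have hcard : ∀ x ∈ ball x0 δ, (zs (fun y => H2 (x, y)) b).card =
      (zs (fun y => H2 (x0, y)) b).card := by
    intro x hx
    refine card_zs_const (X := ball x0 δ) (φ := fun t y => H2 (t, y)) hb
      (fun t => an2 t t.2) (fun t => (hball t t.2).2) ?_ ⟨x, hx⟩ ⟨x0, mem_ball_self hδ⟩
    intro t z hz
    exact ContinuousAt.comp (f := fun p : ball x0 δ × ℂ => ((p.1 : ℂ), p.2)) (g := H2)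
      ((hball t t.2).1.2 z (sphere_subset_closedBall hz)).continuousAt (by fun_prop)
  have hev : (fun x => MvPolynomial.aeval (fun j => (2 * Real.pi * Complex.I)⁻¹ *
      ∮ y in C(0, b), H1 (x, y) ^ j * (fderiv ℂ H2 (x, y) (0, 1) / H2 (x, y))) Q) =ᶠ[𝓝 x0]
      (fun x => ((zs (fun y => H2 (x, y)) b).map (fun y => H1 (x, y))).prod) := by
    filter_upwards [ball_mem_nhds x0 hδ] with x hx
    rw [hQ _ ((Multiset.card_map _ _).trans (hcard x hx))]
    congr 2
    funext j
    rw [psum_eq hb (an2 x hx) (hball x hx).2 (an1 x hx) j]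
    congr 1
    refine circleIntegral.integral_congr hb.le fun y hy => ?_
    rw [deriv_sec2 ((hball x hx).1.2 y (sphere_subset_closedBall hy))]
  refine AnalyticAt.congr ?_ hev
  refine AnalyticAt.aeval_mvPolynomial (fun j => ?_) Q
  refine analyticAt_const.mul ?_
  refine circ_analyticAt (K := fun p => H1 p ^ j * (fderiv ℂ H2 p (0, 1) / H2 p)) hb fun y hy => ?_
  have hy' := sphere_subset_closedBall hy
  refine ((h1 y hy').pow j).mul (AnalyticAt.div ?_ (h2 y hy') (h0 y hy))
  exact ((ContinuousLinearMap.apply ℂ ℂ ((0 : ℂ), (1 : ℂ))).analyticAt _).comp (h2 y hy').fderiv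

/-- The resultant of `h` (product of first components over the zeros of the second one). -/
def res (h : ℂ × ℂ → ℂ × ℂ) (b : ℝ) (x : ℂ) : ℂ :=
  ((zs (fun y => (h (x, y)).2) b).map (fun y => (h (x, y)).1)).prod

/-- The total multiplicity of the zeros of `h` in a bidisc. -/
def deg (h : ℂ × ℂ → ℂ × ℂ) (a b : ℝ) : ℕ := (zs (res h b) a).card

/-- Admissible maps on a bidisc. -/
structure Good (h : ℂ × ℂ → ℂ × ℂ) (a b : ℝ) : Prop where
  ha : 0 < a
  hb : 0 < b
  an : ∀ x ∈ closedBall (0 : ℂ) a, ∀ y ∈ closedBall (0 : ℂ) b, AnalyticAt ℂ h (x, y)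
  n2 : ∀ x ∈ closedBall (0 : ℂ) a, ∀ y ∈ sphere (0 : ℂ) b, (h (x, y)).2 ≠ 0
  n1 : ∀ x ∈ sphere (0 : ℂ) a, ∀ y ∈ closedBall (0 : ℂ) b, h (x, y) ≠ 0

lemma an_fst {h : ℂ × ℂ → ℂ × ℂ} {p : ℂ × ℂ} (hp : AnalyticAt ℂ h p) :
    AnalyticAt ℂ (fun p => (h p).1) p :=
  ((ContinuousLinearMap.fst ℂ ℂ ℂ).analyticAt _).comp hp

lemma an_snd {h : ℂ × ℂ → ℂ × ℂ} {p : ℂ × ℂ} (hp : AnalyticAt ℂ h p) :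
    AnalyticAt ℂ (fun p => (h p).2) p :=
  ((ContinuousLinearMap.snd ℂ ℂ ℂ).analyticAt _).comp hp

lemma Good.isZS2 {h a b} (H : Good h a b) {x : ℂ} (hx : x ∈ closedBall (0 : ℂ) a) :
    IsZS (fun y => (h (x, y)).2) b (zs (fun y => (h (x, y)).2) b) :=
  isZS_zs H.hb (fun y hy => analyticAt_sec2 (H := fun p => (h p).2) (an_snd (H.an x hx y hy)))
    (H.n2 x hx)

lemma Good.res_an {h a b} (H : Good h a b) : AnalyticOnNhd ℂ (res h b) (closedBall 0 a) := by
  intro x hx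
  exact prod_zs_analyticAt (H1 := fun p => (h p).1) (H2 := fun p => (h p).2) H.hb
    (fun y hy => an_fst (H.an x hx y hy)) (fun y hy => an_snd (H.an x hx y hy)) (H.n2 x hx)

lemma Good.res_eq_zero {h a b} (H : Good h a b) {x : ℂ} (hx : x ∈ closedBall (0 : ℂ) a) :
    res h b x = 0 ↔ ∃ y ∈ ball (0 : ℂ) b, h (x, y) = 0 := by
  rw [res, Multiset.prod_eq_zero_iff, Multiset.mem_map]
  have hz := H.isZS2 hx
  constructor
  · rintro ⟨y, hy, h1⟩
    have hyb := hz.1 y hy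
    exact ⟨y, hyb, Prod.ext h1 ((hz.mem_iff (ball_subset_closedBall hyb)).2 hy)⟩
  · rintro ⟨y, hy, h1⟩
    refine ⟨y, (hz.mem_iff (ball_subset_closedBall hy)).1 ?_, ?_⟩ <;> simp [h1]

lemma Good.res_ne {h a b} (H : Good h a b) : ∀ x ∈ sphere (0 : ℂ) a, res h b x ≠ 0 := by
  intro x hx h0
  obtain ⟨y, hy, h1⟩ := (H.res_eq_zero (sphere_subset_closedBall hx)).1 h0
  exact H.n1 x hx y (ball_subset_closedBall hy) h1

lemma Good.isZS_res {h a b} (H : Good h a b) : IsZS (res h b) a (zs (res h b) a) :=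
  isZS_zs H.ha H.res_an H.res_ne

lemma Good.card_const {h a b} (H : Good h a b) {x x' : ℂ} (hx : x ∈ closedBall (0 : ℂ) a)
    (hx' : x' ∈ closedBall (0 : ℂ) a) :
    (zs (fun y => (h (x, y)).2) b).card = (zs (fun y => (h (x', y)).2) b).card := by
  have hpc : PreconnectedSpace (closedBall (0 : ℂ) a) :=
    Subtype.preconnectedSpace (convex_closedBall (0 : ℂ) a).isPreconnected
  refine card_zs_const (X := closedBall (0 : ℂ) a) (φ := fun t y => (h (t, y)).2) H.hb
    (fun t y hy => analyticAt_sec2 (H := fun p => (h p).2) (an_snd (H.an t t.2 y hy)))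
    (fun t => H.n2 t t.2) ?_ ⟨x, hx⟩ ⟨x', hx'⟩
  intro t z hz
  exact ContinuousAt.comp (f := fun p : closedBall (0 : ℂ) a × ℂ => ((p.1 : ℂ), p.2))
    (g := fun p => (h p).2)
    (an_snd (H.an t t.2 z (sphere_subset_closedBall hz))).continuousAt (by fun_prop)

/-- Linear homotopy. -/
def hom (h g : ℂ × ℂ → ℂ × ℂ) (t : ℝ) (p : ℂ × ℂ) : ℂ × ℂ := h p + (t : ℂ) • (g p - h p)

lemma res_hom_continuousAt {h g : ℂ × ℂ → ℂ × ℂ} {b : ℝ} (hb : 0 < b) {t0 : ℝ} {x0 : ℂ}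
    (hh : ∀ y ∈ closedBall (0 : ℂ) b, AnalyticAt ℂ h (x0, y))
    (hg : ∀ y ∈ closedBall (0 : ℂ) b, AnalyticAt ℂ g (x0, y))
    (h0 : ∀ y ∈ sphere (0 : ℂ) b, (hom h g t0 (x0, y)).2 ≠ 0) :
    ContinuousAt (fun q : ℝ × ℂ => res (hom h g q.1) b q.2) (t0, x0) := by
  have e1 : ∀ᶠ q : ℝ × ℂ in 𝓝 (t0, x0), ∀ y ∈ closedBall (0 : ℂ) b, AnalyticAt ℂ h (q.2, y) := by
    refine (isCompact_closedBall (0 : ℂ) b).eventually_forall_of_forall_eventually fun y hy => ?_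
    have : Tendsto (fun q : (ℝ × ℂ) × ℂ => (q.1.2, q.2)) (𝓝 ((t0, x0), y)) (𝓝 (x0, y)) :=
      Continuous.tendsto (f := fun q : (ℝ × ℂ) × ℂ => (q.1.2, q.2)) (by fun_prop) _
    exact this.eventually (hh y hy).eventually_analyticAt
  have e2 : ∀ᶠ q : ℝ × ℂ in 𝓝 (t0, x0), ∀ y ∈ closedBall (0 : ℂ) b, AnalyticAt ℂ g (q.2, y) := by
    refine (isCompact_closedBall (0 : ℂ) b).eventually_forall_of_forall_eventually fun y hy => ?_
    have : Tendsto (fun q : (ℝ × ℂ) × ℂ => (q.1.2, q.2)) (𝓝 ((t0, x0), y)) (𝓝 (x0, y)) :=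
      Continuous.tendsto (f := fun q : (ℝ × ℂ) × ℂ => (q.1.2, q.2)) (by fun_prop) _
    exact this.eventually (hg y hy).eventually_analyticAt
  have hcomp : ∀ {G : ℂ × ℂ → ℂ} {t : ℝ} {x y : ℂ}, ContinuousAt G (x, y) →
      ContinuousAt (fun q : (ℝ × ℂ) × ℂ => G (q.1.2, q.2)) ((t, x), y) := by
    intro G t x y hG
    exact ContinuousAt.comp (f := fun q : (ℝ × ℂ) × ℂ => (q.1.2, q.2)) (g := G) hG (by fun_prop)
  have hcont : ∀ {t : ℝ} {x y : ℂ}, AnalyticAt ℂ h (x, y) → AnalyticAt ℂ g (x, y) →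
      ContinuousAt (fun q : (ℝ × ℂ) × ℂ => hom h g q.1.1 (q.1.2, q.2)) ((t, x), y) := by
    intro t x y h1 h2
    have a1 := fun i : Unit => hcomp (t := t) (an_fst h1).continuousAt
    have b1 : ContinuousAt (fun q : (ℝ × ℂ) × ℂ => h (q.1.2, q.2)) ((t, x), y) :=
      ContinuousAt.comp (f := fun q : (ℝ × ℂ) × ℂ => (q.1.2, q.2)) (g := h) h1.continuousAt
        (by fun_prop)
    have b2 : ContinuousAt (fun q : (ℝ × ℂ) × ℂ => g (q.1.2, q.2)) ((t, x), y) :=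
      ContinuousAt.comp (f := fun q : (ℝ × ℂ) × ℂ => (q.1.2, q.2)) (g := g) h2.continuousAt
        (by fun_prop)
    exact b1.add ((by fun_prop : ContinuousAt
      (fun q : (ℝ × ℂ) × ℂ => (q.1.1 : ℂ)) ((t, x), y)).smul (b2.sub b1))
  have e3 : ∀ᶠ q : ℝ × ℂ in 𝓝 (t0, x0), ∀ y ∈ sphere (0 : ℂ) b,
      (hom h g q.1 (q.2, y)).2 ≠ 0 := by
    refine (isCompact_sphere (0 : ℂ) b).eventually_forall_of_forall_eventually fun y hy => ?_
    have hy' := sphere_subset_closedBall hy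
    exact (hcont (hh y hy') (hg y hy')).snd.eventually_ne (h0 y hy)
  obtain ⟨δ, hδ, hball⟩ := Metric.eventually_nhds_iff_ball.1 ((e1.and e2).and e3)
  set B := ball ((t0, x0) : ℝ × ℂ) δ with hB
  have hpc : PreconnectedSpace B :=
    Subtype.preconnectedSpace (convex_ball _ δ).isPreconnected
  have hhan : ∀ q ∈ B, ∀ y ∈ closedBall (0 : ℂ) b, AnalyticAt ℂ (hom h g q.1) (q.2, y) := by
    intro q hq y hy
    exact ((hball q hq).1.1 y hy).add
      (analyticAt_const (v := (q.1 : ℂ)) |>.smul (((hball q hq).1.2 y hy).sub ((hball q hq).1.1 y hy)))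
  have key : Continuous fun q : B => res (hom h g q.1.1) b q.1.2 := by
    refine prod_zs_continuous (X := B) (φ := fun q y => (hom h g q.1.1 (q.1.2, y)).2)
      (ψ := fun q y => (hom h g q.1.1 (q.1.2, y)).1) hb ?_ ?_ ?_ ?_ ?_ ?_
    · intro q y hy
      exact analyticAt_sec2 (H := fun p => (hom h g q.1.1 p).2) (an_snd (hhan q q.2 y hy))
    · intro q y hy
      exact analyticAt_sec2 (H := fun p => (hom h g q.1.1 p).1) (an_fst (hhan q q.2 y hy))
    · intro q y hy
      exact (hball q q.2).2 y hy
    · intro q y hy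
      have hy' := sphere_subset_closedBall hy
      exact ContinuousAt.comp (f := fun r : B × ℂ => (r.1.1, r.2))
        (g := fun r : (ℝ × ℂ) × ℂ => (hom h g r.1.1 (r.1.2, r.2)).2)
        (hcont ((hball q q.2).1.1 y hy') ((hball q q.2).1.2 y hy')).snd (by fun_prop)
    · intro q y hy
      have hy' := sphere_subset_closedBall hy
      have A1 := (hball q q.2).1.1 y hy'
      have A2 := (hball q q.2).1.2 y hy'
      have T : Tendsto (fun r : B × ℂ => (r.1.1.2, r.2)) (𝓝 (q, y)) (𝓝 (q.1.2, y)) :=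
        Continuous.tendsto (f := fun r : B × ℂ => (r.1.1.2, r.2)) (by fun_prop) _
      have ev : (fun r : B × ℂ => fderiv ℂ (fun p => (h p).2) (r.1.1.2, r.2) (0, 1) +
          (r.1.1.1 : ℂ) * (fderiv ℂ (fun p => (g p).2) (r.1.1.2, r.2) (0, 1) -
          fderiv ℂ (fun p => (h p).2) (r.1.1.2, r.2) (0, 1))) =ᶠ[𝓝 (q, y)]
          (Function.uncurry fun (q : B) z => deriv (fun y => (hom h g q.1.1 (q.1.2, y)).2) z) := by
        filter_upwards [T.eventually A1.eventually_analyticAt,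
          T.eventually A2.eventually_analyticAt] with r r1 r2
        have d1 := (analyticAt_sec2 (H := fun p => (h p).2) (an_snd r1)).differentiableAt.hasDerivAt
        have d2 := (analyticAt_sec2 (H := fun p => (g p).2) (an_snd r2)).differentiableAt.hasDerivAt
        rw [deriv_sec2 (H := fun p => (h p).2) (an_snd r1)] at d1
        rw [deriv_sec2 (H := fun p => (g p).2) (an_snd r2)] at d2
        exact ((d1.add ((d2.sub d1).const_mul (r.1.1.1 : ℂ))).deriv).symm
      refine ContinuousAt.congr ?_ ev
      have c1 : ContinuousAt (fun r : B × ℂ => fderiv ℂ (fun p => (h p).2) (r.1.1.2, r.2) (0, 1))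
          (q, y) := ContinuousAt.clm_apply (ContinuousAt.comp
            (f := fun r : B × ℂ => (r.1.1.2, r.2)) (an_snd A1).fderiv.continuousAt T)
            continuousAt_const
      have c2 : ContinuousAt (fun r : B × ℂ => fderiv ℂ (fun p => (g p).2) (r.1.1.2, r.2) (0, 1))
          (q, y) := ContinuousAt.clm_apply (ContinuousAt.comp
            (f := fun r : B × ℂ => (r.1.1.2, r.2)) (an_snd A2).fderiv.continuousAt T)
            continuousAt_const
      exact c1.add ((by fun_prop : ContinuousAt
        (fun r : B × ℂ => (r.1.1.1 : ℂ)) (q, y)).mul (c2.sub c1))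
    · intro q y hy
      have hy' := sphere_subset_closedBall hy
      exact ContinuousAt.comp (f := fun r : B × ℂ => (r.1.1, r.2))
        (g := fun r : (ℝ × ℂ) × ℂ => (hom h g r.1.1 (r.1.2, r.2)).1)
        (hcont ((hball q q.2).1.1 y hy') ((hball q q.2).1.2 y hy')).fst (by fun_prop)
  have : ContinuousOn (fun q : ℝ × ℂ => res (hom h g q.1) b q.2) B :=
    continuousOn_iff_continuous_domRestrict.2 key
  exact this.continuousAt (ball_mem_nhds _ hδ)

lemma deg_hom {h g : ℂ × ℂ → ℂ × ℂ} {a b : ℝ} (hh : Good h a b) (hg : Good g a b)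
    (hgood : ∀ t ∈ Icc (0 : ℝ) 1, Good (hom h g t) a b) : deg h a b = deg g a b := by
  have hpc : PreconnectedSpace (Icc (0 : ℝ) 1) := Subtype.preconnectedSpace isPreconnected_Icc
  have := card_zs_const (X := Icc (0 : ℝ) 1) (φ := fun t => res (hom h g t) b) hh.ha
    (fun t => (hgood t t.2).res_an) (fun t => (hgood t t.2).res_ne) ?_ ⟨0, by simp⟩ ⟨1, by simp⟩
  · have e0 : hom h g 0 = h := by funext p; simp [hom]
    have e1 : hom h g 1 = g := by funext p; simp [hom]
    simpa [deg, e0, e1] using this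
  · intro t x hx
    have hx' := sphere_subset_closedBall hx
    have := res_hom_continuousAt (h := h) (g := g) hh.hb (t0 := t) (x0 := x)
      (hh.an x hx') (hg.an x hx') ((hgood t t.2).n2 x hx')
    exact ContinuousAt.comp (f := fun r : Icc (0 : ℝ) 1 × ℂ => ((r.1 : ℝ), r.2))
      (g := fun q : ℝ × ℂ => res (hom h g q.1) b q.2) this (by fun_prop)

lemma deg_stable {h : ℂ × ℂ → ℂ × ℂ} {a b : ℝ} (hh : Good h a b) : ∃ η > 0, ∀ g,
    (∀ x ∈ closedBall (0 : ℂ) a, ∀ y ∈ closedBall (0 : ℂ) b, AnalyticAt ℂ g (x, y)) →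
    (∀ x ∈ closedBall (0 : ℂ) a, ∀ y ∈ closedBall (0 : ℂ) b, ‖g (x, y) - h (x, y)‖ < η) →
    Good g a b ∧ deg g a b = deg h a b := by
  have hc : ContinuousOn h (closedBall (0 : ℂ) a ×ˢ closedBall (0 : ℂ) b) :=
    fun p hp => (hh.an p.1 hp.1 p.2 hp.2).continuousAt.continuousWithinAt
  obtain ⟨m1, hm1, h1⟩ := ((isCompact_closedBall (0 : ℂ) a).prod
    (isCompact_sphere (0 : ℂ) b)).exists_forall_le' (a := 0)
    (f := fun p => ‖(h p).2‖) (hc.mono (prod_mono le_rfl sphere_subset_closedBall)).snd.norm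
    (fun p hp => norm_pos_iff.2 (hh.n2 p.1 hp.1 p.2 hp.2))
  obtain ⟨m2, hm2, h2⟩ := ((isCompact_sphere (0 : ℂ) a).prod
    (isCompact_closedBall (0 : ℂ) b)).exists_forall_le' (a := 0)
    (f := fun p => ‖h p‖) (hc.mono (prod_mono sphere_subset_closedBall le_rfl)).norm
    (fun p hp => norm_pos_iff.2 (hh.n1 p.1 hp.1 p.2 hp.2))
  refine ⟨min m1 m2, lt_min hm1 hm2, fun g hg hlt => ?_⟩
  have hgood : ∀ t ∈ Icc (0 : ℝ) 1, Good (hom h g t) a b := by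
    intro t ht
    have hlt' : ∀ x ∈ closedBall (0 : ℂ) a, ∀ y ∈ closedBall (0 : ℂ) b,
        ‖hom h g t (x, y) - h (x, y)‖ < min m1 m2 := by
      intro x hx y hy
      rw [hom, add_sub_cancel_left, norm_smul, Complex.norm_real, Real.norm_eq_abs,
        abs_of_nonneg ht.1]
      exact lt_of_le_of_lt (mul_le_of_le_one_left (norm_nonneg _) ht.2) (hlt x hx y hy)
    refine ⟨hh.ha, hh.hb, fun x hx y hy => (hh.an x hx y hy).add
      (analyticAt_const (v := (t : ℂ)) |>.smul ((hg x hx y hy).sub (hh.an x hx y hy))), ?_, ?_⟩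
    · intro x hx y hy h0
      have e1 := hlt' x hx y (sphere_subset_closedBall hy)
      have e2 := norm_snd_le (hom h g t (x, y) - h (x, y))
      have e3 := h1 (x, y) ⟨hx, hy⟩
      rw [Prod.snd_sub, h0, zero_sub, norm_neg] at e2
      have := min_le_left m1 m2
      linarith
    · intro x hx y hy h0
      have e1 := hlt' x (sphere_subset_closedBall hx) y hy
      have e3 := h2 (x, y) ⟨hx, hy⟩
      rw [h0, zero_sub, norm_neg] at e1
      have := min_le_right m1 m2
      linarith
  have e1 : hom h g 1 = g := by funext p; simp [hom]
  have hgg : Good g a b := by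
    have := hgood 1 (by simp)
    rwa [e1] at this
  exact ⟨hgg, (deg_hom hh hgg hgood).symm⟩

lemma continuousAt_isTheta_one {v : ℂ → ℂ} {x : ℂ} (hv : ContinuousAt v x) (h0 : v x ≠ 0) :
    v =Θ[𝓝 x] (fun _ => (1 : ℂ)) := by
  refine ⟨hv.tendsto.isBigO_one ℂ, ?_⟩
  refine (isBigO_const_left_iff_pos_le_norm one_ne_zero).2 ⟨‖v x‖ / 2, by positivity, ?_⟩
  have : Tendsto (fun y => ‖v y‖) (𝓝 x) (𝓝 ‖v x‖) := hv.norm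
  filter_upwards [Filter.Tendsto.eventually_const_le (u := ‖v x‖ / 2)
    (show ‖v x‖ / 2 < ‖v x‖ by have := norm_pos_iff.2 h0; linarith) this] with y hy using hy

lemma IsZS.isTheta {φ b s} (h : IsZS φ b s) {x : ℂ} (hx : x ∈ closedBall (0 : ℂ) b) :
    φ =Θ[𝓝 x] (fun w => (w - x) ^ (s.count x)) := by
  obtain ⟨_, u, hu, hu0, huf⟩ := h
  have hdec : s = Multiset.replicate (s.count x) x + s.filter (fun z => z ≠ x) := by
    conv_lhs => rw [← Multiset.filter_add_not (fun z => z = x) s]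
    rw [Multiset.filter_eq']
  have hev : φ =ᶠ[𝓝 x] fun w => (w - x) ^ (s.count x) *
      (((s.filter (fun z => z ≠ x)).map (fun a => w - a)).prod * u w) := by
    filter_upwards [huf x hx] with w hw
    rw [hw]
    conv_lhs => rw [hdec]
    rw [Multiset.map_add, Multiset.prod_add, Multiset.map_replicate, Multiset.prod_replicate,
      mul_assoc]
  refine hev.isTheta.trans ?_
  have h1 : (fun w => ((s.filter (fun z => z ≠ x)).map (fun a => w - a)).prod * u w)
      =Θ[𝓝 x] (fun _ => (1 : ℂ)) := by
    refine continuousAt_isTheta_one ?_ ?_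
    · refine ContinuousAt.mul ?_ (hu x hx).continuousAt
      refine (continuous_multiset_prod _ fun a _ => by fun_prop).continuousAt
    · refine mul_ne_zero ?_ (hu0 x hx)
      rw [Ne, Multiset.prod_eq_zero_iff, Multiset.mem_map]
      rintro ⟨a, ha, h0⟩
      exact (Multiset.mem_filter.1 ha).2 (sub_eq_zero.1 h0).symm
  simpa using (isTheta_refl (fun w => (w - x) ^ (s.count x)) (𝓝 x)).mul h1

lemma pow_le_of_isBigO {x : ℂ} {m n : ℕ}
    (h : (fun w : ℂ => (w - x) ^ m) =O[𝓝[≠] x] fun w => (w - x) ^ n) : n ≤ m := by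
  by_contra hlt
  push Not at hlt
  have h1 : (fun w : ℂ => (w - x) ^ n) =o[𝓝[≠] x] fun w => (w - x) ^ m :=
    IsLittleO.of_norm_norm (by
      simpa using (isLittleO_pow_sub_pow_sub x hlt).mono nhdsWithin_le_nhds)
  refine isLittleO_irrefl ?_ (h.trans_isLittleO h1)
  refine Eventually.frequently ?_
  filter_upwards [self_mem_nhdsWithin] with w hw
  exact pow_ne_zero _ (sub_ne_zero.2 hw)

lemma IsZS.le_count {φ b s} (h : IsZS φ b s) {x : ℂ} (hx : x ∈ closedBall (0 : ℂ) b) {n : ℕ}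
    (hn : φ =O[𝓝[≠] x] (fun w => (w - x) ^ n)) : n ≤ s.count x :=
  pow_le_of_isBigO (((h.isTheta hx).isBigO_symm.mono nhdsWithin_le_nhds).trans hn)

lemma IsZS.count_le {φ b s} (h : IsZS φ b s) {x : ℂ} (hx : x ∈ closedBall (0 : ℂ) b) {n : ℕ}
    (hn : (fun w => (w - x) ^ n) =O[𝓝[≠] x] φ) : s.count x ≤ n :=
  pow_le_of_isBigO (hn.trans ((h.isTheta hx).isBigO.mono nhdsWithin_le_nhds))

lemma hasDerivAt_theta {E : Type*} [NormedAddCommGroup E] [NormedSpace ℂ E] {F : ℂ → E} {F' : E}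
    {x : ℂ} (h : HasDerivAt F F' x) (h0 : F x = 0) (hne : F' ≠ 0) :
    F =Θ[𝓝 x] (fun w => w - x) := by
  have h1 := HasDerivAtFilter.isTheta_sub h hne
  have : Tendsto (fun w : ℂ => (w, x)) (𝓝 x) (𝓝 x ×ˢ pure x) := tendsto_id.prodMk (by simp)
  have h2 := h1.1.comp_tendsto this
  have h3 := h1.2.comp_tendsto this
  simp only [Function.comp_def, h0, sub_zero] at h2 h3
  exact ⟨h2, h3⟩

lemma IsZS.count_eq_one {φ b s} (h : IsZS φ b s) {x : ℂ} (hx : x ∈ closedBall (0 : ℂ) b)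
    (h0 : φ x = 0) (hd : deriv φ x ≠ 0) : s.count x ≤ 1 := by
  have hdd : HasDerivAt φ (deriv φ x) x :=
    (differentiableAt_of_deriv_ne_zero hd).hasDerivAt
  have := (hasDerivAt_theta hdd h0 hd).isBigO_symm
  refine h.count_le hx ?_
  simpa using this.mono nhdsWithin_le_nhds

lemma branch {g : ℂ × ℂ → ℂ × ℂ} {x0 y0 : ℂ} (hg : AnalyticAt ℂ g (x0, y0)) (h0 : g (x0, y0) = 0)
    (hbij : Function.Bijective (fderiv ℂ g (x0, y0)))
    (h2 : (fderiv ℂ g (x0, y0) (0, 1)).2 ≠ 0) :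
    ∃ Y : ℂ → ℂ, Tendsto Y (𝓝 x0) (𝓝 y0) ∧
      (∀ᶠ v in 𝓝 (x0, y0), (g v).2 = 0 ↔ Y v.1 = v.2) ∧
      (fun x => (g (x, Y x)).1) =Θ[𝓝 x0] (fun x => x - x0) := by
  have dg := hg.hasStrictFDerivAt
  set D := fderiv ℂ g (x0, y0) with hD
  have dfu := dg.snd
  have hinv : ((ContinuousLinearMap.snd ℂ ℂ ℂ ∘L D) ∘L .inr ℂ ℂ ℂ).IsInvertible := by
    set c := (D (0, 1)).2
    refine ContinuousLinearMap.IsInvertible.of_inverse (g := c⁻¹ • ContinuousLinearMap.id ℂ ℂ) ?_ ?_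
    · ext; simp [c]
      exact inv_mul_cancel₀ h2
    · ext; simp [c]
      exact inv_mul_cancel₀ h2
  set Y := dfu.implicitFunctionOfProdDomain hinv
  have hT := dfu.tendsto_implicitFunctionOfProdDomain hinv
  have hE := dfu.eventually_apply_eq_iff_implicitFunctionOfProdDomain hinv
  have hS := dfu.hasStrictFDerivAt_implicitFunctionOfProdDomain hinv
  have hA := dfu.eventually_apply_implicitFunctionOfProdDomain hinv
  simp only [h0, Prod.snd_zero] at hE hA
  refine ⟨Y, hT, hE, ?_⟩
  have hY0 : Y x0 = y0 := hE.self_of_nhds.1 (by simp [h0])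
  have hYd : HasDerivAt Y _ x0 := hS.hasFDerivAt.hasDerivAt
  have hxY := (hasDerivAt_id x0).prodMk hYd
  have hcomp : HasDerivAt (fun x => g (x, Y x)) (D (1, _)) x0 :=
    HasFDerivAt.comp_hasDerivAt x0 (f := fun x => (x, Y x)) (l := g) (l' := D)
      (by rw [hY0]; exact dg.hasFDerivAt) hxY
  have hne : ∀ z, D (1, z) ≠ 0 := fun z h => by
    have := hbij.1 (h.trans (map_zero D).symm)
    simpa using congrArg Prod.fst this
  have := hasDerivAt_theta hcomp (by simp only [hY0, h0]) (hne _)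
  refine IsTheta.trans (IsTheta.of_norm_eventuallyEq_norm ?_) this
  filter_upwards [hA] with x hx
  have : g (x, Y x) = ((g (x, Y x)).1, 0) := Prod.ext rfl hx
  rw [this, Prod.norm_def]; simp

lemma norm_prod_le {s : Multiset ℂ} {F : ℂ → ℂ} {C : ℝ} {d : ℕ} (hC : 1 ≤ C) (hd : s.card ≤ d)
    (h : ∀ y ∈ s, ‖F y‖ ≤ C) : ‖(s.map F).prod‖ ≤ C ^ d := by
  refine le_trans ?_ (pow_le_pow_right₀ hC hd)
  clear hd
  induction s using Multiset.induction_on with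
  | empty => simp
  | cons a s ih =>
    simp only [Multiset.map_cons, Multiset.prod_cons, norm_mul, Multiset.card_cons, pow_succ']
    exact mul_le_mul (h a (by simp)) (ih fun y hy => h y (by simp [hy])) (norm_nonneg _)
      (by linarith)

lemma le_norm_prod {s : Multiset ℂ} {F : ℂ → ℂ} {c : ℝ} {d : ℕ} (hc : 0 ≤ c) (hc1 : c ≤ 1)
    (hd : s.card ≤ d) (h : ∀ y ∈ s, c ≤ ‖F y‖) : c ^ d ≤ ‖(s.map F).prod‖ := by
  refine le_trans (pow_le_pow_of_le_one hc hc1 hd) ?_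
  clear hd
  induction s using Multiset.induction_on with
  | empty => simp
  | cons a s ih =>
    simp only [Multiset.map_cons, Multiset.prod_cons, norm_mul, Multiset.card_cons, pow_succ']
    exact mul_le_mul (h a (by simp)) (ih fun y hy => h y (by simp [hy])) (by positivity)
      (norm_nonneg _)

lemma local_res {g : ℂ × ℂ → ℂ × ℂ} {a b : ℝ} (H : Good g a b) {x0 : ℂ}
    (hx0 : x0 ∈ ball (0 : ℂ) a) (T : Finset ℂ)
    (hT : ∀ y ∈ T, y ∈ ball (0 : ℂ) b ∧ g (x0, y) = 0 ∧ Function.Bijective (fderiv ℂ g (x0, y)) ∧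
      (fderiv ℂ g (x0, y) (0, 1)).2 ≠ 0) :
    res g b =O[𝓝 x0] (fun x => (x - x0) ^ T.card) ∧
    ((∀ y ∈ ball (0 : ℂ) b, g (x0, y) = 0 → y ∈ T) →
      (fun x => (x - x0) ^ T.card) =O[𝓝 x0] res g b) := by
  have hx0' := ball_subset_closedBall hx0
  have hanT : ∀ y ∈ T, AnalyticAt ℂ g (x0, y) := fun y hy =>
    H.an x0 hx0' y (ball_subset_closedBall (hT y hy).1)
  choose! Y hY1 hY2 hY3 using fun y (hy : y ∈ T) =>
    branch (hanT y hy) (hT y hy).2.1 (hT y hy).2.2.1 (hT y hy).2.2.2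
  have hpair : ∀ y ∈ T, Tendsto (fun x => (x, Y y x)) (𝓝 x0) (𝓝 (x0, y)) := fun y hy =>
    tendsto_id.prodMk_nhds (hY1 y hy)
  -- basic eventual properties
  have e1 : ∀ᶠ x in 𝓝 x0, x ∈ ball (0 : ℂ) a := isOpen_ball.mem_nhds hx0
  have e2 : ∀ᶠ x in 𝓝 x0, ∀ y ∈ T, Y y x ∈ ball (0 : ℂ) b :=
    (Finset.eventually_all T).2 fun y hy =>
      (hY1 y hy).eventually (isOpen_ball.mem_nhds (hT y hy).1)
  have e3 : ∀ᶠ x in 𝓝 x0, ∀ y ∈ T, (g (x, Y y x)).2 = 0 :=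
    (Finset.eventually_all T).2 fun y hy => by
      filter_upwards [(hpair y hy).eventually (hY2 y hy)] with x hx
      exact hx.2 rfl
  have e4 : ∀ᶠ x in 𝓝 x0, ∀ y ∈ T, ∀ y' ∈ T, y ≠ y' → Y y x ≠ Y y' x :=
    (Finset.eventually_all T).2 fun y hy => (Finset.eventually_all T).2 fun y' hy' => by
      by_cases h : y = y'
      · simp [h]
      · filter_upwards [((hY1 y hy).prodMk_nhds (hY1 y' hy')).eventually
          (isClosed_diagonal.isOpen_compl.mem_nhds h)] with x hx _
        exact hx
  have e5 : ∀ᶠ x in 𝓝 x0, ∀ y ∈ T, deriv (fun z => (g (x, z)).2) (Y y x) ≠ 0 :=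
    (Finset.eventually_all T).2 fun y hy => by
      have A := an_snd (hanT y hy)
      have hc : ContinuousAt (fun p => fderiv ℂ (fun p => (g p).2) p (0, 1)) (x0, y) :=
        ContinuousAt.clm_apply A.fderiv.continuousAt continuousAt_const
      have h2 : fderiv ℂ (fun p => (g p).2) (x0, y) (0, 1) ≠ 0 := by
        have := ((hanT y hy).differentiableAt.hasFDerivAt.snd).fderiv
        rw [this]
        exact (hT y hy).2.2.2
      filter_upwards [(hpair y hy).eventually (hc.eventually_ne h2),
        (hpair y hy).eventually A.eventually_analyticAt] with x hx hx'
      rwa [deriv_sec2 (H := fun p => (g p).2) hx']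
  set d := (zs (fun y => (g (x0, y)).2) b).card with hd
  set R : ℂ → Multiset ℂ := fun x => zs (fun y => (g (x, y)).2) b - T.val.map (fun y => Y y x)
  have hle : ∀ᶠ x in 𝓝 x0, T.val.map (fun y => Y y x) ≤ zs (fun y => (g (x, y)).2) b := by
    filter_upwards [e1, e2, e3, e4] with x h1 h2 h3 h4
    rw [Multiset.le_iff_subset]
    · intro z hz
      obtain ⟨y, hy, rfl⟩ := Multiset.mem_map.1 hz
      exact ((H.isZS2 (ball_subset_closedBall h1)).mem_iff (ball_subset_closedBall (h2 y hy))).1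
        (h3 y hy)
    · refine Multiset.Nodup.map_on ?_ T.nodup
      intro y hy y' hy' heq
      by_contra hne
      exact h4 y hy y' hy' hne heq
  have hcard : ∀ᶠ x in 𝓝 x0, (R x).card ≤ d := by
    filter_upwards [e1] with x h1
    rw [hd, ← H.card_const (ball_subset_closedBall h1) hx0']
    exact Multiset.card_le_card (Multiset.sub_le_self _ _)
  have hres : res g b =ᶠ[𝓝 x0] fun x => (∏ y ∈ T, (g (x, Y y x)).1) *
      ((R x).map (fun y => (g (x, y)).1)).prod := by
    filter_upwards [hle] with x hx
    rw [res]
    conv_lhs => rw [← Multiset.add_sub_cancel hx]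
    rw [Multiset.map_add, Multiset.prod_add, Multiset.map_map, mul_comm]
    rfl
  have hprod : (fun x => ∏ y ∈ T, (g (x, Y y x)).1) =Θ[𝓝 x0] (fun x => (x - x0) ^ T.card) := by
    have := IsTheta.finsetProd (s := T) hY3
    simpa using this
  have hRb : ∀ᶠ x in 𝓝 x0, ∀ y ∈ R x, y ∈ ball (0 : ℂ) b ∧ (g (x, y)).2 = 0 := by
    filter_upwards [e1] with x h1 y hy
    have hz := H.isZS2 (ball_subset_closedBall h1)
    have hy' := Multiset.mem_of_le (Multiset.sub_le_self _ _) hy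
    exact ⟨hz.1 y hy', (hz.mem_iff (ball_subset_closedBall (hz.1 y hy'))).2 hy'⟩
  constructor
  · -- upper bound
    have hcont : ContinuousOn (fun p => (g p).1) (closedBall (0 : ℂ) a ×ˢ closedBall (0 : ℂ) b) :=
      fun p hp => (an_fst (H.an p.1 hp.1 p.2 hp.2)).continuousAt.continuousWithinAt
    obtain ⟨C, hC⟩ := ((isCompact_closedBall (0 : ℂ) a).prod
      (isCompact_closedBall (0 : ℂ) b)).exists_bound_of_continuousOn hcont
    have hR : (fun x => ((R x).map (fun y => (g (x, y)).1)).prod) =O[𝓝 x0] fun _ => (1 : ℂ) := by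
      refine IsBigO.of_bound ((max C 1) ^ d) ?_
      filter_upwards [e1, hcard, hRb] with x h1 h2 h3
      rw [norm_one, mul_one]
      refine norm_prod_le (le_max_right _ _) h2 fun y hy => (hC (x, y) ⟨?_, ?_⟩).trans
        (le_max_left _ _)
      · exact ball_subset_closedBall h1
      · exact ball_subset_closedBall (h3 y hy).1
    refine hres.trans_isBigO ?_
    simpa using hprod.1.mul hR
  · intro hall
    have key : ∀ᶠ q : ℂ × ℝ in 𝓝 (x0, 0), ∀ y ∈ closedBall (0 : ℂ) b,
        q.2 ≤ ‖(g (q.1, y)).1‖ ∨ (g (q.1, y)).2 ≠ 0 ∨ ∃ t ∈ T, Y t q.1 = y := by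
      refine (isCompact_closedBall (0 : ℂ) b).eventually_forall_of_forall_eventually fun y hy => ?_
      have hcg := (H.an x0 hx0' y hy).continuousAt
      have hT2 : Tendsto (fun q : (ℂ × ℝ) × ℂ => (q.1.1, q.2)) (𝓝 ((x0, 0), y)) (𝓝 (x0, y)) :=
        Continuous.tendsto (f := fun q : (ℂ × ℝ) × ℂ => (q.1.1, q.2)) (by fun_prop) _
      have hc2 : ContinuousAt (fun q : (ℂ × ℝ) × ℂ => g (q.1.1, q.2)) ((x0, 0), y) :=
        ContinuousAt.comp (f := fun q : (ℂ × ℝ) × ℂ => (q.1.1, q.2)) (g := g) hcg hT2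
      by_cases h2 : (g (x0, y)).2 = 0
      · by_cases h1 : (g (x0, y)).1 = 0
        · have hyb : y ∈ ball (0 : ℂ) b := by
            rcases eq_or_lt_of_le (mem_closedBall.1 hy) with h | h
            · exact absurd h2 (H.n2 x0 hx0' y h)
            · exact h
          have hyT := hall y hyb (Prod.ext h1 h2)
          filter_upwards [hT2.eventually (hY2 y hyT)] with q hq
          by_cases h : (g (q.1.1, q.2)).2 = 0
          · exact Or.inr (Or.inr ⟨y, hyT, hq.1 h⟩)
          · exact Or.inr (Or.inl h)
        · have hlt : (0 : ℝ) < ‖(g (x0, y)).1‖ := norm_pos_iff.2 h1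
          have := ContinuousAt.eventually_lt (f := fun q : (ℂ × ℝ) × ℂ => q.1.2)
            (g := fun q : (ℂ × ℝ) × ℂ => ‖(g (q.1.1, q.2)).1‖) (x₀ := ((x0, 0), y))
            (by fun_prop) hc2.fst.norm hlt
          filter_upwards [this] with q hq
          exact Or.inl hq.le
      · filter_upwards [hc2.snd.eventually_ne h2] with q hq
        exact Or.inr (Or.inl hq)
    rw [nhds_prod_eq] at key
    obtain ⟨P, hP, Q, hQ, hPQ⟩ := Filter.eventually_prod_iff.1 key
    obtain ⟨c, hc0, hc1, hcQ⟩ : ∃ c : ℝ, 0 < c ∧ c ≤ 1 ∧ Q c := by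
      have h1 : ∀ᶠ c in 𝓝[>] (0 : ℝ), Q c := nhdsWithin_le_nhds hQ
      have h2 : ∀ᶠ c in 𝓝[>] (0 : ℝ), c ≤ 1 :=
        nhdsWithin_le_nhds (Iic_mem_nhds (by norm_num))
      obtain ⟨c, ⟨h1, h2⟩, h3⟩ := ((h1.and h2).and self_mem_nhdsWithin).exists
      exact ⟨c, h3, h2, h1⟩
    have hR : (fun _ => (1 : ℂ)) =O[𝓝 x0] (fun x => ((R x).map (fun y => (g (x, y)).1)).prod) := by
      refine (isBigO_const_left_iff_pos_le_norm one_ne_zero).2 ⟨c ^ d, by positivity, ?_⟩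
      filter_upwards [e1, hcard, hRb, hP, hle, e2, e3, e5] with x h1 h2 h3 h4 h5 h6 h7 h8
      refine le_norm_prod hc0.le hc1 h2 fun y hy => ?_
      rcases hPQ h4 hcQ y (ball_subset_closedBall (h3 y hy).1) with h | h | ⟨t, ht, rfl⟩
      · exact h
      · exact absurd (h3 y hy).2 h
      · exfalso
        have c1 := (H.isZS2 (ball_subset_closedBall h1)).count_eq_one
          (ball_subset_closedBall (h6 t ht)) (h7 t ht) (h8 t ht)
        have c2 : 1 ≤ (T.val.map (fun y => Y y x)).count (Y t x) :=
          Multiset.one_le_count_iff_mem.2 (Multiset.mem_map_of_mem _ ht)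
        have c3 := Multiset.one_le_count_iff_mem.2 hy
        simp only [R, Multiset.count_sub] at c3
        omega
    refine IsBigO.trans_eventuallyEq ?_ hres.symm
    simpa using hprod.2.mul hR

/-- The shear of the target. -/
def shearL (c : ℂ) : ℂ × ℂ →L[ℂ] ℂ × ℂ :=
  (ContinuousLinearMap.fst ℂ ℂ ℂ).prod
    (ContinuousLinearMap.snd ℂ ℂ ℂ + c • ContinuousLinearMap.fst ℂ ℂ ℂ)

lemma shearL_apply (c : ℂ) (p : ℂ × ℂ) : shearL c p = (p.1, p.2 + c * p.1) := by
  simp [shearL]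

lemma shearL_bij (c : ℂ) : Function.Bijective (shearL c) := by
  refine Function.bijective_iff_has_inverse.2 ⟨shearL (-c), fun p => ?_, fun p => ?_⟩ <;>
  simp [shearL_apply]

lemma exists_shear {g : ℂ × ℂ → ℂ × ℂ} {a b : ℝ} (H : Good g a b) (F : Finset (ℂ × ℂ))
    (hF : ∀ p ∈ F, p.1 ∈ ball (0 : ℂ) a ∧ p.2 ∈ ball (0 : ℂ) b ∧
      Function.Bijective (fderiv ℂ g p)) :
    ∃ g', Good g' a b ∧ deg g' a b = deg g a b ∧ (∀ p, g' p = 0 ↔ g p = 0) ∧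
      ∀ p ∈ F, Function.Bijective (fderiv ℂ g' p) ∧ (fderiv ℂ g' p (0, 1)).2 ≠ 0 := by
  obtain ⟨η, hη, hst⟩ := deg_stable H
  have hcont : ContinuousOn (fun p => (g p).1) (closedBall (0 : ℂ) a ×ˢ closedBall (0 : ℂ) b) :=
    fun p hp => (an_fst (H.an p.1 hp.1 p.2 hp.2)).continuousAt.continuousWithinAt
  obtain ⟨C, hC⟩ := ((isCompact_closedBall (0 : ℂ) a).prod
    (isCompact_closedBall (0 : ℂ) b)).exists_bound_of_continuousOn hcont
  set B : Finset ℂ := F.image fun p =>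
    - (fderiv ℂ g p (0, 1)).2 / (fderiv ℂ g p (0, 1)).1 with hB
  obtain ⟨c, hcB, hc⟩ : ∃ c : ℂ, c ∉ B ∧ ‖c‖ * C < η := by
    have h1 : ∀ᶠ c in 𝓝[≠] (0 : ℂ), ‖c‖ * C < η := by
      refine nhdsWithin_le_nhds ?_
      have : Tendsto (fun c : ℂ => ‖c‖ * C) (𝓝 0) (𝓝 0) := by
        have : Continuous fun c : ℂ => ‖c‖ * C := by fun_prop
        simpa using this.tendsto 0
      exact this.eventually (Iio_mem_nhds hη)
    have h2 : ∀ᶠ c in 𝓝[≠] (0 : ℂ), c ∉ B := by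
      have : ((B : Set ℂ) \ {0})ᶜ ∈ 𝓝 (0 : ℂ) :=
        ((B.finite_toSet.subset diff_subset).isClosed.isOpen_compl).mem_nhds (by simp)
      filter_upwards [nhdsWithin_le_nhds this, self_mem_nhdsWithin] with c h h' hcB
      exact h ⟨hcB, h'⟩
    obtain ⟨c, h⟩ := (h1.and h2).exists
    exact ⟨c, h.2, h.1⟩
  refine ⟨fun p => shearL c (g p), ?_⟩
  obtain ⟨hG, hdeg⟩ := hst (fun p => shearL c (g p))
    (fun x hx y hy => ((shearL c).analyticAt _).comp (H.an x hx y hy)) (by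
      intro x hx y hy
      have : shearL c (g (x, y)) - g (x, y) = (0, c * (g (x, y)).1) := by
        rw [shearL_apply]; ext <;> simp
      rw [this, Prod.norm_def]
      have := hC (x, y) ⟨hx, hy⟩
      simp only [norm_zero, norm_mul]
      rw [max_eq_right (by positivity)]
      exact lt_of_le_of_lt (mul_le_mul_of_nonneg_left this (norm_nonneg _)) hc)
  refine ⟨hG, hdeg, fun p => ?_, fun p hp => ?_⟩
  · constructor
    · intro h; exact (shearL_bij c).1 (h.trans (map_zero _).symm)
    · intro h; simp [h]
  · have hd : fderiv ℂ (fun p => shearL c (g p)) p = shearL c ∘L fderiv ℂ g p :=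
      ((shearL c).hasFDerivAt.comp p (H.an p.1 (ball_subset_closedBall (hF p hp).1) p.2
        (ball_subset_closedBall (hF p hp).2.1)).differentiableAt.hasFDerivAt).fderiv
    rw [hd]
    refine ⟨(shearL_bij c).comp (hF p hp).2.2, ?_⟩
    rw [ContinuousLinearMap.comp_apply, shearL_apply]
    set D := fderiv ℂ g p (0, 1) with hD
    by_cases h1 : D.1 = 0
    · simp only [h1, mul_zero, add_zero]
      intro h2
      have : D = 0 := Prod.ext h1 h2
      have := (hF p hp).2.2.1 (this.trans (map_zero (fderiv ℂ g p)).symm)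
      simpa using congrArg Prod.snd this
    · intro h2
      apply hcB
      refine Finset.mem_image.2 ⟨p, hp, ?_⟩
      rw [← hD]
      simp only at h2
      field_simp
      linear_combination -h2

/-- The fibre of `F` over `x`. -/
def fib (F : Finset (ℂ × ℂ)) (x : ℂ) : Finset ℂ := (F.filter fun p => p.1 = x).image Prod.snd

lemma mem_fib {F : Finset (ℂ × ℂ)} {x y : ℂ} : y ∈ fib F x ↔ (x, y) ∈ F := by
  simp [fib]

lemma card_fib (F : Finset (ℂ × ℂ)) : F.card = ∑ x ∈ F.image Prod.fst, (fib F x).card := by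
  rw [Finset.card_eq_sum_card_fiberwise (f := Prod.fst) (t := F.image Prod.fst)
    (fun p hp => Finset.mem_image_of_mem _ hp)]
  refine Finset.sum_congr rfl fun x _ => ?_
  rw [fib, Finset.card_image_of_injOn]
  intro p hp q hq h
  simp only [Finset.coe_filter, mem_setOf_eq] at hp hq
  exact Prod.ext (hp.2.trans hq.2.symm) h

lemma sum_count_le (s : Multiset ℂ) (t : Finset ℂ) : ∑ x ∈ t, s.count x ≤ s.card := by
  have := Multiset.sum_count_eq_card (s := t ∪ s.toFinset) (m := s) (by simp +contextual)
  rw [← this]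
  exact Finset.sum_le_sum_of_subset Finset.subset_union_left

lemma deg_le {g : ℂ × ℂ → ℂ × ℂ} {a b : ℝ} (H : Good g a b) (F : Finset (ℂ × ℂ))
    (hF : ∀ p ∈ F, p.1 ∈ ball (0 : ℂ) a ∧ p.2 ∈ ball (0 : ℂ) b ∧ g p = 0 ∧
      Function.Bijective (fderiv ℂ g p)) : F.card ≤ deg g a b := by
  obtain ⟨g', H', hdeg, hz, hb⟩ := exists_shear H F
    fun p hp => ⟨(hF p hp).1, (hF p hp).2.1, (hF p hp).2.2.2⟩
  rw [← hdeg, card_fib]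
  refine le_trans (Finset.sum_le_sum fun x hx => ?_) (sum_count_le _ (F.image Prod.fst))
  obtain ⟨p, hp, rfl⟩ := Finset.mem_image.1 hx
  refine H'.isZS_res.le_count (ball_subset_closedBall (hF p hp).1)
    ((local_res H' (hF p hp).1 (fib F p.1) ?_).1.mono nhdsWithin_le_nhds)
  intro y hy
  have hy' := mem_fib.1 hy
  exact ⟨(hF _ hy').2.1, (hz _).2 (hF _ hy').2.2.1, hb _ hy'⟩

lemma deg_eq {g : ℂ × ℂ → ℂ × ℂ} {a b : ℝ} (H : Good g a b)
    (hreg : ∀ p : ℂ × ℂ, p.1 ∈ ball (0 : ℂ) a → p.2 ∈ ball (0 : ℂ) b → g p = 0 →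
      Function.Bijective (fderiv ℂ g p)) :
    {p : ℂ × ℂ | p.1 ∈ ball (0 : ℂ) a ∧ p.2 ∈ ball (0 : ℂ) b ∧ g p = 0}.Finite ∧
    {p : ℂ × ℂ | p.1 ∈ ball (0 : ℂ) a ∧ p.2 ∈ ball (0 : ℂ) b ∧ g p = 0}.ncard = deg g a b := by
  set Z := {p : ℂ × ℂ | p.1 ∈ ball (0 : ℂ) a ∧ p.2 ∈ ball (0 : ℂ) b ∧ g p = 0} with hZ
  have hfin : Z.Finite := by
    by_contra hinf
    obtain ⟨t, ht, hc⟩ := (show Z.Infinite from hinf).exists_subset_card_eq (deg g a b + 1)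
    have := deg_le H t fun p hp => ⟨(ht hp).1, (ht hp).2.1, (ht hp).2.2,
      hreg p (ht hp).1 (ht hp).2.1 (ht hp).2.2⟩
    omega
  refine ⟨hfin, ?_⟩
  set F := hfin.toFinset with hFdef
  have hFm : ∀ p, p ∈ F ↔ p.1 ∈ ball (0 : ℂ) a ∧ p.2 ∈ ball (0 : ℂ) b ∧ g p = 0 := by
    intro p; simp only [hFdef, Set.Finite.mem_toFinset]; rfl
  rw [Set.ncard_eq_toFinset_card _ hfin]
  change F.card = _
  obtain ⟨g', H', hdeg, hz, hb⟩ := exists_shear H F fun p hp => by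
    have := (hFm p).1 hp
    exact ⟨this.1, this.2.1, hreg p this.1 this.2.1 this.2.2⟩
  rw [← hdeg, card_fib, deg, ← Multiset.sum_count_eq_card (s := F.image Prod.fst)]
  · refine Finset.sum_congr rfl fun x hx => ?_
    obtain ⟨p, hp, rfl⟩ := Finset.mem_image.1 hx
    have hp' := (hFm p).1 hp
    have hl := local_res H' hp'.1 (fib F p.1) (by
      intro y hy
      have hy' := mem_fib.1 hy
      exact ⟨((hFm _).1 hy').2.1, (hz _).2 ((hFm _).1 hy').2.2, hb _ hy'⟩)
    refine le_antisymm (H'.isZS_res.le_count (ball_subset_closedBall hp'.1)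
      (hl.1.mono nhdsWithin_le_nhds)) (H'.isZS_res.count_le (ball_subset_closedBall hp'.1)
      ((hl.2 ?_).mono nhdsWithin_le_nhds))
    intro y hy h0
    exact mem_fib.2 ((hFm _).2 ⟨hp'.1, hy, (hz _).1 h0⟩)
  · intro x hx
    have hxa := H'.isZS_res.1 x hx
    have := (H'.isZS_res.mem_iff (ball_subset_closedBall hxa)).2 hx
    obtain ⟨y, hy, h0⟩ := (H'.res_eq_zero (ball_subset_closedBall hxa)).1 this
    exact Finset.mem_image.2 ⟨(x, y), (hFm _).2 ⟨hxa, hy, (hz _).1 h0⟩, rfl⟩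

lemma zs_card_of_theta {φ : ℂ → ℂ} {b : ℝ} {s : Multiset ℂ} (hb : 0 < b) (h : IsZS φ b s) {n : ℕ}
    (hz : ∀ z ∈ closedBall (0 : ℂ) b, φ z = 0 → z = 0)
    (h1 : φ =O[𝓝[≠] 0] (fun w => w ^ n)) (h2 : (fun w => w ^ n) =O[𝓝[≠] 0] φ) : s.card = n := by
  have h0 : (0 : ℂ) ∈ closedBall (0 : ℂ) b := by simp [hb.le]
  have hc : s.count 0 = n := le_antisymm (h.count_le h0 (by simpa using h2))
    (h.le_count h0 (by simpa using h1))
  rw [← hc, eq_comm, Multiset.count_eq_card]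
  intro z hz'
  have hzb := ball_subset_closedBall (h.1 z hz')
  exact (hz z hzb ((h.mem_iff hzb).2 hz')).symm

lemma deg_model {h : ℂ × ℂ → ℂ × ℂ} {U V γ δ : ℂ × ℂ → ℂ} {m e q : ℕ}
    (han : ∀ p, AnalyticAt ℂ h p) (hh : ∀ p, h p = (p.1 * U p, p.2 * V p))
    (hV : ∀ p, V p = p.1 ^ 2 * γ p + p.2 ^ m * δ p) (hγ : ContinuousAt γ 0)
    (hδ : ContinuousAt δ 0) (hδ0 : δ 0 ≠ 0) (hVc : Continuous V)
    (hV0 : ∀ᶠ p : ℂ × ℂ in 𝓝 0, p.1 ≠ 0 → V (p.1, 0) ≠ 0)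
    (hU0 : (fun x => U (x, 0)) =Θ[𝓝 0] (fun x => x ^ e))
    (hmq : m = 0 → q = 0)
    (hU2 : ∀ᶠ p : ℂ × ℂ in 𝓝 0, p.1 ≠ 0 → V p = 0 → U p ≠ 0)
    {c C : ℝ} (hc : 0 < c) (hC : 0 < C)
    (hU1 : ∀ᶠ p : ℂ × ℂ in 𝓝 0, p.1 ≠ 0 → V p = 0 →
      c * ‖p.1‖ ^ q ≤ ‖U p‖ ^ m ∧ ‖U p‖ ^ m ≤ C * ‖p.1‖ ^ q)
    {r : ℝ} (hr : 0 < r) :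
    ∃ a b : ℝ, a < r ∧ b < r ∧ Good h a b ∧ deg h a b = 1 + e + m + q ∧
      ∀ x ∈ closedBall (0 : ℂ) a, ∀ y ∈ closedBall (0 : ℂ) b, h (x, y) = 0 → x = 0 ∧ y = 0 := by
  set d0 := ‖δ 0‖ / 2 with hd0
  have hd0p : 0 < d0 := by have := norm_pos_iff.2 hδ0; positivity
  set G := ‖γ 0‖ + 1 with hG
  have eδ : ∀ᶠ p : ℂ × ℂ in 𝓝 0, d0 ≤ ‖δ p‖ :=
    Filter.Tendsto.eventually_const_le (u := d0) (v := ‖δ 0‖) (by linarith) hδ.norm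
  have eγ : ∀ᶠ p : ℂ × ℂ in 𝓝 0, ‖γ p‖ ≤ G :=
    Filter.Tendsto.eventually_le_const (u := G) (v := ‖γ 0‖) (by linarith) hγ.norm
  obtain ⟨c0, hc0, hcU⟩ := hU0.2.exists_pos
  obtain ⟨C0, hC0, hCU⟩ := hU0.1.exists_pos
  have hfst : Tendsto (fun p : ℂ × ℂ => p.1) (𝓝 0) (𝓝 0) := continuous_fst.tendsto _
  have eU0 := hfst.eventually (hcU.bound.and hCU.bound)
  obtain ⟨ρ, hρ, hball⟩ := Metric.eventually_nhds_iff_ball.1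
    ((((eδ.and eγ).and (hV0.and eU0)).and hU2).and hU1)
  set b := min ρ r / 2 with hb
  have hbp : 0 < b := by have := lt_min hρ hr; positivity
  have hbρ : b < ρ := by have := min_le_left ρ r; have := lt_min hρ hr; simp only [hb]; linarith
  have hbr : b < r := by have := min_le_right ρ r; have := lt_min hρ hr; simp only [hb]; linarith
  have hGp : 0 < G := by positivity
  obtain ⟨a, hap, hab, hasq⟩ : ∃ a : ℝ, 0 < a ∧ a ≤ b ∧ a ^ 2 * G < b ^ m * d0 := by
    have h1 : ∀ᶠ a in 𝓝[>] (0 : ℝ), a ^ 2 * G < b ^ m * d0 := by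
      refine nhdsWithin_le_nhds ?_
      have : Tendsto (fun a : ℝ => a ^ 2 * G) (𝓝 0) (𝓝 0) := by
        have : Continuous fun a : ℝ => a ^ 2 * G := by fun_prop
        simpa using this.tendsto 0
      exact this.eventually (Iio_mem_nhds (by positivity))
    have h2 : ∀ᶠ a in 𝓝[>] (0 : ℝ), a ≤ b := nhdsWithin_le_nhds (Iic_mem_nhds hbp)
    obtain ⟨a, ⟨h1, h2⟩, h3⟩ := ((h1.and h2).and self_mem_nhdsWithin).exists
    exact ⟨a, h3, h2, h1⟩
  have hmem : ∀ x ∈ closedBall (0 : ℂ) a, ∀ y ∈ closedBall (0 : ℂ) b,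
      ((x, y) : ℂ × ℂ) ∈ ball (0 : ℂ × ℂ) ρ := by
    intro x hx y hy
    rw [mem_closedBall_zero_iff] at hx hy
    rw [mem_ball_zero_iff, Prod.norm_def]
    exact max_lt (by simp only; linarith) (by simp only; linarith)
  have pδ := fun x hx y hy => (hball _ (hmem x hx y hy)).1.1.1.1
  have pγ := fun x hx y hy => (hball _ (hmem x hx y hy)).1.1.1.2
  have pV0 := fun x hx y hy => (hball _ (hmem x hx y hy)).1.1.2.1
  have pU0 := fun x hx y hy => (hball _ (hmem x hx y hy)).1.1.2.2
  have pU2 := fun x hx y hy => (hball _ (hmem x hx y hy)).1.2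
  have pU1 := fun x hx y hy => (hball _ (hmem x hx y hy)).2
  simp only at pδ pγ pV0 pU0 pU2 pU1
  have h0b : (0 : ℂ) ∈ closedBall (0 : ℂ) b := by simp [hbp.le]
  have h0a : (0 : ℂ) ∈ closedBall (0 : ℂ) a := by simp [hap.le]
  have hUx0 : ∀ x ∈ closedBall (0 : ℂ) a, x ≠ 0 → U (x, 0) ≠ 0 := by
    intro x hx hx0 h
    have := (pU0 x hx 0 h0b).1
    rw [h, norm_zero, mul_zero] at this
    exact pow_ne_zero e hx0 (norm_le_zero_iff.1 this)
  have hnz : ∀ x ∈ closedBall (0 : ℂ) a, x ≠ 0 → ∀ y ∈ closedBall (0 : ℂ) b, h (x, y) ≠ 0 := by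
    intro x hx hx0 y hy h0
    rw [hh] at h0
    have h1 : x * U (x, y) = 0 := congrArg Prod.fst h0
    have h2 : y * V (x, y) = 0 := congrArg Prod.snd h0
    have hUz := (mul_eq_zero.1 h1).resolve_left hx0
    rcases mul_eq_zero.1 h2 with hy0 | hVz
    · rw [hy0] at hUz
      exact hUx0 x hx hx0 hUz
    · exact pU2 x hx y hy hx0 hVz hUz
  have hx0z : ∀ y ∈ closedBall (0 : ℂ) b, (h (0, y)).2 = 0 → y = 0 := by
    intro y hy h0
    rw [hh] at h0
    have h2 : y * V (0, y) = 0 := h0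
    rcases mul_eq_zero.1 h2 with hy0 | hVz
    · exact hy0
    · rw [hV] at hVz
      have hd := pδ 0 h0a y hy
      have hdn : δ (0, y) ≠ 0 := by intro h; rw [h, norm_zero] at hd; linarith
      have : y ^ m = 0 := by simpa [hdn] using hVz
      exact eq_zero_of_pow_eq_zero this
  have hzero : ∀ x ∈ closedBall (0 : ℂ) a, ∀ y ∈ closedBall (0 : ℂ) b, h (x, y) = 0 →
      x = 0 ∧ y = 0 := by
    intro x hx y hy h0
    by_cases hx0 : x = 0
    · subst hx0
      exact ⟨rfl, hx0z y hy (by rw [h0]; rfl)⟩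
    · exact absurd h0 (hnz x hx hx0 y hy)
  have hGood : Good h a b := by
    refine ⟨hap, hbp, fun x _ y _ => han _, ?_, ?_⟩
    · intro x hx y hy h0
      have hyb : ‖y‖ = b := by simpa using hy
      rw [hh] at h0
      have hy0 : y ≠ 0 := by intro h; rw [h, norm_zero] at hyb; linarith
      have hVz := (mul_eq_zero.1 (show y * V (x, y) = 0 from h0)).resolve_left hy0
      rw [hV] at hVz
      have e1 : x ^ 2 * γ (x, y) = - (y ^ m * δ (x, y)) := eq_neg_of_add_eq_zero_left hVz
      have e2 := congrArg norm e1
      rw [norm_neg, norm_mul, norm_mul, norm_pow, norm_pow, hyb] at e2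
      have hy' := sphere_subset_closedBall hy
      have i1 := pδ x hx y hy'
      have i2 := pγ x hx y hy'
      have i3 : ‖x‖ ≤ a := by simpa using hx
      have i4 : ‖x‖ ^ 2 * ‖γ (x, y)‖ ≤ a ^ 2 * G := by gcongr
      have i5 : b ^ m * d0 ≤ b ^ m * ‖δ (x, y)‖ := by gcongr
      linarith
    · intro x hx y hy
      have : x ≠ 0 := by
        intro h; rw [h] at hx; simp at hx; linarith
      exact hnz x (sphere_subset_closedBall hx) this y hy
  refine ⟨a, b, lt_of_le_of_lt hab hbr, hbr, hGood, ?_, hzero⟩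
  -- number of roots in y
  have hcard0 : (zs (fun y => (h (0, y)).2) b).card = m + 1 := by
    have hδy : ContinuousAt (fun y : ℂ => δ (0, y)) 0 :=
      ContinuousAt.comp (f := fun y : ℂ => ((0 : ℂ), y)) (g := δ) hδ (by fun_prop)
    have hth := continuousAt_isTheta_one hδy hδ0
    have h1 : (fun y => (h (0, y)).2) =Θ[𝓝 0] (fun y => y ^ (m + 1)) := by
      have : (fun y => (h (0, y)).2) = fun y => y ^ (m + 1) * δ (0, y) := by
        funext y; rw [hh, hV]; simp; ring
      rw [this]
      simpa using (isTheta_refl (fun y : ℂ => y ^ (m + 1)) (𝓝 0)).mul hth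
    exact zs_card_of_theta hbp (hGood.isZS2 h0a) hx0z (h1.1.mono nhdsWithin_le_nhds)
      (h1.2.mono nhdsWithin_le_nhds)
  -- description of the resultant
  have hres : ∀ x ∈ closedBall (0 : ℂ) a, x ≠ 0 → ∃ R : Multiset ℂ, R.card = m ∧
      (∀ y ∈ R, y ∈ closedBall (0 : ℂ) b ∧ V (x, y) = 0) ∧
      res h b x = x * U (x, 0) * (R.map fun y => x * U (x, y)).prod := by
    intro x hx hx0
    have hz := hGood.isZS2 hx
    have hVx := pV0 x hx 0 h0b hx0
    have hcnt : (zs (fun y => (h (x, y)).2) b).count 0 ≤ 1 := by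
      refine hz.count_le h0b (n := 1) ?_
      have hVy : ContinuousAt (fun y : ℂ => V (x, y)) 0 := by fun_prop
      have h1 : (fun y => (h (x, y)).2) =Θ[𝓝 0] (fun y => y * 1) := by
        have : (fun y => (h (x, y)).2) = fun y => y * V (x, y) := by
          funext y; rw [hh]
        rw [this]
        exact (isTheta_refl (fun y : ℂ => y) (𝓝 0)).mul (continuousAt_isTheta_one hVy hVx)
      simpa using h1.2.mono nhdsWithin_le_nhds
    have h0m : (0 : ℂ) ∈ zs (fun y => (h (x, y)).2) b :=
      (hz.mem_iff h0b).1 (by rw [hh]; simp)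
    obtain ⟨R, hR⟩ := Multiset.exists_cons_of_mem h0m
    refine ⟨R, ?_, ?_, ?_⟩
    · have := hGood.card_const hx h0a
      rw [hcard0, hR, Multiset.card_cons] at this
      omega
    · intro y hy
      have hym : y ∈ zs (fun y => (h (x, y)).2) b := by rw [hR]; simp [hy]
      have hyb := ball_subset_closedBall (hz.1 y hym)
      refine ⟨hyb, ?_⟩
      have h2 := (hz.mem_iff hyb).2 hym
      rw [hh] at h2
      refine (mul_eq_zero.1 (show y * V (x, y) = 0 from h2)).resolve_left ?_
      rintro rfl
      rw [hR, Multiset.count_cons_self] at hcnt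
      have := Multiset.one_le_count_iff_mem.2 hy
      omega
    · rw [res, hR, Multiset.map_cons, Multiset.prod_cons]
      simp only [hh]
  have hnorm : ∀ x ∈ closedBall (0 : ℂ) a, x ≠ 0 →
      ‖res h b x‖ ≤ C0 * max C 1 * ‖x‖ ^ (1 + e + m + q) ∧
      ‖x‖ ^ (1 + e + m + q) ≤ c0 * (min c 1)⁻¹ * ‖res h b x‖ := by
    intro x hx hx0
    obtain ⟨R, hRc, hRV, hRr⟩ := hres x hx hx0
    have hprod : (R.map fun y => x * U (x, y)).prod = x ^ m * (R.map fun y => U (x, y)).prod := by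
      rw [Multiset.prod_map_mul, Multiset.map_const', Multiset.prod_replicate, hRc]
    have hxp : 0 < ‖x‖ := norm_pos_iff.2 hx0
    have hP : min c 1 * ‖x‖ ^ q ≤ ‖(R.map fun y => U (x, y)).prod‖ ∧
        ‖(R.map fun y => U (x, y)).prod‖ ≤ max C 1 * ‖x‖ ^ q := by
      by_cases hm : m = 0
      · rw [hm, Multiset.card_eq_zero] at hRc
        simp [hRc, hmq hm]
      · have hgen : ∀ R : Multiset ℂ, (∀ y ∈ R, y ∈ closedBall (0 : ℂ) b ∧ V (x, y) = 0) →
            (c * ‖x‖ ^ q) ^ R.card ≤ ‖(R.map fun y => U (x, y)).prod‖ ^ m ∧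
            ‖(R.map fun y => U (x, y)).prod‖ ^ m ≤ (C * ‖x‖ ^ q) ^ R.card := by
          intro R
          induction R using Multiset.induction_on with
          | empty => intro _; simp
          | cons y R ih =>
            intro hy
            have i1 := ih fun z hz => hy z (by simp [hz])
            have i2 := hy y (by simp)
            have i3 := pU1 x hx y i2.1 hx0 i2.2
            simp only [Multiset.map_cons, Multiset.prod_cons, norm_mul, mul_pow _ _ m,
              Multiset.card_cons, pow_succ' _ (Multiset.card R)]
            constructor
            · exact mul_le_mul i3.1 i1.1 (by positivity) (by positivity)
            · exact mul_le_mul i3.2 i1.2 (by positivity) (by positivity)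
        obtain ⟨i1, i2⟩ := hgen R hRV
        rw [hRc] at i1 i2
        have j1 := (pow_le_pow_iff_left₀ (by positivity) (norm_nonneg _) hm).1 i1
        have j2 := (pow_le_pow_iff_left₀ (norm_nonneg _) (by positivity) hm).1 i2
        constructor
        · refine le_trans ?_ j1
          gcongr; exact min_le_left _ _
        · refine j2.trans ?_
          gcongr; exact le_max_left _ _
    have hU := pU0 x hx 0 h0b
    rw [norm_pow] at hU
    rw [hRr, hprod]
    simp only [norm_mul, norm_pow]
    have hmin : 0 < min c 1 := lt_min hc one_pos
    constructor
    · calc ‖x‖ * ‖U (x, 0)‖ * (‖x‖ ^ m * ‖(R.map fun y => U (x, y)).prod‖)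
          ≤ ‖x‖ * (C0 * ‖x‖ ^ e) * (‖x‖ ^ m * (max C 1 * ‖x‖ ^ q)) := by
            gcongr
            · exact hU.2
            · exact hP.2
        _ = C0 * max C 1 * ‖x‖ ^ (1 + e + m + q) := by ring
    · have k1 : ‖x‖ ^ q ≤ (min c 1)⁻¹ * ‖(R.map fun y => U (x, y)).prod‖ := by
        rw [inv_mul_eq_div, le_div_iff₀ hmin, mul_comm]; exact hP.1
      calc ‖x‖ ^ (1 + e + m + q) = ‖x‖ * ‖x‖ ^ e * (‖x‖ ^ m * ‖x‖ ^ q) := by ring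
        _ ≤ ‖x‖ * (c0 * ‖U (x, 0)‖) *
            (‖x‖ ^ m * ((min c 1)⁻¹ * ‖(R.map fun y => U (x, y)).prod‖)) := by
            gcongr
            exact hU.1
        _ = _ := by ring
  have hev : ∀ᶠ x in 𝓝[≠] (0 : ℂ), x ∈ closedBall (0 : ℂ) a ∧ x ≠ 0 := by
    filter_upwards [nhdsWithin_le_nhds (closedBall_mem_nhds (0 : ℂ) hap), self_mem_nhdsWithin]
      with x h1 h2 using ⟨h1, h2⟩
  refine zs_card_of_theta hap hGood.isZS_res ?_ ?_ ?_
  · intro x hx h0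
    obtain ⟨y, hy, h1⟩ := (hGood.res_eq_zero hx).1 h0
    exact (hzero x hx y (ball_subset_closedBall hy) h1).1
  · refine IsBigO.of_bound (C0 * max C 1) ?_
    filter_upwards [hev] with x hx
    rw [norm_pow]; exact (hnorm x hx.1 hx.2).1
  · refine IsBigO.of_bound (c0 * (min c 1)⁻¹) ?_
    filter_upwards [hev] with x hx
    rw [norm_pow]; exact (hnorm x hx.1 hx.2).2

/-- The example map, on `ℂ × ℂ`. -/
def Fc (k : ℕ) (ω : ℂ) (p : ℂ × ℂ) : ℂ × ℂ :=
  (-p.1 + p.1 ^ (2 * k + 1) + p.1 * p.2 ^ 3, ω * p.2 + p.1 ^ 2 * p.2 + p.2 ^ (3 * k + 1))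

/-- `h` has total multiplicity `D` on arbitrarily small admissible bidiscs. -/
def LocDeg (h : ℂ × ℂ → ℂ × ℂ) (D : ℕ) : Prop :=
  ∀ r > 0, ∃ a b : ℝ, a < r ∧ b < r ∧ Good h a b ∧ deg h a b = D ∧
    ∀ x ∈ closedBall (0 : ℂ) a, ∀ y ∈ closedBall (0 : ℂ) b, h (x, y) = 0 → x = 0 ∧ y = 0

lemma Fc_iter {k : ℕ} (hk : k ≠ 0) {ω : ℂ} (hω : ω ^ 3 = 1) (j : ℕ) :
    ∃ α β γ δ : ℂ × ℂ → ℂ, Continuous α ∧ Continuous β ∧ Continuous γ ∧ Continuous δ ∧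
      α 0 = -j * (-1) ^ j ∧ β 0 = -j * (-1) ^ j ∧ ω * γ 0 = j * ω ^ j ∧ ω * δ 0 = j * ω ^ j ∧
      ∀ p : ℂ × ℂ, (Fc k ω)^[j] p =
        (p.1 * ((-1) ^ j + p.1 ^ (2 * k) * α p + p.2 ^ 3 * β p),
         p.2 * (ω ^ j + p.1 ^ 2 * γ p + p.2 ^ (3 * k) * δ p)) := by
  induction j with
  | zero => exact ⟨0, 0, 0, 0, continuous_const, continuous_const, continuous_const,
      continuous_const, by simp, by simp, by simp, by simp, fun p => by simp⟩
  | succ j ih =>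
    obtain ⟨α, β, γ, δ, hα, hβ, hγ, hδ, a0, b0, c0, d0, hF⟩ := ih
    set A : ℂ × ℂ → ℂ := fun p => (-1) ^ j + p.1 ^ (2 * k) * α p + p.2 ^ 3 * β p with hA
    set B : ℂ × ℂ → ℂ := fun p => ω ^ j + p.1 ^ 2 * γ p + p.2 ^ (3 * k) * δ p with hB
    have hAc : Continuous A := by fun_prop
    have hBc : Continuous B := by fun_prop
    have hA0 : A 0 = (-1) ^ j := by simp [hA, hk]
    have hB0 : B 0 = ω ^ j := by simp [hB, hk]
    have hA2 : ((-1 : ℂ) ^ j) ^ (2 * k + 1) = (-1) ^ j := by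
      have h2 : ((-1 : ℂ) ^ j) ^ 2 = 1 := by rw [← pow_mul, mul_comm, pow_mul]; simp
      rw [pow_succ, pow_mul, h2, one_pow, one_mul]
    have hω3 : (ω ^ j) ^ 3 = 1 := by rw [← pow_mul, mul_comm, pow_mul, hω, one_pow]
    refine ⟨fun p => -α p + A p ^ (2 * k + 1), fun p => -β p + A p * B p ^ 3,
      fun p => ω * γ p + A p ^ 2 * B p, fun p => ω * δ p + B p ^ (3 * k + 1), by fun_prop,
      by fun_prop, by fun_prop, by fun_prop, ?_, ?_, ?_, ?_, ?_⟩
    · simp only [hA0, a0, hA2]; push_cast; ring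
    · simp only [hA0, b0, hB0, hω3]; push_cast; ring
    · have hA3 : ((-1 : ℂ) ^ j) ^ 2 = 1 := by rw [← pow_mul, mul_comm, pow_mul]; simp
      simp only [hA0, hB0, hA3]
      push_cast
      linear_combination ω * c0
    · simp only [hB0]
      rw [pow_succ, pow_mul, hω3, one_pow]
      push_cast
      linear_combination ω * d0
    · intro p
      rw [Function.iterate_succ_apply', hF]
      change Fc k ω (p.1 * A p, p.2 * B p) = _
      rw [Fc]
      refine Prod.ext ?_ ?_
      · simp only [mul_pow, pow_succ]
        have : A p = (-1) ^ j + p.1 ^ (2 * k) * α p + p.2 ^ 3 * β p := rfl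
        linear_combination (-p.1) * this
      · simp only [mul_pow, pow_succ]
        have : B p = ω ^ j + p.1 ^ 2 * γ p + p.2 ^ (3 * k) * δ p := rfl
        linear_combination (ω * p.2) * this

lemma Fc_analytic (k : ℕ) (ω : ℂ) (p : ℂ × ℂ) : AnalyticAt ℂ (Fc k ω) p := by
  have h1 : AnalyticAt ℂ (fun p : ℂ × ℂ => p.1) p := analyticAt_fst
  have h2 : AnalyticAt ℂ (fun p : ℂ × ℂ => p.2) p := analyticAt_snd
  refine AnalyticAt.prod ?_ ?_
  · exact ((h1.neg.add (h1.pow _)).add (h1.mul (h2.pow 3)))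
  · exact (((analyticAt_const (v := ω)).mul h2).add ((h1.pow 2).mul h2)).add (h2.pow _)

lemma Fc_iter_analytic (k : ℕ) (ω : ℂ) (j : ℕ) (p : ℂ × ℂ) :
    AnalyticAt ℂ (fun p => p - (Fc k ω)^[j] p) p := by
  refine analyticAt_id.sub ?_
  induction j generalizing p with
  | zero => exact analyticAt_id
  | succ j ih => exact (ih _).comp (Fc_analytic k ω p)

section
variable {k : ℕ} {ω : ℂ}

lemma theta_pow {α : ℂ × ℂ → ℂ} (hα : Continuous α) (h0 : α 0 ≠ 0) (e : ℕ) :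
    (fun x : ℂ => x ^ e * α (x, 0)) =Θ[𝓝 0] (fun x => x ^ e) := by
  have : ContinuousAt (fun x : ℂ => α (x, 0)) 0 := by fun_prop
  simpa using (isTheta_refl (fun x : ℂ => x ^ e) (𝓝 0)).mul (continuousAt_isTheta_one this h0)

lemma fst_snd_ev {α : ℂ × ℂ → ℂ} (hα : Continuous α) (h0 : α 0 ≠ 0) :
    ∀ᶠ p : ℂ × ℂ in 𝓝 0, α (p.1, 0) ≠ 0 := by
  have : ContinuousAt (fun p : ℂ × ℂ => α (p.1, 0)) 0 := by fun_prop
  exact this.eventually_ne h0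

lemma ev_ne {α : ℂ × ℂ → ℂ} (hα : Continuous α) (h0 : α 0 ≠ 0) :
    ∀ᶠ p : ℂ × ℂ in 𝓝 0, α p ≠ 0 := hα.continuousAt.eventually_ne h0

/-- Case where `V` does not vanish. -/
lemma locDeg_nv (hk : k ≠ 0) (hω : ω ^ 3 = 1) {M e : ℕ} (hM : ω ^ M ≠ 1)
    (he : e = 0 ∧ (-1 : ℂ) ^ M ≠ 1 ∨ e = 2 * k ∧ (-1 : ℂ) ^ M = 1 ∧ M ≠ 0) :
    LocDeg (fun p => p - (Fc k ω)^[M] p) (1 + e) := by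
  intro r hr
  obtain ⟨α, β, γ, δ, hα, hβ, hγ, hδ, a0, b0, c0, d0, hF⟩ := Fc_iter hk hω M
  have hV0 : (fun p : ℂ × ℂ => 1 - (ω ^ M + p.1 ^ 2 * γ p + p.2 ^ (3 * k) * δ p)) 0 ≠ 0 := by
    simpa [hk, sub_eq_zero] using Ne.symm hM
  have hVc : Continuous (fun p : ℂ × ℂ => 1 - (ω ^ M + p.1 ^ 2 * γ p + p.2 ^ (3 * k) * δ p)) := by
    fun_prop
  refine deg_model (U := fun p => 1 - ((-1) ^ M + p.1 ^ (2 * k) * α p + p.2 ^ 3 * β p))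
    (V := fun p => 1 - (ω ^ M + p.1 ^ 2 * γ p + p.2 ^ (3 * k) * δ p)) (γ := 0)
    (δ := fun p => 1 - (ω ^ M + p.1 ^ 2 * γ p + p.2 ^ (3 * k) * δ p)) (m := 0) (e := e) (q := 0)
    (c := 1) (C := 1) (Fc_iter_analytic k ω M) ?_ (by simp) continuousAt_const hVc.continuousAt hV0
    hVc ?_ ?_ (by simp) ?_ one_pos one_pos ?_ hr
  · intro p
    simp only [hF p]
    exact Prod.ext (by simp; ring) (by simp; ring)
  · filter_upwards [fst_snd_ev hVc hV0] with p hp _ using hp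
  · rcases he with ⟨rfl, h⟩ | ⟨rfl, h, hM0⟩
    · simp only [pow_zero]
      refine continuousAt_isTheta_one (by fun_prop) ?_
      simpa [hk, sub_eq_zero] using Ne.symm h
    · have := theta_pow (α := fun p => - α p) (by fun_prop) (by simp [a0, h, hM0]) (2 * k)
      simpa [h] using this
  · filter_upwards [ev_ne hVc hV0] with p hp _ h using absurd h hp
  · filter_upwards [ev_ne hVc hV0] with p hp _ h using absurd h hp

lemma locDeg_three (hk : k ≠ 0) (hω : ω ^ 3 = 1) :
    LocDeg (fun p => p - (Fc k ω)^[3] p) (1 + 0 + 3 * k + 0) := by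
  intro r hr
  obtain ⟨α, β, γ, δ, hα, hβ, hγ, hδ, a0, b0, c0, d0, hF⟩ := Fc_iter hk hω 3
  have hω0 : ω ≠ 0 := by rintro rfl; simp at hω
  have g0 : γ 0 ≠ 0 := by rintro h; rw [h, hω] at c0; norm_num at c0
  have dd0 : δ 0 ≠ 0 := by rintro h; rw [h, hω] at d0; norm_num at d0
  have hU : Continuous fun p : ℂ × ℂ => 1 - ((-1) ^ 3 + p.1 ^ (2 * k) * α p + p.2 ^ 3 * β p) := by
    fun_prop
  have hU0 : (fun p : ℂ × ℂ => 1 - ((-1) ^ 3 + p.1 ^ (2 * k) * α p + p.2 ^ 3 * β p)) 0 = 2 := by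
    simp [hk]; norm_num
  have hn : ∀ᶠ p : ℂ × ℂ in 𝓝 0,
      1 < ‖1 - ((-1) ^ 3 + p.1 ^ (2 * k) * α p + p.2 ^ 3 * β p)‖ ∧
      ‖1 - ((-1) ^ 3 + p.1 ^ (2 * k) * α p + p.2 ^ 3 * β p)‖ < 3 := by
    have h1 := hU.norm.continuousAt (x := 0)
    refine (h1.eventually_const_lt ?_).and (h1.eventually_lt_const ?_)
    · exact lt_of_lt_of_eq (by norm_num) (congrArg norm hU0).symm
    · exact lt_of_eq_of_lt (congrArg norm hU0) (by norm_num)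
  refine deg_model (U := fun p => 1 - ((-1) ^ 3 + p.1 ^ (2 * k) * α p + p.2 ^ 3 * β p))
    (V := fun p => 1 - (ω ^ 3 + p.1 ^ 2 * γ p + p.2 ^ (3 * k) * δ p)) (γ := fun p => - γ p)
    (δ := fun p => - δ p) (m := 3 * k) (e := 0) (q := 0)
    (c := 1) (C := 3 ^ (3 * k)) (Fc_iter_analytic k ω 3) ?_ ?_ (by fun_prop) (by fun_prop)
    (neg_ne_zero.2 dd0)
    (by fun_prop) ?_ ?_ (by simp) ?_ one_pos (by positivity) ?_ hr
  · intro p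
    simp only [hF p]
    exact Prod.ext (by simp; ring) (by simp; ring)
  · intro p; simp only [hω]; ring
  · filter_upwards [fst_snd_ev hγ g0] with p hp hp1
    simp [hω, hk, hp1, hp]
  · simp only [pow_zero]
    refine continuousAt_isTheta_one (by fun_prop) ?_
    have := hU0
    change (1 - _ : ℂ) = 2 at this
    simp only [Prod.fst_zero, Prod.snd_zero] at this
    rw [show ((0 : ℂ), (0 : ℂ)) = 0 from rfl, this]; norm_num
  · filter_upwards [hn] with p hp _ _ h
    simp only [h, norm_zero] at hp
    linarith [hp.1]
  · filter_upwards [hn] with p hp _ _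
    simp only [pow_zero, mul_one]
    exact ⟨one_le_pow₀ hp.1.le, pow_le_pow_left₀ (norm_nonneg _) hp.2.le _⟩

lemma locDeg_six (hk : 1 < k) (hω : ω ^ 3 = 1) :
    LocDeg (fun p => p - (Fc k ω)^[6] p) (1 + 2 * k + 3 * k + 6) := by
  intro r hr
  have hk0 : k ≠ 0 := by omega
  obtain ⟨α, β, γ, δ, hα, hβ, hγ, hδ, a0, b0, c0, d0, hF⟩ := Fc_iter hk0 hω 6
  have hω6 : ω ^ 6 = 1 := by rw [show 6 = 3 * 2 by norm_num, pow_mul, hω, one_pow]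
  have hωn : ‖ω‖ = 1 := by
    have : ‖ω‖ ^ 3 = 1 := by rw [← norm_pow, hω, norm_one]
    exact (pow_eq_one_iff_of_nonneg (norm_nonneg _) (by norm_num)).1 this
  have na : ‖α 0‖ = 6 := by rw [a0]; simp
  have nb : ‖β 0‖ = 6 := by rw [b0]; simp
  have nc : ‖γ 0‖ = 6 := by
    have := congrArg norm c0
    simpa [hω6, hωn] using this
  have nd : ‖δ 0‖ = 6 := by
    have := congrArg norm d0
    simpa [hω6, hωn] using this
  have hnn : ∀ φ : ℂ × ℂ → ℂ, Continuous φ → ‖φ 0‖ = 6 →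
      ∀ᶠ p : ℂ × ℂ in 𝓝 0, 5 < ‖φ p‖ ∧ ‖φ p‖ < 7 := by
    intro φ hφ h
    have h1 := hφ.norm.continuousAt (x := 0)
    refine (h1.eventually_const_lt ?_).and (h1.eventually_lt_const ?_) <;> beta_reduce <;> rw [h] <;> norm_num
  have hsm : ∀ᶠ p : ℂ × ℂ in 𝓝 0, 7 * ((7 / 5) ^ k * ‖p.2‖ ^ (3 * k * k - 3)) < 1 := by
    have h1 : ContinuousAt (fun p : ℂ × ℂ => 7 * ((7 / 5 : ℝ) ^ k * ‖p.2‖ ^ (3 * k * k - 3))) 0 := by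
      fun_prop
    refine h1.eventually_lt_const ?_
    have : 3 * k * k - 3 ≠ 0 := by
      have : 2 * 2 ≤ k * k := Nat.mul_le_mul hk hk
      rw [mul_assoc]; omega
    simp [this]
  -- the main estimate
  have main : ∀ᶠ p : ℂ × ℂ in 𝓝 0, p.1 ≠ 0 →
      1 - (ω ^ 6 + p.1 ^ 2 * γ p + p.2 ^ (3 * k) * δ p) = 0 →
      (5 / 7 * ‖p.1‖ ^ 2 ≤ ‖p.2‖ ^ (3 * k) ∧ ‖p.2‖ ^ (3 * k) ≤ 7 / 5 * ‖p.1‖ ^ 2) ∧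
      4 * ‖p.2‖ ^ 3 ≤ ‖1 - ((-1) ^ 6 + p.1 ^ (2 * k) * α p + p.2 ^ 3 * β p)‖ ∧
      ‖1 - ((-1) ^ 6 + p.1 ^ (2 * k) * α p + p.2 ^ 3 * β p)‖ ≤ 8 * ‖p.2‖ ^ 3 := by
    filter_upwards [hnn α hα na, hnn β hβ nb, hnn γ hγ nc, hnn δ hδ nd, hsm] with p pa pb pc pd ps
      hp1 hV
    have e1 : p.1 ^ 2 * γ p = - (p.2 ^ (3 * k) * δ p) := by
      rw [hω6] at hV; linear_combination -hV
    have e2 := congrArg norm e1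
    rw [norm_neg, norm_mul, norm_mul, norm_pow, norm_pow] at e2
    have hX : 0 ≤ ‖p.1‖ ^ 2 := by positivity
    have hY : 0 ≤ ‖p.2‖ ^ (3 * k) := by positivity
    have f1 : 5 / 7 * ‖p.1‖ ^ 2 ≤ ‖p.2‖ ^ (3 * k) := by nlinarith
    have f2 : ‖p.2‖ ^ (3 * k) ≤ 7 / 5 * ‖p.1‖ ^ 2 := by nlinarith
    have f3 : ‖p.1‖ ^ 2 ≤ 7 / 5 * ‖p.2‖ ^ (3 * k) := by nlinarith
    have f4 : ‖p.1 ^ (2 * k) * α p‖ ≤ ‖p.2‖ ^ 3 := by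
      rw [norm_mul, norm_pow, pow_mul]
      have g1 : (‖p.1‖ ^ 2) ^ k ≤ (7 / 5) ^ k * ‖p.2‖ ^ (3 * k * k - 3) * ‖p.2‖ ^ 3 := by
        refine (pow_le_pow_left₀ hX f3 k).trans (le_of_eq ?_)
        rw [mul_pow, ← pow_mul, mul_assoc ((7 / 5 : ℝ) ^ k), ← pow_add]
        congr 2
        have : 2 * 2 ≤ k * k := Nat.mul_le_mul hk hk
        rw [mul_assoc]; omega
      have hY3 : 0 ≤ ‖p.2‖ ^ 3 := by positivity
      calc (‖p.1‖ ^ 2) ^ k * ‖α p‖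
          ≤ ((7 / 5) ^ k * ‖p.2‖ ^ (3 * k * k - 3) * ‖p.2‖ ^ 3) * 7 := by gcongr; exact pa.2.le
        _ = (7 * ((7 / 5) ^ k * ‖p.2‖ ^ (3 * k * k - 3))) * ‖p.2‖ ^ 3 := by ring
        _ ≤ 1 * ‖p.2‖ ^ 3 := by gcongr
        _ = _ := one_mul _
    have f5 : 5 * ‖p.2‖ ^ 3 ≤ ‖p.2 ^ 3 * β p‖ := by
      rw [norm_mul, norm_pow, mul_comm]; gcongr; exact pb.1.le
    have f6 : ‖p.2 ^ 3 * β p‖ ≤ 7 * ‖p.2‖ ^ 3 := by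
      rw [norm_mul, norm_pow, mul_comm]; gcongr; exact pb.2.le
    have e3 : 1 - ((-1) ^ 6 + p.1 ^ (2 * k) * α p + p.2 ^ 3 * β p) =
      -(p.2 ^ 3 * β p + p.1 ^ (2 * k) * α p) := by norm_num; ring
    rw [e3, norm_neg]
    refine ⟨⟨f1, f2⟩, ?_, ?_⟩
    · have := norm_sub_le_norm_add (p.2 ^ 3 * β p) (p.1 ^ (2 * k) * α p)
      linarith
    · have := norm_add_le (p.2 ^ 3 * β p) (p.1 ^ (2 * k) * α p)
      linarith
  have g0 : γ 0 ≠ 0 := by rintro h; rw [h] at nc; norm_num at nc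
  have dd0 : δ 0 ≠ 0 := by rintro h; rw [h] at nd; norm_num at nd
  have aa0 : - α 0 ≠ 0 := by intro h; rw [neg_eq_zero.1 h] at na; norm_num at na
  refine deg_model (U := fun p => 1 - ((-1) ^ 6 + p.1 ^ (2 * k) * α p + p.2 ^ 3 * β p))
    (V := fun p => 1 - (ω ^ 6 + p.1 ^ 2 * γ p + p.2 ^ (3 * k) * δ p)) (γ := fun p => - γ p)
    (δ := fun p => - δ p) (m := 3 * k) (e := 2 * k) (q := 6)
    (c := 4 ^ (3 * k) * (5 / 7) ^ 3) (C := 8 ^ (3 * k) * (7 / 5) ^ 3)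
    (Fc_iter_analytic k ω 6) ?_ ?_ (by fun_prop) (by fun_prop)
    (neg_ne_zero.2 dd0)
    (by fun_prop) ?_ ?_ (by simp [hk0]) ?_ (by positivity) (by positivity) ?_ hr
  · intro p
    simp only [hF p]
    exact Prod.ext (by simp; ring) (by simp; ring)
  · intro p; simp only [hω6]; ring
  · filter_upwards [fst_snd_ev hγ g0] with p hp hp1
    simp [hω6, hk0, hp1, hp]
  · have := theta_pow (α := fun p => - α p) (by fun_prop) aa0 (2 * k)
    have h6 : ((-1 : ℂ)) ^ 6 = 1 := by norm_num
    simpa [h6] using this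
  · filter_upwards [main] with p hp h1 h2 h3
    obtain ⟨⟨i1, i2⟩, i3, i4⟩ := hp h1 h2
    rw [h3, norm_zero] at i3
    have : 0 < ‖p.1‖ := norm_pos_iff.2 h1
    have i5 : ‖p.2‖ ^ 3 = 0 := le_antisymm (by linarith) (by positivity)
    rw [pow_mul, i5, zero_pow hk0] at i1
    have : 0 < 5 / 7 * ‖p.1‖ ^ 2 := by positivity
    linarith
  · filter_upwards [main] with p hp h1 h2
    obtain ⟨⟨i1, i2⟩, i3, i4⟩ := hp h1 h2
    have e : (‖p.2‖ ^ 3) ^ (3 * k) = (‖p.2‖ ^ (3 * k)) ^ 3 := by rw [← pow_mul, ← pow_mul, mul_comm]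
    have j1 := pow_le_pow_left₀ (by positivity) i1 3
    have j2 := pow_le_pow_left₀ (by positivity) i2 3
    have j3 := pow_le_pow_left₀ (by positivity) i3 (3 * k)
    have j4 := pow_le_pow_left₀ (by positivity) i4 (3 * k)
    rw [mul_pow, e] at j3 j4
    constructor
    · refine le_trans ?_ j3
      calc _ = 4 ^ (3 * k) * (5 / 7 * ‖p.1‖ ^ 2) ^ 3 := by ring
        _ ≤ _ := by gcongr
    · refine j4.trans ?_
      calc _ ≤ 8 ^ (3 * k) * (7 / 5 * ‖p.1‖ ^ 2) ^ 3 := by gcongr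
        _ = _ := by ring

end

/-- The linear identification of `ℂ × ℂ` with `Cn 2`. -/
def e2 : (ℂ × ℂ) ≃L[ℂ] Cn 2 := (ContinuousLinearEquiv.finTwoArrow ℂ ℂ).symm

lemma e2_zero' (p : ℂ × ℂ) : e2 p 0 = p.1 := rfl
lemma e2_one' (p : ℂ × ℂ) : e2 p 1 = p.2 := rfl
lemma e2_symm (x : Cn 2) : e2.symm x = (x 0, x 1) := rfl

lemma norm_e2_symm (x : Cn 2) : ‖e2.symm x‖ = ‖x‖ := by
  rw [e2_symm, Prod.norm_def]
  refine le_antisymm (max_le (norm_le_pi_norm x 0) (norm_le_pi_norm x 1)) ?_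
  refine (pi_norm_le_iff_of_nonneg (by positivity)).2 fun i => ?_
  fin_cases i
  · exact le_max_left _ _
  · exact le_max_right _ _

lemma norm_e2 (p : ℂ × ℂ) : ‖e2 p‖ = ‖p‖ := by
  conv_rhs => rw [← e2.symm_apply_apply p, norm_e2_symm]

/-- Conjugate of a self-map of `Cn 2` to `ℂ × ℂ`. -/
def cj (h : Cn 2 → Cn 2) (p : ℂ × ℂ) : ℂ × ℂ := e2.symm (h (e2 p))

lemma cj_eq_zero {h : Cn 2 → Cn 2} {p : ℂ × ℂ} : cj h p = 0 ↔ h (e2 p) = 0 := by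
  simp [cj]

lemma cj_analyticAt {h : Cn 2 → Cn 2} {p : ℂ × ℂ} (hp : AnalyticAt ℂ h (e2 p)) :
    AnalyticAt ℂ (cj h) p :=
  ((e2.symm : Cn 2 →L[ℂ] ℂ × ℂ).analyticAt _).comp
    (hp.comp ((e2 : ℂ × ℂ →L[ℂ] Cn 2).analyticAt p))

lemma cj_fderiv {h : Cn 2 → Cn 2} {p : ℂ × ℂ} :
    Function.Bijective (fderiv ℂ (cj h) p) ↔ Function.Bijective (fderiv ℂ h (e2 p)) := by
  have h1 : cj h = e2.symm ∘ (h ∘ e2) := rfl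
  rw [h1, ContinuousLinearEquiv.comp_fderiv, ContinuousLinearEquiv.comp_right_fderiv]
  have : ((e2.symm : Cn 2 →L[ℂ] ℂ × ℂ).comp ((fderiv ℂ h (e2 p)).comp (e2 : ℂ × ℂ →L[ℂ] Cn 2)) :
      ℂ × ℂ → ℂ × ℂ) = e2.symm ∘ fderiv ℂ h (e2 p) ∘ e2 := rfl
  rw [this]
  rw [Function.Bijective.of_comp_iff' e2.symm.bijective, Function.Bijective.of_comp_iff _ e2.bijective]

/-- Counting zeros of perturbations in a ball. -/
lemma count_ball {h : Cn 2 → Cn 2} {D : ℕ} (hD : LocDeg (cj h) D) {R : ℝ} (hR : 0 < R)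
    (han : ∀ x ∈ closedBall (0 : Cn 2) R, AnalyticAt ℂ h x)
    (huniq : ∀ x ∈ closedBall (0 : Cn 2) R, h x = 0 → x = 0) {R' : ℝ} (hR' : 0 < R') :
    ∃ η > 0, ∀ g : Cn 2 → Cn 2, (∀ x ∈ closedBall (0 : Cn 2) R, AnalyticAt ℂ g x) →
      (∀ x ∈ closedBall (0 : Cn 2) R, ‖g x - h x‖ < η) →
      (∀ x ∈ closedBall (0 : Cn 2) R, g x = 0 → x ∈ ball (0 : Cn 2) R') ∧
      (∀ F : Finset (Cn 2), (∀ p ∈ F, p ∈ ball (0 : Cn 2) R ∧ g p = 0 ∧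
        Function.Bijective (fderiv ℂ g p)) → F.card ≤ D) ∧
      ((∀ p ∈ ball (0 : Cn 2) R, g p = 0 → Function.Bijective (fderiv ℂ g p)) →
        {x ∈ ball (0 : Cn 2) R | g x = 0}.Finite ∧ {x ∈ ball (0 : Cn 2) R | g x = 0}.ncard = D) := by
  obtain ⟨a, b, har, hbr, hG, hdeg, -⟩ := hD (min R R') (lt_min hR hR')
  obtain ⟨η0, hη0, hst⟩ := deg_stable hG
  set W : Set (Cn 2) := {x | ‖x 0‖ < a ∧ ‖x 1‖ < b} with hW
  have hWo : IsOpen W := by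
    have h1 : IsOpen {x : Cn 2 | ‖x 0‖ < a} :=
      isOpen_lt (continuous_apply 0).norm continuous_const
    have h2 : IsOpen {x : Cn 2 | ‖x 1‖ < b} :=
      isOpen_lt (continuous_apply 1).norm continuous_const
    exact h1.inter h2
  have hWR : ∀ x : Cn 2, ‖x 0‖ ≤ a → ‖x 1‖ ≤ b → ‖x‖ < min R R' := by
    intro x h1 h2
    rw [← norm_e2_symm, e2_symm, Prod.norm_def]
    exact max_lt (h1.trans_lt har) (h2.trans_lt hbr)
  have h0W : (0 : Cn 2) ∈ W := by simp [hW, hG.ha, hG.hb]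
  have hK : IsCompact (closedBall (0 : Cn 2) R \ W) := IsCompact.diff (isCompact_closedBall _ _) hWo
  obtain ⟨c, hc, hcK⟩ : ∃ c > 0, ∀ x ∈ closedBall (0 : Cn 2) R \ W, c ≤ ‖h x‖ := by
    rcases (closedBall (0 : Cn 2) R \ W).eq_empty_or_nonempty with he | hne
    · exact ⟨1, one_pos, by simp [he]⟩
    · obtain ⟨x0, hx0, hmin⟩ := hK.exists_isMinOn hne
        (fun x hx => (han x hx.1).continuousAt.norm.continuousWithinAt)
      refine ⟨‖h x0‖, norm_pos_iff.2 fun h0 => ?_, fun x hx => hmin hx⟩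
      exact hx0.2 (huniq x0 hx0.1 h0 ▸ h0W)
  refine ⟨min c η0, lt_min hc hη0, fun g hg hgh => ?_⟩
  have hz : ∀ x ∈ closedBall (0 : Cn 2) R, g x = 0 → x ∈ W := by
    intro x hx h0
    by_contra hxW
    have h1 := hcK x ⟨hx, hxW⟩
    have h2 := hgh x hx
    rw [h0, zero_sub, norm_neg] at h2
    exact absurd (h2.trans_le (min_le_left _ _)) (not_lt.2 h1)
  have hbox : ∀ x ∈ closedBall (0 : ℂ) a, ∀ y ∈ closedBall (0 : ℂ) b,
      e2 (x, y) ∈ closedBall (0 : Cn 2) R := by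
    intro x hx y hy
    rw [mem_closedBall_zero_iff] at *
    exact ((hWR _ hx hy).trans_le (min_le_left _ _)).le
  obtain ⟨hgG, hgd⟩ := hst (cj g) (fun x hx y hy => cj_analyticAt (hg _ (hbox x hx y hy)))
    (fun x hx y hy => by
      rw [cj, cj, ← map_sub, norm_e2_symm]
      exact (hgh _ (hbox x hx y hy)).trans_le (min_le_right _ _))
  rw [hdeg] at hgd
  refine ⟨fun x hx h0 => ?_, fun F hF => ?_, fun hreg => ?_⟩
  · have := hz x hx h0
    rw [mem_ball_zero_iff]
    exact (hWR x this.1.le this.2.le).trans_le (min_le_right _ _)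
  · have := deg_le hgG (F.image e2.symm) (fun p hp => by
      obtain ⟨x, hx, rfl⟩ := Finset.mem_image.1 hp
      obtain ⟨i1, i2, i3⟩ := hF x hx
      have hxW := hz x (ball_subset_closedBall i1) i2
      refine ⟨by simpa [e2_symm] using hxW.1, by simpa [e2_symm] using hxW.2, ?_, ?_⟩
      · rw [cj_eq_zero]; simpa using i2
      · rw [cj_fderiv]; simpa using i3)
    rwa [Finset.card_image_of_injective _ e2.symm.injective, hgd] at this
  · have := deg_eq hgG (fun p h1 h2 h3 => by
      rw [cj_fderiv]
      rw [cj_eq_zero] at h3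
      refine hreg _ ?_ h3
      rw [mem_ball_zero_iff] at *
      exact (hWR (e2 p) h1.le h2.le).trans_le (min_le_left _ _))
    have hset : {x ∈ ball (0 : Cn 2) R | g x = 0} =
        e2 '' {p | p.1 ∈ ball (0 : ℂ) a ∧ p.2 ∈ ball (0 : ℂ) b ∧ cj g p = 0} := by
      ext x
      constructor
      · rintro ⟨h1, h2⟩
        have hxW := hz x (ball_subset_closedBall h1) h2
        refine ⟨e2.symm x, ⟨?_, ?_, ?_⟩, by simp⟩
        · simpa [e2_symm] using hxW.1
        · simpa [e2_symm] using hxW.2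
        · rw [cj_eq_zero]; simpa using h2
      · rintro ⟨p, ⟨h1, h2, h3⟩, rfl⟩
        rw [cj_eq_zero] at h3
        refine ⟨?_, h3⟩
        rw [mem_ball_zero_iff] at *
        exact (hWR (e2 p) h1.le h2.le).trans_le (min_le_left _ _)
    rw [hset]
    refine ⟨this.1.image _, ?_⟩
    rw [ncard_image_of_injective _ e2.injective, this.2, hgd]

/-- Sard: regular values exist arbitrarily near `0`. -/
lemma exists_regular {h : Cn 2 → Cn 2} {R : ℝ}
    (han : ∀ x ∈ ball (0 : Cn 2) R, AnalyticAt ℂ h x) {ε : ℝ} (hε : 0 < ε) :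
    ∃ q : Cn 2, ‖q‖ < ε ∧ IsRegularValueOn h (ball 0 R) q := by
  set s : Set (Cn 2) := {x ∈ ball (0 : Cn 2) R | ¬ Function.Bijective (fderiv ℂ h x)} with hs
  have h1 : MeasureTheory.volume (h '' s) = 0 := by
    refine MeasureTheory.addHaar_image_eq_zero_of_det_fderivWithin_eq_zero MeasureTheory.volume
      (f' := fun x => (fderiv ℂ h x).restrictScalars ℝ) ?_ ?_
    · intro x hx
      exact ((han x hx.1).differentiableAt.hasFDerivAt.restrictScalars ℝ).hasFDerivWithinAt
    · intro x hx
      by_contra hdet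
      refine hx.2 ?_
      have hu : IsUnit (LinearMap.det (((fderiv ℂ h x).restrictScalars ℝ : Cn 2 →L[ℝ] Cn 2) :
        Cn 2 →ₗ[ℝ] Cn 2)) := isUnit_iff_ne_zero.2 hdet
      have hb := (Module.End.isUnit_iff _).1 ((LinearMap.isUnit_iff_isUnit_det _).2 hu)
      exact hb
  by_contra! hcon
  have hsub : ball (0 : Cn 2) ε ⊆ h '' s := by
    intro q hq
    have := hcon q (by simpa using hq)
    rw [IsRegularValueOn] at this
    push Not at this
    obtain ⟨x, hx, hxq, hb⟩ := this
    exact ⟨x, ⟨hx, hb⟩, hxq⟩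
  have := MeasureTheory.measure_mono_null hsub h1
  exact (Metric.measure_ball_pos MeasureTheory.volume (0 : Cn 2) hε).ne' this

lemma zeroOrder_eq {h : Cn 2 → Cn 2} {D : ℕ} (hD : LocDeg (cj h) D)
    {R : ℝ} (hR : 0 < R) (h0 : h 0 = 0)
    (han : ∀ x ∈ closedBall (0 : Cn 2) R, AnalyticAt ℂ h x)
    (huniq : ∀ x ∈ closedBall (0 : Cn 2) R, h x = 0 → x = 0) : zeroOrder h 0 = D := by
  have key : ∀ r > 0, (∀ x ∈ closedBall (0 : Cn 2) r, AnalyticAt ℂ h x) →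
      (∀ x ∈ closedBall (0 : Cn 2) r, h x = 0 → x = 0) → ∃ η > 0, ∀ q : Cn 2, ‖q‖ < η →
        IsRegularValueOn h (ball 0 r) q → {x ∈ ball (0 : Cn 2) r | h x = q}.ncard = D := by
    intro r hr ha hu
    obtain ⟨η, hη, H⟩ := count_ball hD hr ha hu one_pos
    refine ⟨η, hη, fun q hq hreg => ?_⟩
    have := (H (fun x => h x - q) (fun x hx => (ha x hx).sub analyticAt_const)
      (fun x hx => by simpa using hq)).2.2 (fun p hp hpq => by
        rw [fderiv_sub_const]; exact hreg p hp (sub_eq_zero.1 hpq))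
    simpa [sub_eq_zero] using this.2
  have hset : {m | HasZeroOrder h 0 m} = {D} := by
    ext m
    constructor
    · rintro ⟨r, hr, ha, -, hu, hex, δ, hδ, hcount⟩
      obtain ⟨η, hη, H⟩ := key r hr ha hu
      obtain ⟨q, hq, hreg⟩ := hex (min δ η) (lt_min hδ hη)
      have h1 := hcount q (hq.trans_le (min_le_left _ _)) hreg
      have h2 := H q (hq.trans_le (min_le_right _ _)) hreg
      exact h1.symm.trans h2
    · rintro rfl
      refine ⟨R, hR, han, h0, huniq, fun ε hε => ?_, key R hR han huniq⟩
      exact exists_regular (fun x hx => han x (ball_subset_closedBall hx)) hε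
  rw [zeroOrder, hset, csInf_singleton]

lemma iter_back {α : Type*} {g : α → α} {M l : ℕ} {x : α} (hx : g^[M] x = x) (hl : l ≤ M) :
    g^[M - l] (g^[l] x) = x := by
  rw [← Function.iterate_add_apply, Nat.sub_add_cancel hl, hx]

lemma card_orbits {g : Cn 2 → Cn 2} {M m : ℕ} {p : Fin m → Cn 2}
    (hp : ∀ i, ExactPeriodicPt g M (p i))
    (hd : ∀ i j : Fin m, i ≠ j → ∀ l < M, g^[l] (p i) ≠ p j) :
    ((Finset.univ : Finset (Fin m × Fin M)).image (fun z => g^[(z.2 : ℕ)] (p z.1))).card = M * m := by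
  have aux : ∀ i j : Fin m, ∀ l l' : ℕ, l ≤ l' → l' < M → g^[l] (p i) = g^[l'] (p j) →
      i = j ∧ l = l' := by
    intro i j l l' hl hl' h
    have h1 : p i = g^[l' - l] (p j) := by
      have h2 := congrArg (g^[M - l]) h
      rw [iter_back (hp i).1 (by omega), ← Function.iterate_add_apply,
        show M - l + l' = (l' - l) + M by omega, Function.iterate_add_apply, (hp j).1] at h2
      exact h2
    by_cases hij : i = j
    · subst hij
      refine ⟨rfl, ?_⟩
      by_contra hne
      exact (hp i).2 (l' - l) (by omega) (by omega) h1.symm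
    · exact absurd h1.symm (hd j i (Ne.symm hij) (l' - l) (by omega))
  rw [Finset.card_image_of_injective]
  · simp [mul_comm]
  · rintro ⟨i, l⟩ ⟨j, l'⟩ h
    simp only at h
    rcases le_total (l : ℕ) (l' : ℕ) with hle | hle
    · obtain ⟨h1, h2⟩ := aux i j l l' hle l'.2 h
      exact Prod.ext h1 (Fin.ext h2)
    · obtain ⟨h1, h2⟩ := aux j i l' l hle l.2 h.symm
      exact Prod.ext h1.symm (Fin.ext h2.symm)

lemma iter_mem {α : Type*} {g : α → α} {E : Set α} (hinv : ∀ x ∈ E, g x ∈ E) {x : α} (hx : x ∈ E)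
    (j : ℕ) : g^[j] x ∈ E := by
  induction j with
  | zero => exact hx
  | succ j ih => rw [Function.iterate_succ_apply']; exact hinv _ ih

lemma atLeast_of_card {g : Cn 2 → Cn 2} {M : ℕ} (hM : 0 < M) {E : Set (Cn 2)}
    (hinv : ∀ x ∈ E, g x ∈ E) (hex : ∀ x ∈ E, ExactPeriodicPt g M x) (m : ℕ)
    (hc : M * m ≤ E.ncard) : AtLeastOrbits g M m E := by
  induction m with
  | zero => exact ⟨Fin.elim0, fun i => i.elim0, fun i => i.elim0⟩
  | succ m ih =>
    obtain ⟨p, hp, hd⟩ := ih (le_trans (Nat.mul_le_mul_left _ (Nat.le_succ m)) hc)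
    set O := (Finset.univ : Finset (Fin m × Fin M)).image (fun z => g^[(z.2 : ℕ)] (p z.1)) with hO
    have hOc : O.card = M * m := card_orbits (fun i => (hp i).1) hd
    obtain ⟨x, hxE, hxO⟩ : ∃ x ∈ E, x ∉ (O : Set (Cn 2)) := by
      refine Set.exists_mem_notMem_of_ncard_lt_ncard ?_ (Finset.finite_toSet O)
      rw [Set.ncard_coe_finset, hOc]
      have : M * (m + 1) = M * m + M := by ring
      omega
    have hxO1 : ∀ i : Fin m, ∀ l < M, g^[l] (p i) ≠ x := by
      intro i l hl h
      apply hxO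
      rw [Finset.mem_coe, hO, Finset.mem_image]
      exact ⟨(i, ⟨l, hl⟩), Finset.mem_univ _, h⟩
    have hx := hex x hxE
    have hxO2 : ∀ i : Fin m, ∀ l < M, g^[l] x ≠ p i := by
      intro i l hl h
      have h1 := iter_back hx.1 hl.le
      rw [h] at h1
      rcases Nat.eq_zero_or_pos l with rfl | hl0
      · exact hxO1 i 0 hM (by simpa using h.symm)
      · exact hxO1 i (M - l) (by omega) h1
    refine ⟨Fin.cons x p, ?_, ?_⟩
    · intro i
      refine Fin.cases ?_ (fun i => ?_) i
      · exact ⟨hx, fun j _ => iter_mem hinv hxE j⟩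
      · simpa using hp i
    · intro i j
      refine Fin.cases ?_ (fun i => ?_) i <;> refine Fin.cases ?_ (fun j => ?_) j
      · simp
      · intro _ l hl; simpa using hxO2 j l hl
      · intro _ l hl; simpa using hxO1 i l hl
      · intro hij l hl
        simpa using hd i j (fun h => hij (by rw [h])) l hl

lemma exists_ell (S : Finset (Cn 2)) (q : Cn 2) : ∃ ℓ : Cn 2 → ℂ, (∀ x, AnalyticAt ℂ ℓ x) ∧
    ℓ q = 1 ∧ ∀ p ∈ S, p ≠ q → ℓ p = 0 := by
  induction S using Finset.induction_on with
  | empty => exact ⟨fun _ => 1, fun _ => analyticAt_const, rfl, by simp⟩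
  | insert a S _ ih =>
    obtain ⟨ℓ, h1, h2, h3⟩ := ih
    by_cases haq : a = q
    · refine ⟨ℓ, h1, h2, fun p hp hpq => ?_⟩
      rcases Finset.mem_insert.1 hp with rfl | hp
      · exact absurd haq hpq
      · exact h3 p hp hpq
    · obtain ⟨i, hi⟩ := Function.ne_iff.1 haq
      refine ⟨fun x => ℓ x * ((x i - a i) * (q i - a i)⁻¹), fun x => ?_, ?_, ?_⟩
      · refine (h1 x).mul ((AnalyticAt.sub ?_ analyticAt_const).mul analyticAt_const)
        exact (ContinuousLinearMap.proj (R := ℂ) (φ := fun _ : Fin 2 => ℂ) i).analyticAt x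
      · have : q i - a i ≠ 0 := sub_ne_zero.2 (Ne.symm hi)
        simp [h2, this]
      · intro p hp hpq
        rcases Finset.mem_insert.1 hp with rfl | hp
        · simp
        · simp [h3 p hp hpq]

lemma exists_phi (S : Finset (Cn 2)) (L : Cn 2 → (Cn 2 →L[ℂ] Cn 2)) :
    ∃ φ : Cn 2 → Cn 2, (∀ x, AnalyticAt ℂ φ x) ∧ (∀ q ∈ S, φ q = 0) ∧
      ∀ q ∈ S, HasFDerivAt φ (L q) q := by
  choose ℓ h1 h2 h3 using exists_ell S
  refine ⟨fun x => ∑ q ∈ S, (ℓ q x) ^ 2 • L q (x - q), fun x => ?_, fun p hp => ?_,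
    fun p hp => ?_⟩
  · refine Finset.analyticAt_fun_sum _ fun q _ => ((h1 q x).pow 2).smul ?_
    exact ((L q).analyticAt _).comp (analyticAt_id.sub analyticAt_const)
  · refine Finset.sum_eq_zero fun q hq => ?_
    by_cases h : p = q
    · simp [h]
    · simp [h3 q p hp h]
  · have hd : ∀ q ∈ S, HasFDerivAt (fun x => (ℓ q x) ^ 2 • L q (x - q))
        (if q = p then L p else 0) p := by
      intro q hq
      have e1 : HasFDerivAt (fun x => (ℓ q x) ^ 2) _ p :=
        (h1 q p).differentiableAt.hasFDerivAt.pow 2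
      have e2 : HasFDerivAt (fun x => L q (x - q)) (L q) p := by
        have := (L q).hasFDerivAt (x := p - q)
        exact HasFDerivAt.comp p this ((hasFDerivAt_id p).sub_const q)
      have e3 := e1.smul e2
      by_cases h : q = p
      · subst h
        rw [if_pos rfl]
        exact e3.congr_fderiv (by ext v; simp [h2])
      · rw [if_neg h]
        exact e3.congr_fderiv (by ext v; simp [h3 q p hp (Ne.symm h)])
    have := HasFDerivAt.fun_sum hd
    rwa [Finset.sum_ite_eq' S p, if_pos hp] at this

lemma iter_deriv {g G : Cn 2 → Cn 2} {S : Finset (Cn 2)} (hS : ∀ q ∈ S, g q ∈ S)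
    (hG : ∀ q ∈ S, G q = g q) (hg : ∀ q ∈ S, DifferentiableAt ℂ g q) {c : ℂ}
    (hd : ∀ q ∈ S, HasFDerivAt G (c • fderiv ℂ g q) q) (j : ℕ) : ∀ q ∈ S,
    G^[j] q = g^[j] q ∧ DifferentiableAt ℂ (g^[j]) q ∧
      HasFDerivAt (G^[j]) (c ^ j • fderiv ℂ (g^[j]) q) q := by
  induction j with
  | zero =>
    intro q _
    refine ⟨rfl, differentiableAt_id, ?_⟩
    simp only [Function.iterate_zero, pow_zero, one_smul, fderiv_id]
    exact hasFDerivAt_id q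
  | succ j ih =>
    intro q hq
    obtain ⟨i1, i2, i3⟩ := ih q hq
    have hm : g^[j] q ∈ S := iter_mem (E := (S : Set (Cn 2))) hS hq j
    refine ⟨?_, ?_, ?_⟩
    · rw [Function.iterate_succ_apply', Function.iterate_succ_apply', i1, hG _ hm]
    · rw [Function.iterate_succ']
      exact (hg _ hm).comp q i2
    · rw [Function.iterate_succ', Function.iterate_succ', fderiv_comp q (hg _ hm) i2]
      have h1 := hd _ hm
      rw [← i1] at h1
      have := h1.comp q i3
      refine this.congr_fderiv ?_
      rw [i1, ContinuousLinearMap.smul_comp, ContinuousLinearMap.comp_smul, smul_smul, pow_succ']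

lemma exists_simple {g : Cn 2 → Cn 2} {r : ℝ} (hg : ∀ x ∈ ball (0 : Cn 2) r, AnalyticAt ℂ g x)
    (S : Finset (Cn 2)) (hSr : ∀ q ∈ S, q ∈ ball (0 : Cn 2) r) (hS : ∀ q ∈ S, g q ∈ S)
    {κ : ℝ} (hκ : 0 < κ) : ∃ G : Cn 2 → Cn 2, (∀ x ∈ ball (0 : Cn 2) r, AnalyticAt ℂ G x) ∧
      (∀ x ∈ ball (0 : Cn 2) r, ‖G x - g x‖ ≤ κ) ∧ (∀ q ∈ S, G q = g q) ∧
      ∀ q ∈ S, Function.Bijective (fderiv ℂ (fun x => x - G^[6] x) q) := by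
  obtain ⟨φ, hφ, hφ0, hφd⟩ := exists_phi S (fun q => - fderiv ℂ g q)
  obtain ⟨C, hC⟩ := (isCompact_closedBall (0 : Cn 2) r).exists_bound_of_continuousOn
    (f := φ) (fun x _ => (hφ x).continuousAt.continuousWithinAt)
  set τ := min 1 (κ / (|C| + 1)) with hτ
  have hτ0 : 0 < τ := lt_min one_pos (by positivity)
  have hfin : (⋃ q ∈ S, {s : ℂ | Module.End.HasEigenvalue
      ((fderiv ℂ (g^[6]) q : Cn 2 →L[ℂ] Cn 2) : Cn 2 →ₗ[ℂ] Cn 2) s}).Finite :=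
    S.finite_toSet.biUnion fun q _ => Module.End.finite_hasEigenvalue _
  obtain ⟨t, ht, htT⟩ : ∃ t ∈ Ioo (0 : ℝ) τ, ((((1 - t) ^ 6 : ℝ) : ℂ))⁻¹ ∉ ⋃ q ∈ S, {s : ℂ |
      Module.End.HasEigenvalue ((fderiv ℂ (g^[6]) q : Cn 2 →L[ℂ] Cn 2) : Cn 2 →ₗ[ℂ] Cn 2) s} := by
    have hinj : InjOn (fun t : ℝ => ((((1 - t) ^ 6 : ℝ) : ℂ))⁻¹) (Ioo 0 τ) := by
      intro t ht u hu h
      have h1 : ((1 - t) ^ 6 : ℝ) = (1 - u) ^ 6 := Complex.ofReal_injective (inv_injective h)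
      have t1 : t ≤ 1 := ht.2.le.trans (min_le_left _ _)
      have u1 : u ≤ 1 := hu.2.le.trans (min_le_left _ _)
      have := (pow_left_inj₀ (by linarith) (by linarith) (by norm_num)).1 h1
      linarith
    have hinf := (Ioo_infinite hτ0).image hinj
    obtain ⟨s, ⟨t, ht, rfl⟩, hs⟩ := hinf.exists_notMem_finite hfin
    exact ⟨t, ht, hs⟩
  have ht1 : t < 1 := ht.2.trans_le (min_le_left _ _)
  have hS' : ∀ q ∈ S, DifferentiableAt ℂ g q := fun q hq => (hg q (hSr q hq)).differentiableAt
  have hGd : ∀ q ∈ S, HasFDerivAt (fun x => g x + (t : ℂ) • φ x)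
      (((1 - t : ℝ) : ℂ) • fderiv ℂ g q) q := by
    intro q hq
    have := (hS' q hq).hasFDerivAt.add ((hφd q hq).const_smul (t : ℂ))
    refine this.congr_fderiv ?_
    ext v; simp [sub_mul]; ring
  have hGS : ∀ q ∈ S, g q + (t : ℂ) • φ q = g q := fun q hq => by simp [hφ0 q hq]
  refine ⟨fun x => g x + (t : ℂ) • φ x, fun x hx => ?_, fun x hx => ?_, hGS, fun q hq => ?_⟩
  · exact (hg x hx).add ((analyticAt_const (v := (t : ℂ))).smul (hφ x))
  · have h1 := hC x (ball_subset_closedBall hx)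
    rw [add_sub_cancel_left, norm_smul, Complex.norm_real, Real.norm_eq_abs, abs_of_pos ht.1]
    have h2 : t ≤ κ / (|C| + 1) := ht.2.le.trans (min_le_right _ _)
    calc t * ‖φ x‖ ≤ κ / (|C| + 1) * (|C| + 1) := by
          gcongr; exact h1.trans ((le_abs_self C).trans (by linarith))
      _ = κ := by field_simp
  · obtain ⟨i1, i2, i3⟩ := iter_deriv hS hGS hS' hGd 6 q hq
    have hder := (hasFDerivAt_id q).sub i3
    have hder' : fderiv ℂ (fun x => x - (fun x => g x + (t : ℂ) • φ x)^[6] x) q = _ := hder.fderiv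
    rw [hder']
    set A := fderiv ℂ (g^[6]) q with hA
    have hinj : Function.Injective ((ContinuousLinearMap.id ℂ (Cn 2) -
        ((1 - t : ℝ) : ℂ) ^ 6 • A : Cn 2 →L[ℂ] Cn 2) : Cn 2 →ₗ[ℂ] Cn 2) := by
      rw [injective_iff_map_eq_zero]
      intro v hv
      by_contra hv0
      apply htT
      simp only [mem_iUnion]
      refine ⟨q, hq, ?_⟩
      have hv' : v = ((1 - t : ℝ) : ℂ) ^ 6 • A v := by
        have : v - ((1 - t : ℝ) : ℂ) ^ 6 • A v = 0 := hv
        exact sub_eq_zero.1 this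
      have hc : ((1 - t : ℝ) : ℂ) ^ 6 ≠ 0 := by
        apply pow_ne_zero; exact_mod_cast (by linarith : (1 - t : ℝ) ≠ 0)
      refine Module.End.hasEigenvalue_of_hasEigenvector (x := v) ⟨?_, hv0⟩
      rw [Module.End.mem_eigenspace_iff]
      change A v = _
      conv_rhs => rw [hv']
      rw [Complex.ofReal_pow, inv_smul_smul₀ hc]
    exact ⟨hinj, LinearMap.injective_iff_surjective.1 hinj⟩

lemma iter_close {f : Cn 2 → Cn 2} (hf : Continuous f) (r : ℝ) (N : ℕ) : ∀ η > 0, ∃ ε > 0,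
    ∀ g : Cn 2 → Cn 2, (∀ x ∈ ball (0 : Cn 2) r, ‖g x - f x‖ ≤ ε) → ∀ x : Cn 2, ∀ j ≤ N,
      (∀ i < j, g^[i] x ∈ ball (0 : Cn 2) r) → ‖g^[j] x - f^[j] x‖ < η := by
  induction N with
  | zero =>
    intro η hη
    refine ⟨1, one_pos, fun g _ x j hj _ => ?_⟩
    obtain rfl : j = 0 := by omega
    simpa using hη
  | succ N ih =>
    intro η hη
    have huc := (isCompact_closedBall (0 : Cn 2) (r + 1)).uniformContinuousOn_of_continuous
      hf.continuousOn
    obtain ⟨δ, hδ, hδf⟩ := Metric.uniformContinuousOn_iff.1 huc (η / 2) (by linarith)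
    obtain ⟨ε, hε, H⟩ := ih (min η (min δ 1)) (lt_min hη (lt_min hδ one_pos))
    refine ⟨min ε (η / 2), lt_min hε (by linarith), fun g hg x j hj hi => ?_⟩
    have H' := H g (fun x hx => (hg x hx).trans (min_le_left _ _)) x
    rcases Nat.lt_or_ge N j with hNj | hNj
    · obtain rfl : j = N + 1 := by omega
      have h1 := H' N le_rfl fun i hi' => hi i (by omega)
      have hy := hi N (by omega)
      rw [Function.iterate_succ_apply', Function.iterate_succ_apply']
      set y := g^[N] x
      set z := f^[N] x
      have hz : z ∈ closedBall (0 : Cn 2) (r + 1) := by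
        rw [mem_ball_zero_iff] at hy
        rw [mem_closedBall_zero_iff]
        have h2 : ‖y - z‖ < 1 := h1.trans_le ((min_le_right _ _).trans (min_le_right _ _))
        have h3 := norm_sub_norm_le z y
        rw [norm_sub_rev] at h3
        linarith
      have hy' : y ∈ closedBall (0 : Cn 2) (r + 1) := by
        rw [mem_ball_zero_iff] at hy
        rw [mem_closedBall_zero_iff]; linarith
      have h4 := hδf y hy' z hz (by
        rw [dist_eq_norm]; exact h1.trans_le ((min_le_right _ _).trans (min_le_left _ _)))
      rw [dist_eq_norm] at h4
      have h5 := (hg y hy).trans (min_le_right _ _)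
      calc ‖g y - f z‖ = ‖(g y - f y) + (f y - f z)‖ := by congr 1; abel
        _ ≤ ‖g y - f y‖ + ‖f y - f z‖ := norm_add_le _ _
        _ < η := by linarith
    · exact (H' j hNj hi).trans_le (min_le_left _ _)

lemma iter_zero {f : Cn 2 → Cn 2} (f0 : f 0 = 0) (j : ℕ) : f^[j] 0 = 0 :=
  Function.iterate_fixed f0 j

lemma small_radius {f : Cn 2 → Cn 2} (hf : Continuous f) (f0 : f 0 = 0) {s : ℝ} (hs : 0 < s) :
    ∃ R > 0, ∀ x ∈ closedBall (0 : Cn 2) R, ∀ j ≤ 6, f^[j] x ∈ ball (0 : Cn 2) s := by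
  have h : ∀ᶠ x in 𝓝 (0 : Cn 2), ∀ j ∈ Finset.range 7, f^[j] x ∈ ball (0 : Cn 2) s := by
    rw [Filter.eventually_all_finset]
    intro j _
    refine (hf.iterate j).continuousAt.eventually_mem ?_
    rw [iter_zero f0]
    exact ball_mem_nhds _ hs
  obtain ⟨R, hR, hRs⟩ := Metric.nhds_basis_closedBall.eventually_iff.1 h
  exact ⟨R, hR, fun x hx j hj => hRs hx j (Finset.mem_range.2 (by omega))⟩

lemma unique_radius {h : Cn 2 → Cn 2} {D : ℕ} (hD : LocDeg (cj h) D) :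
    ∃ R > 0, ∀ x ∈ closedBall (0 : Cn 2) R, h x = 0 → x = 0 := by
  obtain ⟨a, b, -, -, hG, -, hu⟩ := hD 1 one_pos
  refine ⟨min a b, lt_min hG.ha hG.hb, fun x hx h0 => ?_⟩
  rw [mem_closedBall_zero_iff] at hx
  have h1 := hu (x 0) (by
    rw [mem_closedBall_zero_iff]
    exact (norm_le_pi_norm x 0).trans (hx.trans (min_le_left _ _))) (x 1) (by
    rw [mem_closedBall_zero_iff]
    exact (norm_le_pi_norm x 1).trans (hx.trans (min_le_right _ _)))
    (by rw [cj_eq_zero, show e2 (x 0, x 1) = x from e2.apply_symm_apply x]; exact h0)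
  ext i
  fin_cases i
  · exact h1.1
  · exact h1.2

lemma iter_analytic {g : Cn 2 → Cn 2} {r : ℝ} (hg : ∀ x ∈ ball (0 : Cn 2) r, AnalyticAt ℂ g x)
    {x : Cn 2} (j : ℕ) (hx : ∀ i < j, g^[i] x ∈ ball (0 : Cn 2) r) :
    AnalyticAt ℂ (g^[j]) x := by
  induction j with
  | zero => exact analyticAt_id
  | succ j ih =>
    rw [Function.iterate_succ']
    exact (hg _ (hx j (by omega))).comp (ih fun i hi => hx i (by omega))

lemma iter_entire {g : Cn 2 → Cn 2} (hg : ∀ x, AnalyticAt ℂ g x) (j : ℕ) (x : Cn 2) :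
    AnalyticAt ℂ (g^[j]) x := by
  induction j with
  | zero => exact analyticAt_id
  | succ j ih =>
    rw [Function.iterate_succ']
    exact (hg _).comp ih

lemma simple_of_iterate {u : Cn 2 → Cn 2} {p : Cn 2} (hu : DifferentiableAt ℂ u p) (hp : u p = p)
    (c : ℕ) (hb : Function.Bijective (fderiv ℂ (fun x => x - u^[c] x) p)) :
    Function.Bijective (fderiv ℂ (fun x => x - u x) p) := by
  have h1 := hu.hasFDerivAt
  have h2 := h1.iterate hp c
  have h3 : fderiv ℂ (fun x => x - u^[c] x) p = _ := ((hasFDerivAt_id p).sub h2).fderiv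
  have h4 : fderiv ℂ (fun x => x - u x) p = _ := ((hasFDerivAt_id p).sub h1).fderiv
  rw [h3] at hb
  rw [h4]
  set A := fderiv ℂ u p
  have hinj : Function.Injective ((ContinuousLinearMap.id ℂ (Cn 2) - A : Cn 2 →L[ℂ] Cn 2) :
      Cn 2 →ₗ[ℂ] Cn 2) := by
    rw [injective_iff_map_eq_zero]
    intro v hv
    have hAv : A v = v := by
      have : v - A v = 0 := hv
      exact (sub_eq_zero.1 this).symm
    have hAc : ∀ c : ℕ, (A ^ c) v = v := by
      intro c
      induction c with
      | zero => simp
      | succ c ih => rw [pow_succ, mul_apply_eq_comp, hAv, ih]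
    refine (injective_iff_map_eq_zero _).1 hb.1 v ?_
    simp [hAc]
  exact ⟨hinj, LinearMap.injective_iff_surjective.1 hinj⟩

/-- Fixed points of the `M`-th iterate in a ball. -/
def FX (g : Cn 2 → Cn 2) (R : ℝ) (M : ℕ) : Set (Cn 2) := {x ∈ ball (0 : Cn 2) R | g^[M] x = x}

lemma dvd_six {M : ℕ} (h : M ∣ 6) : M = 1 ∨ M = 2 ∨ M = 3 ∨ M = 6 := by
  have := Nat.le_of_dvd (by norm_num) h
  interval_cases M <;> simp_all

lemma fix_six {g : Cn 2 → Cn 2} {M : ℕ} (hM : M ∣ 6) {x : Cn 2} (hx : g^[M] x = x) :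
    g^[6] x = x := by
  obtain ⟨c, hc⟩ := hM
  rw [hc, Function.iterate_mul]
  exact Function.iterate_fixed hx c

lemma core {f : Cn 2 → Cn 2} (hf : ∀ x, AnalyticAt ℂ f x) (f0 : f 0 = 0) {D : ℕ → ℕ}
    (hL : ∀ M, M ∣ 6 → LocDeg (cj fun x => x - f^[M] x) (D M)) {r R : ℝ} (hr : 0 < r) (hR : 0 < R)
    (hRr : ∀ x ∈ closedBall (0 : Cn 2) R, ∀ j ≤ 6, f^[j] x ∈ ball (0 : Cn 2) (r / 2))
    (hu : ∀ x ∈ closedBall (0 : Cn 2) R, f^[6] x = x → x = 0) :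
    ∃ ε0 > 0, ∀ ε ≤ ε0, ∀ g : Cn 2 → Cn 2, (∀ x ∈ ball (0 : Cn 2) r, AnalyticAt ℂ g x) →
      g 0 = 0 → (∃ ε' < ε, ∀ x ∈ ball (0 : Cn 2) r, ‖g x - f x‖ ≤ ε') →
      ∀ S0 : Finset (Cn 2), (∀ q ∈ S0, q ∈ ball (0 : Cn 2) R ∧ g^[6] q = q ∧ g q ∈ S0) →
      ∃ G : Cn 2 → Cn 2, (∀ x ∈ ball (0 : Cn 2) r, AnalyticAt ℂ G x) ∧ G 0 = 0 ∧
        (∀ x ∈ ball (0 : Cn 2) r, ‖G x - f x‖ ≤ ε) ∧ (∀ q ∈ S0, G q = g q) ∧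
        (∀ M, M ∣ 6 → (FX G R M).Finite ∧ (FX G R M).ncard = D M) ∧
        ∀ x ∈ ball (0 : Cn 2) R, G^[6] x = x → G x ∈ ball (0 : Cn 2) R := by
  have hfc : Continuous f := continuous_iff_continuousAt.2 fun x => (hf x).continuousAt
  obtain ⟨R1, hR1, hR1s⟩ := small_radius hfc f0 (s := R / 2) (by linarith)
  have hcb : ∀ M, M ∣ 6 → _ := fun M hM => count_ball (hL M hM) hR
    (fun x _ => analyticAt_id.sub (iter_entire hf M x))
    (fun x hx h0 => hu x hx (fix_six hM (sub_eq_zero.1 h0).symm)) hR1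
  choose η hη H using hcb
  set η0 := min (min (η 1 (by norm_num)) (η 2 (by norm_num)))
    (min (η 3 (by norm_num)) (η 6 (by norm_num))) with hη0
  have hη0M : ∀ M (hM : M ∣ 6), η0 ≤ η M hM := by
    intro M hM
    rcases dvd_six hM with rfl | rfl | rfl | rfl
    · exact (min_le_left _ _).trans (min_le_left _ _)
    · exact (min_le_left _ _).trans (min_le_right _ _)
    · exact (min_le_right _ _).trans (min_le_left _ _)
    · exact (min_le_right _ _).trans (min_le_right _ _)
  have hη0p : 0 < η0 := lt_min (lt_min (hη _ _) (hη _ _)) (lt_min (hη _ _) (hη _ _))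
  obtain ⟨ε0, hε0, hcl⟩ := iter_close hfc r 6 (min η0 (min (r / 2) (R / 2)))
    (lt_min hη0p (lt_min (by linarith) (by linarith)))
  refine ⟨ε0, hε0, fun ε hε g hg g0 hgε S0 hS0 => ?_⟩
  -- the class of admissible maps
  set 𝒢 : (Cn 2 → Cn 2) → Prop := fun g => (∀ x ∈ ball (0 : Cn 2) r, AnalyticAt ℂ g x) ∧ g 0 = 0 ∧
    ∃ ε' < ε, ∀ x ∈ ball (0 : Cn 2) r, ‖g x - f x‖ ≤ ε' with h𝒢
  have F0 : ∀ g, 𝒢 g → ∀ x ∈ closedBall (0 : Cn 2) R, ∀ j ≤ 6, g^[j] x ∈ ball (0 : Cn 2) r ∧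
      ‖g^[j] x - f^[j] x‖ < min η0 (min (r / 2) (R / 2)) := by
    rintro g ⟨-, -, ε', hε', hgε'⟩ x hx j
    have hc := hcl g (fun x hx => (hgε' x hx).trans (hε'.le.trans hε)) x
    induction j using Nat.strong_induction_on with
    | _ j ih =>
      intro hj
      have h1 := hc j hj fun i hi => (ih i hi (by omega)).1
      refine ⟨?_, h1⟩
      have h2 := hRr x hx j hj
      rw [mem_ball_zero_iff] at h2 ⊢
      have h3 : ‖g^[j] x - f^[j] x‖ < r / 2 :=
        h1.trans_le ((min_le_right _ _).trans (min_le_left _ _))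
      have h4 := norm_sub_norm_le (g^[j] x) (f^[j] x)
      linarith
  have F2 : ∀ g, 𝒢 g → ∀ x ∈ closedBall (0 : Cn 2) R, ∀ j ≤ 6, AnalyticAt ℂ (g^[j]) x :=
    fun g hg x hx j hj => iter_analytic hg.1 j fun i hi => (F0 g hg x hx i (by omega)).1
  have F3 := fun g (hg : 𝒢 g) M (hM : M ∣ 6) => H M hM (fun x => x - g^[M] x)
    (fun x hx => analyticAt_id.sub (F2 g hg x hx M (Nat.le_of_dvd (by norm_num) hM)))
    (fun x hx => by
      have h1 := (F0 g hg x hx M (Nat.le_of_dvd (by norm_num) hM)).2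
      rw [sub_sub_sub_cancel_left, norm_sub_rev]
      exact (h1.trans_le (min_le_left _ _)).trans_le (hη0M M hM))
  have F4 : ∀ g, 𝒢 g → ∀ x ∈ ball (0 : Cn 2) R, g^[6] x = x → ∀ j ≤ 6,
      g^[j] x ∈ ball (0 : Cn 2) R := by
    intro g hg x hx h6 j hj
    have h1 := (F3 g hg 6 dvd_rfl).1 x (ball_subset_closedBall hx) (by simp [h6])
    have h2 := hR1s x (ball_subset_closedBall h1) j hj
    have h3 := (F0 g hg x (ball_subset_closedBall hx) j hj).2
    rw [mem_ball_zero_iff] at h2 ⊢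
    have h4 : ‖g^[j] x - f^[j] x‖ < R / 2 :=
      h3.trans_le ((min_le_right _ _).trans (min_le_right _ _))
    have h5 := norm_sub_norm_le (g^[j] x) (f^[j] x)
    linarith
  have hRr' : ∀ x ∈ ball (0 : Cn 2) R, x ∈ ball (0 : Cn 2) r := by
    intro x hx
    have := hRr x (ball_subset_closedBall hx) 0 (by norm_num)
    rw [mem_ball_zero_iff] at *
    simp only [Function.iterate_zero, id] at this
    linarith
  set Q : ℕ → Prop := fun n => ∃ (G : Cn 2 → Cn 2) (S : Finset (Cn 2)), 𝒢 G ∧ S0 ⊆ S ∧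
    (0 : Cn 2) ∈ S ∧
    (∀ q ∈ S0, G q = g q) ∧ (∀ q ∈ S, q ∈ ball (0 : Cn 2) R ∧ G^[6] q = q ∧ G q ∈ S) ∧
    (∀ q ∈ S, Function.Bijective (fderiv ℂ (fun x => x - G^[6] x) q)) ∧ S.card = n with hQ
  have QA : ∀ (G : Cn 2 → Cn 2) (S : Finset (Cn 2)), 𝒢 G → S0 ⊆ S → (0 : Cn 2) ∈ S →
      (∀ q ∈ S0, G q = g q) → (∀ q ∈ S, q ∈ ball (0 : Cn 2) R ∧ G^[6] q = q ∧ G q ∈ S) →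
      Q S.card := by
    rintro G S ⟨hG1, hG2, ε', hε', hG3⟩ hS0S h0S hGg hS
    obtain ⟨G', hG', hκ, hG'S, hsimp⟩ := exists_simple hG1 S (fun q hq => hRr' q (hS q hq).1)
      (fun q hq => (hS q hq).2.2) (κ := (ε - ε') / 2) (by linarith)
    have hit : ∀ j, ∀ q ∈ S, G'^[j] q = G^[j] q := by
      intro j
      induction j with
      | zero => intro q _; rfl
      | succ j ih =>
        intro q hq
        rw [Function.iterate_succ_apply, Function.iterate_succ_apply, hG'S q hq]
        exact ih _ (hS q hq).2.2
    refine ⟨G', S, ⟨hG', ?_, ε' + (ε - ε') / 2, by linarith, fun x hx => ?_⟩, hS0S, h0S,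
      fun q hq => (hG'S q (hS0S hq)).trans (hGg q hq), fun q hq => ⟨(hS q hq).1, ?_, ?_⟩, hsimp, rfl⟩
    · rw [hG'S 0 h0S, hG2]
    · calc ‖G' x - f x‖ = ‖(G' x - G x) + (G x - f x)‖ := by congr 1; abel
        _ ≤ ‖G' x - G x‖ + ‖G x - f x‖ := norm_add_le _ _
        _ ≤ _ := by linarith [hκ x hx, hG3 x hx]
    · rw [hit 6 q hq]; exact (hS q hq).2.1
    · rw [hG'S q hq]; exact (hS q hq).2.2
  have QB : ∀ n, Q n → n ≤ D 6 := by
    rintro n ⟨G, S, hG, -, -, -, hS, hsimp, rfl⟩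
    refine (F3 G hG 6 dvd_rfl).2.1 S fun p hp => ⟨(hS p hp).1, ?_, hsimp p hp⟩
    simp [(hS p hp).2.1]
  have QI : Q (insert 0 S0).card := by
    refine QA g (insert 0 S0) ⟨hg, g0, hgε⟩ (Finset.subset_insert _ _)
      (Finset.mem_insert_self _ _) (fun _ _ => rfl) fun q hq => ?_
    rcases Finset.mem_insert.1 hq with rfl | hq
    · refine ⟨mem_ball_self hR, iter_zero g0 6, ?_⟩
      rw [g0]; exact Finset.mem_insert_self _ _
    · exact ⟨(hS0 q hq).1, (hS0 q hq).2.1, Finset.mem_insert_of_mem (hS0 q hq).2.2⟩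
  obtain ⟨G, S, hG, hS0S, h0S, hGg, hS, hsimp, hcard⟩ :=
    Nat.findGreatest_spec (P := Q) (QB _ QI) QI
  have hall : ∀ x ∈ ball (0 : Cn 2) R, G^[6] x = x → x ∈ S := by
    intro x hx h6
    by_contra hxS
    set S' := S ∪ (Finset.range 6).image (fun j => G^[j] x) with hS'
    have hQ' : Q S'.card := by
      refine QA G S' hG (hS0S.trans Finset.subset_union_left) (Finset.mem_union_left _ h0S) hGg ?_
      intro q hq
      rcases Finset.mem_union.1 hq with hq | hq
      · exact ⟨(hS q hq).1, (hS q hq).2.1, Finset.mem_union_left _ (hS q hq).2.2⟩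
      · obtain ⟨j, hj, rfl⟩ := Finset.mem_image.1 hq
        have hj' := Finset.mem_range.1 hj
        refine ⟨F4 G hG x hx h6 j (by omega), ?_, Finset.mem_union_right _ ?_⟩
        · rw [← Function.iterate_add_apply, add_comm, Function.iterate_add_apply, h6]
        · rw [← Function.iterate_succ_apply' G j x]
          rcases Nat.lt_or_ge (j + 1) 6 with h | h
          · exact Finset.mem_image.2 ⟨j + 1, Finset.mem_range.2 h, rfl⟩
          · obtain rfl : j = 5 := by omega
            exact Finset.mem_image.2 ⟨0, by simp, h6.symm⟩
    have h1 : S'.card ≤ S.card := by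
      rw [hcard]; exact Nat.le_findGreatest (QB _ hQ') hQ'
    have h2 : S.card < S'.card := by
      refine Finset.card_lt_card ⟨Finset.subset_union_left, fun hsub => hxS (hsub ?_)⟩
      exact Finset.mem_union_right _ (Finset.mem_image.2 ⟨0, by simp, rfl⟩)
    omega
  obtain ⟨hG1, hG2, ε', hε', hG3⟩ := id hG
  refine ⟨G, hG1, hG2, fun x hx => (hG3 x hx).trans hε'.le, hGg, fun M hM => ?_,
    fun x hx h6 => F4 G hG x hx h6 1 (by norm_num)⟩
  have h1 := (F3 G hG M hM).2.2 (fun p hp h0 => ?_)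
  · have : FX G R M = {x ∈ ball (0 : Cn 2) R | x - G^[M] x = 0} := by
      ext x
      simp only [FX, mem_ofPred_eq, sub_eq_zero, eq_comm]
    rw [this]
    exact h1
  · have hp' := (sub_eq_zero.1 h0).symm
    have hpS := hall p hp (fix_six hM hp')
    obtain ⟨c, hc⟩ := id hM
    refine simple_of_iterate (F2 G hG p (ball_subset_closedBall hp) M
      (Nat.le_of_dvd (by norm_num) hM)).differentiableAt hp' c ?_
    rw [← Function.iterate_mul, ← hc]
    exact hsimp p hpS

/-- Points of exact period `M` in a ball. -/
def EX (g : Cn 2 → Cn 2) (R : ℝ) (M : ℕ) : Set (Cn 2) :=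
  {x ∈ ball (0 : Cn 2) R | ExactPeriodicPt g M x}

lemma exact_shift {g : Cn 2 → Cn 2} {M : ℕ} (hM : 0 < M) {x : Cn 2} (hx : ExactPeriodicPt g M x) :
    ExactPeriodicPt g M (g x) := by
  refine ⟨?_, fun j hj hjM h => hx.2 j hj hjM ?_⟩
  · rw [← Function.iterate_succ_apply, Function.iterate_succ_apply', hx.1]
  · have h1 := congrArg (g^[M - 1]) h
    have e : M - 1 + 1 = M := by omega
    rw [← Function.iterate_succ_apply, ← Function.iterate_add_apply,
      show M - 1 + j.succ = j + M by omega, Function.iterate_add_apply, hx.1,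
      ← Function.iterate_succ_apply, Nat.succ_eq_add_one, e, hx.1] at h1
    exact h1

lemma hidden_eq {f : Cn 2 → Cn 2} (hf : ∀ x, AnalyticAt ℂ f x) (f0 : f 0 = 0) {D : ℕ → ℕ}
    (hL : ∀ M, M ∣ 6 → LocDeg (cj fun x => x - f^[M] x) (D M)) {M N : ℕ} (hM : M ∣ 6)
    (hE : ∀ (g : Cn 2 → Cn 2) (R : ℝ), 
      (∀ M, M ∣ 6 → (FX g R M).Finite ∧ (FX g R M).ncard = D M) → (EX g R M).ncard = M * N) :
    hiddenOrbits f M = N := by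
  have hM0 : 0 < M := Nat.pos_of_dvd_of_pos hM (by norm_num)
  have hfc : Continuous f := continuous_iff_continuousAt.2 fun x => (hf x).continuousAt
  obtain ⟨r0, hr0, hr0u⟩ := unique_radius (hL 6 dvd_rfl)
  -- choice of radii
  have hrad : ∀ r > 0, ∃ R > 0, (∀ x ∈ closedBall (0 : Cn 2) R, ∀ j ≤ 6,
      f^[j] x ∈ ball (0 : Cn 2) (r / 2)) ∧
      ∀ x ∈ closedBall (0 : Cn 2) R, f^[6] x = x → x = 0 := by
    intro r hr
    obtain ⟨R, hR, hRs⟩ := small_radius hfc f0 (s := r / 2) (by linarith)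
    refine ⟨min R r0, lt_min hR hr0, fun x hx j hj => hRs x
      (closedBall_subset_closedBall (min_le_left _ _) hx) j hj, fun x hx h => hr0u x
      (closedBall_subset_closedBall (min_le_right _ _) hx) (by simp [h])⟩
  refine IsGreatest.csSup_eq ⟨?_, ?_⟩
  · refine ⟨r0, hr0, fun x hx h => hr0u x hx (by simp [fix_six hM h]), ?_⟩
    obtain ⟨R, hR, hRr, hRu⟩ := hrad r0 hr0
    obtain ⟨ε0, hε0, H⟩ := core hf f0 hL hr0 hR hRr hRu
    have hn : ∀ n : ℕ, 0 < ε0 / (n + 1 : ℝ) ∧ ε0 / (n + 1 : ℝ) ≤ ε0 := fun n =>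
      ⟨by positivity, div_le_self hε0.le (by linarith [(Nat.cast_nonneg n : (0 : ℝ) ≤ n)])⟩
    choose G hG1 hG2 hG3 _ hG5 hG6 using fun n : ℕ => H (ε0 / (n + 1 : ℝ)) (hn n).2 f
      (fun x _ => hf x) f0 ⟨0, (hn n).1, by simp⟩ ∅ (by simp)
    refine ⟨G, fun n => ⟨hG1 n, hG2 n⟩, ?_, fun n => ?_⟩
    · rw [Metric.tendstoUniformlyOn_iff]
      intro ε hε
      have h1 : Tendsto (fun n : ℕ => ε0 / (n + 1 : ℝ)) atTop (𝓝 0) := by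
        simpa [div_eq_mul_inv] using
          (tendsto_one_div_add_atTop_nhds_zero_nat (𝕜 := ℝ)).const_mul ε0
      filter_upwards [h1.eventually_lt_const hε] with n hn x hx
      rw [dist_comm, dist_eq_norm]
      exact (hG3 n x hx).trans_lt hn
    · obtain ⟨p, hp, hd⟩ := atLeast_of_card hM0 (E := EX (G n) R M) (g := G n)
        (fun x hx => ⟨hG6 n x hx.1 (fix_six hM hx.2.1), exact_shift hM0 hx.2⟩)
        (fun x hx => hx.2) N (hE (G n) R (hG5 n)).ge
      refine ⟨p, fun i => ⟨(hp i).1, fun j hj => ?_⟩, hd⟩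
      have h1 := hRr _ (ball_subset_closedBall ((hp i).2 j hj).1) 0 (by norm_num)
      exact ball_subset_ball (by linarith) h1
  · rintro m ⟨r, hr, hru, fk, hfk, hlim, horb⟩
    obtain ⟨R, hR, hRr, hRu⟩ := hrad r hr
    obtain ⟨ε0, hε0, H⟩ := core hf f0 hL hr hR hRr hRu
    -- periodic points lie in the small ball
    obtain ⟨c, hc, hcK⟩ : ∃ c > 0, ∀ x ∈ closedBall (0 : Cn 2) r \ ball (0 : Cn 2) R,
        c ≤ ‖x - f^[M] x‖ := by
      rcases (closedBall (0 : Cn 2) r \ ball (0 : Cn 2) R).eq_empty_or_nonempty with he | hne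
      · exact ⟨1, one_pos, by simp [he]⟩
      · obtain ⟨x0, hx0, hmin⟩ := (IsCompact.diff (isCompact_closedBall (0 : Cn 2) r)
          isOpen_ball).exists_isMinOn hne
          (f := fun x => ‖x - f^[M] x‖) (continuous_id.sub (hfc.iterate M)).norm.continuousOn
        refine ⟨‖x0 - f^[M] x0‖, norm_pos_iff.2 fun h0 => ?_, fun x hx => hmin hx⟩
        refine hx0.2 ?_
        rw [hru x0 hx0.1 (sub_eq_zero.1 h0).symm]
        exact mem_ball_self hR
    obtain ⟨ε1, hε1, hcl⟩ := iter_close hfc r M c hc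
    obtain ⟨n, hn⟩ := ((Metric.tendstoUniformlyOn_iff.1 hlim) (min (ε0 / 2) ε1)
      (lt_min (by linarith) hε1)).exists
    set g := fk n with hg
    have hgf : ∀ x ∈ ball (0 : Cn 2) r, ‖g x - f x‖ ≤ min (ε0 / 2) ε1 := by
      intro x hx
      have := hn x hx
      rw [dist_comm, dist_eq_norm] at this
      exact this.le
    obtain ⟨p, hp, hd⟩ := horb n
    have hpall : ∀ i, ∀ j : ℕ, g^[j] (p i) ∈ ball (0 : Cn 2) r := by
      intro i j
      have : g^[j] (p i) = g^[j % M] (p i) := by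
        have h1 : Function.IsPeriodicPt g M (p i) := (hp i).1.1
        exact (h1.iterate_mod_apply j).symm
      rw [this]
      exact (hp i).2 _ (Nat.mod_lt _ hM0)
    have hpM : ∀ i, ∀ j : ℕ, g^[M] (g^[j] (p i)) = g^[j] (p i) := by
      intro i j
      rw [← Function.iterate_add_apply, add_comm, Function.iterate_add_apply, (hp i).1.1]
    have hpR : ∀ i, ∀ j : ℕ, g^[j] (p i) ∈ ball (0 : Cn 2) R := by
      intro i j
      by_contra hcon
      have h1 := hcK _ ⟨ball_subset_closedBall (hpall i j), hcon⟩
      have h2 := hcl g (fun x hx => (hgf x hx).trans (min_le_right _ _)) (g^[j] (p i)) M le_rfl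
        (fun l _ => by rw [← Function.iterate_add_apply]; exact hpall i _)
      rw [hpM] at h2
      exact absurd h2 (not_lt.2 h1)
    set S0 := (Finset.univ : Finset (Fin m × Fin M)).image (fun z => g^[(z.2 : ℕ)] (p z.1)) with hS0
    have hS0c : S0.card = M * m := card_orbits (fun i => (hp i).1) hd
    have hS0m : ∀ i, ∀ j : ℕ, g^[j] (p i) ∈ S0 := by
      intro i j
      have h1 : Function.IsPeriodicPt g M (p i) := (hp i).1.1
      rw [← h1.iterate_mod_apply j]
      exact Finset.mem_image.2 ⟨(i, ⟨j % M, Nat.mod_lt _ hM0⟩), Finset.mem_univ _, rfl⟩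
    obtain ⟨G, -, -, -, hGg, hG5, -⟩ := H ε0 le_rfl g (hfk n).1 (hfk n).2
      ⟨ε0 / 2, by linarith, fun x hx => (hgf x hx).trans (min_le_left _ _)⟩ S0 (by
        intro q hq
        obtain ⟨⟨i, j⟩, -, rfl⟩ := Finset.mem_image.1 hq
        refine ⟨hpR i j, fix_six hM (hpM i j), ?_⟩
        simp only
        rw [← Function.iterate_succ_apply' g]
        exact hS0m i _)
    have hGi : ∀ i, ∀ l j : ℕ, G^[l] (g^[j] (p i)) = g^[l] (g^[j] (p i)) := by
      intro i l
      induction l with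
      | zero => intro j; rfl
      | succ l ih =>
        intro j
        rw [Function.iterate_succ_apply, Function.iterate_succ_apply, hGg _ (hS0m i j),
          ← Function.iterate_succ_apply' g]
        exact ih _
    have hex : ∀ i, ∀ j : ℕ, ExactPeriodicPt g M (g^[j] (p i)) := by
      intro i j
      induction j with
      | zero => exact (hp i).1
      | succ j ih => rw [Function.iterate_succ_apply']; exact exact_shift hM0 ih
    have hsub : (S0 : Set (Cn 2)) ⊆ EX G R M := by
      intro q hq
      obtain ⟨⟨i, j⟩, -, rfl⟩ := Finset.mem_image.1 (Finset.mem_coe.1 hq)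
      refine ⟨hpR i j, ?_, fun l hl hlM => ?_⟩
      · rw [hGi]; exact (hex i j).1
      · rw [hGi]; exact (hex i j).2 l hl hlM
    have hfin : (EX G R M).Finite := (hG5 M hM).1.subset fun x hx => ⟨hx.1, hx.2.1⟩
    have h1 := Set.ncard_le_ncard hsub hfin
    rw [Set.ncard_coe_finset, hS0c, hE G R hG5] at h1
    exact Nat.le_of_mul_le_mul_left h1 hM0

lemma FX_mono {g : Cn 2 → Cn 2} {R : ℝ} {a b : ℕ} (h : a ∣ b) : FX g R a ⊆ FX g R b := by
  rintro x ⟨h1, h2⟩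
  obtain ⟨c, rfl⟩ := h
  exact ⟨h1, by rw [Function.iterate_mul]; exact Function.iterate_fixed h2 c⟩

lemma FX_gcd {g : Cn 2 → Cn 2} {R : ℝ} {a b : ℕ} {x : Cn 2} (ha : x ∈ FX g R a)
    (hb : g^[b] x = x) : x ∈ FX g R (a.gcd b) :=
  ⟨ha.1, Function.IsPeriodicPt.gcd (f := g) (x := x) ha.2 hb⟩

lemma EX_prime {g : Cn 2 → Cn 2} {R : ℝ} {M a b : ℕ} (hM : M.Prime)
    (h1 : (FX g R 1).Finite ∧ (FX g R 1).ncard = a) (h2 : (FX g R M).Finite ∧ (FX g R M).ncard = b) :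
    (EX g R M).ncard = b - a := by
  have : EX g R M = FX g R M \ FX g R 1 := by
    ext x
    constructor
    · rintro ⟨i1, i2, i3⟩
      exact ⟨⟨i1, i2⟩, fun h => i3 1 one_pos hM.one_lt h.2⟩
    · rintro ⟨i1, i2⟩
      refine ⟨i1.1, i1.2, fun j hj hjM h => i2 ?_⟩
      have := FX_gcd i1 h
      rwa [show M.gcd j = 1 from Nat.coprime_of_lt_prime hj.ne' hjM hM] at this
  rw [this, Set.ncard_sdiff (FX_mono (one_dvd _)) h1.1, h1.2, h2.2]

lemma EX_six {g : Cn 2 → Cn 2} {R : ℝ} {D : ℕ → ℕ}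
    (h : ∀ M, M ∣ 6 → (FX g R M).Finite ∧ (FX g R M).ncard = D M) :
    (EX g R 6).ncard = D 6 - (D 2 + D 3 - D 1) := by
  have h1 := h 1 (by norm_num)
  have h2 := h 2 (by norm_num)
  have h3 := h 3 (by norm_num)
  have h6 := h 6 (by norm_num)
  have e1 : EX g R 6 = FX g R 6 \ (FX g R 2 ∪ FX g R 3) := by
    ext x
    constructor
    · rintro ⟨i1, i2, i3⟩
      refine ⟨⟨i1, i2⟩, ?_⟩
      rintro (h | h)
      · exact i3 2 (by norm_num) (by norm_num) h.2
      · exact i3 3 (by norm_num) (by norm_num) h.2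
    · rintro ⟨i1, i2⟩
      refine ⟨i1.1, i1.2, fun j hj hjM h => i2 ?_⟩
      have := FX_gcd i1 h
      interval_cases j
      · exact Or.inl (FX_mono (by norm_num) this)
      · exact Or.inl (FX_mono (by norm_num) this)
      · exact Or.inr (FX_mono (by norm_num) this)
      · exact Or.inl (FX_mono (by norm_num) this)
      · exact Or.inl (FX_mono (by norm_num) this)
  have e2 : FX g R 2 ∩ FX g R 3 = FX g R 1 := by
    ext x
    constructor
    · rintro ⟨i1, i2⟩
      exact FX_gcd i1 i2.2
    · intro i
      exact ⟨FX_mono (by norm_num) i, FX_mono (by norm_num) i⟩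
  have e3 := Set.ncard_union_add_ncard_inter (FX g R 2) (FX g R 3) h2.1 h3.1
  rw [e2, h1.2, h2.2, h3.2] at e3
  rw [e1, Set.ncard_sdiff (union_subset (FX_mono (by norm_num)) (FX_mono (by norm_num)))
    (h2.1.union h3.1), h6.2]
  omega

lemma cj_iter {k : ℕ} {ω : ℂ} {f : Cn 2 → Cn 2} (hf : ∀ x, f x = e2 (Fc k ω (e2.symm x))) (M : ℕ) :
    cj (fun x => x - f^[M] x) = fun p => p - (Fc k ω)^[M] p := by
  have h : ∀ p, f^[M] (e2 p) = e2 ((Fc k ω)^[M] p) := by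
    induction M with
    | zero => intro p; rfl
    | succ j ih =>
      intro p
      rw [Function.iterate_succ_apply, Function.iterate_succ_apply, ← ih, hf, e2.symm_apply_apply]
  funext p
  simp [cj, h]

/-- The expected indices. -/
def DD (k M : ℕ) : ℕ :=
  if M = 1 then 1 else if M = 2 then 2 * k + 1 else if M = 3 then 3 * k + 1 else 5 * k + 7

/-- For `f(x,y) = (−x + x^{2k+1} + xy³, e^{2πi/3}y + x²y + y^{3k+1})` with `k > 1`:
`0` is an isolated fixed point of `f⁶`, `μ_{f²}(0) = 2k+1`, `μ_{f³}(0) = 3k+1`,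
`μ_{f⁶}(0) = 5k+7`, and `𝒪₂(f,0) = k`, `𝒪₃(f,0) = k`, `𝒪₆(f,0) = 1`. -/
theorem example_two (k : ℕ) (hk : 1 < k) (f : Cn 2 → Cn 2)
    (hform : f = fun x =>
      ![-x 0 + x 0 ^ (2 * k + 1) + x 0 * x 1 ^ 3,
        Complex.exp (2 * Real.pi * Complex.I / 3) * x 1 + x 0 ^ 2 * x 1 +
          x 1 ^ (3 * k + 1)]) :
    IsolatedFixedPtAt0 (f^[6]) ∧
    fixedPointIndex (f^[2]) 0 = 2 * k + 1 ∧
    fixedPointIndex (f^[3]) 0 = 3 * k + 1 ∧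
    fixedPointIndex (f^[6]) 0 = 5 * k + 7 ∧
    hiddenOrbits f 2 = k ∧ hiddenOrbits f 3 = k ∧ hiddenOrbits f 6 = 1 := by
  have hprim : IsPrimitiveRoot (Complex.exp (2 * Real.pi * Complex.I / 3)) 3 := by
    simpa using Complex.isPrimitiveRoot_exp 3 (by norm_num)
  set ω := Complex.exp (2 * Real.pi * Complex.I / 3) with hωd
  have hω : ω ^ 3 = 1 := hprim.pow_eq_one
  have hω1 : ω ^ 1 ≠ 1 := hprim.pow_ne_one_of_pos_of_lt (by norm_num) (by norm_num)
  have hω2 : ω ^ 2 ≠ 1 := hprim.pow_ne_one_of_pos_of_lt (by norm_num) (by norm_num)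
  have hfe : ∀ x, f x = e2 (Fc k ω (e2.symm x)) := by
    intro x
    rw [hform]
    ext i
    fin_cases i <;> rfl
  have hf : ∀ x, AnalyticAt ℂ f x := by
    intro x
    have h1 : f = fun x => e2 (Fc k ω (e2.symm x)) := funext hfe
    rw [h1]
    exact (e2.toContinuousLinearMap.analyticAt _).comp
      ((Fc_analytic k ω _).comp (e2.symm.toContinuousLinearMap.analyticAt x))
  have f0 : f 0 = 0 := by
    rw [hform]
    ext i
    fin_cases i <;> simp
  have hL : ∀ M, M ∣ 6 → LocDeg (cj fun x => x - f^[M] x) (DD k M) := by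
    intro M hM
    rw [cj_iter hfe]
    rcases dvd_six hM with rfl | rfl | rfl | rfl
    · exact locDeg_nv (by omega) hω hω1 (Or.inl ⟨rfl, by norm_num⟩)
    · have := locDeg_nv (k := k) (e := 2 * k) (M := 2) (by omega) hω hω2 (Or.inr ⟨rfl, by norm_num, by norm_num⟩)
      rwa [show 1 + 2 * k = DD k 2 by simp [DD]; omega] at this
    · have := locDeg_three (k := k) (by omega) hω
      rwa [show 1 + 0 + 3 * k + 0 = DD k 3 by simp [DD]; omega] at this
    · have := locDeg_six (k := k) hk hω
      rwa [show 1 + 2 * k + 3 * k + 6 = DD k 6 by simp [DD]; omega] at this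
  have hidx : ∀ M, M ∣ 6 → fixedPointIndex (f^[M]) 0 = DD k M := by
    intro M hM
    obtain ⟨R, hR, hu⟩ := unique_radius (hL M hM)
    exact zeroOrder_eq (hL M hM) hR (by simp [Function.iterate_fixed f0])
      (fun x _ => analyticAt_id.sub (iter_entire hf M x)) hu
  refine ⟨⟨Function.iterate_fixed f0 6, ?_⟩, ?_, ?_, ?_, ?_, ?_, ?_⟩
  · obtain ⟨R, hR, hu⟩ := unique_radius (hL 6 dvd_rfl)
    filter_upwards [self_mem_nhdsWithin,
      mem_nhdsWithin_of_mem_nhds (closedBall_mem_nhds (0 : Cn 2) hR)] with x hx hxR h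
    exact hx (hu x hxR (by simp only [h, sub_self]))
  · rw [hidx 2 (by norm_num)]; simp [DD]
  · rw [hidx 3 (by norm_num)]; simp [DD]
  · rw [hidx 6 (by norm_num)]; simp [DD]
  · refine hidden_eq hf f0 hL (by norm_num) fun g R h => ?_
    rw [EX_prime Nat.prime_two (h 1 (by norm_num)) (h 2 (by norm_num))]
    simp [DD]
  · refine hidden_eq hf f0 hL (by norm_num) fun g R h => ?_
    rw [EX_prime Nat.prime_three (h 1 (by norm_num)) (h 3 (by norm_num))]
    simp [DD]
  · refine hidden_eq hf f0 hL (by norm_num) fun g R h => ?_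
    rw [EX_six h]
    simp [DD]
    omega

end ZhangPaper
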